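/- arXiv:1307.8111 — 2 statements merged into one kernel-verified Lean document; each statement's English description precedes it below -/
import Mathlib

section
/- There exists an uncountable family (C_α) of Cantor sets in ℝ³ such that: (1) for all α, β the fundamental groups of ℝ³ \ C_α and ℝ³ \ C_β are isomorphic; (2) no ℝ³ \ C_α is simply connected; and (3) for α ≠ β the spaces ℝ³ \ C_α and ℝ³ \ C_β are not homeomorphic. -/
open Metric Set

noncomputable section

/-- ℝ³ as Euclidean space. -/
abbrev R3 : Type := EuclideanSpace ℝ (Fin 3)

/-- The point (a, b, c) of ℝ³. -/
def pt (a b c : ℝ) : R3 := (WithLp.equiv 2 (Fin 3 → ℝ)).symm ![a, b, c]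

/-- A Cantor set in ℝ³: a nonempty compact perfect totally disconnected subset. -/
def IsCantorSubset (C : Set R3) : Prop :=
  C.Nonempty ∧ IsCompact C ∧ Perfect C ∧ IsTotallyDisconnected C


namespace Ant
open Filter Topology

section cover
variable {B G ι : Type*} [TopologicalSpace B] [Group G]

/-- local-constancy data for a flat bundle -/
structure Flat (B G ι : Type*) [TopologicalSpace B] [Group G] where
  U : ι → Set B
  op : ∀ i, IsOpen (U i)
  cov : ∀ x, ∃ i, x ∈ U i
  f : ι → B → G
  rel : ∀ i j x, x ∈ U i → x ∈ U j → ∀ᶠ y in 𝓝 x, f j y * (f i y)⁻¹ = f j x * (f i x)⁻¹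

def Flat.core [TopologicalSpace G] [DiscreteTopology G] (D : Flat B G ι) :
    FiberBundleCore ι B G where
  baseSet := D.U
  isOpen_baseSet := D.op
  indexAt x := (D.cov x).choose
  mem_baseSet_at x := (D.cov x).choose_spec
  coordChange i j x v := D.f j x * (D.f i x)⁻¹ * v
  coordChange_self := by intros; simp
  continuousOn_coordChange := by
    intro i j
    rintro ⟨x, v⟩ ⟨⟨hi, hj⟩, -⟩
    apply ContinuousAt.continuousWithinAt
    have h1 : ∀ᶠ p : B × G in 𝓝 (x, v), D.f j p.1 * (D.f i p.1)⁻¹ * p.2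
        = D.f j x * (D.f i x)⁻¹ * p.2 := by
      have := (D.rel i j x hi hj)
      have h2 := (continuous_fst.tendsto (x, v)).eventually this
      filter_upwards [h2] with p hp
      rw [hp]
    have h3 : ContinuousAt (fun p : B × G => D.f j x * (D.f i x)⁻¹ * p.2) (x, v) := by
      have : Continuous (fun g : G => D.f j x * (D.f i x)⁻¹ * g) := continuous_of_discreteTopology
      exact (this.comp continuous_snd).continuousAt
    exact h3.congr (h1.mono fun p hp => hp.symm)
  coordChange_comp := by intros; simp [mul_assoc]

theorem Flat.hom (D : Flat B G ι) {p q : B} (γ₁ γ₂ : Path p q) (i j : ι)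
    (h1 : ∀ t, γ₁ t ∈ D.U i) (h2 : ∀ t, γ₂ t ∈ D.U j) (h : γ₁.Homotopic γ₂) :
    D.f j p * (D.f i p)⁻¹ = D.f j q * (D.f i q)⁻¹ := by
  let _ : TopologicalSpace G := ⊥
  have : DiscreteTopology G := ⟨rfl⟩
  let Z := D.core
  have hc : IsCoveringMap Z.proj := FiberBundle.isCoveringMap (F := G) (E := Z.Fiber)
  have mkeq : ∀ (b b' : B) (v : G), b = b' → (⟨b, v⟩ : Z.TotalSpace) = ⟨b', v⟩ := by
    rintro b _ v rfl; rfl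
  have key : ∀ (i : ι) (γ : Path p q), (∀ t, γ t ∈ D.U i) →
      hc.liftPath γ ⟨p, (1 : G)⟩ (by simp [FiberBundleCore.proj]) 1
        = ⟨q, Z.coordChange i (Z.indexAt q) q (Z.coordChange (Z.indexAt p) i p (1 : G))⟩ := by
    intro i γ hγ
    let v : G := Z.coordChange (Z.indexAt p) i p (1 : G)
    have hcont : Continuous fun t => (Z.localTriv i).toOpenPartialHomeomorph.symm (γ t, v) := by
      have := (Z.localTriv i).toOpenPartialHomeomorph.symm.continuousOn
      refine this.comp_continuous (by fun_prop) ?_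
      intro t
      exact (Z.mem_localTriv_target i (γ t, v)).2 (hγ t)
    have := (hc.eq_liftPath_iff' (γ := γ) (e := ⟨p, (1 : G)⟩) (γ_0 := by simp [FiberBundleCore.proj])
      (Γ := ⟨_, hcont⟩)).2 ⟨?_, ?_⟩
    · rw [← this]
      simp only [ContinuousMap.coe_mk]
      rw [Z.localTriv_symm_apply]
      simp [v]
      exact mkeq _ _ _ γ.target
    · ext t; simp only [ContinuousMap.coe_mk, Function.comp]; rw [Z.localTriv_symm_apply]
    · simp only [ContinuousMap.coe_mk]
      rw [Z.localTriv_symm_apply]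
      simp only [v, Path.source]
      have e1 : Z.coordChange i (Z.indexAt p) p (Z.coordChange (Z.indexAt p) i p (1 : G)) = 1 := by
        simp [Z, Flat.core, mul_assoc]
      rw [e1]
      exact mkeq _ _ _ γ.source
  have e := hc.liftPath_apply_one_eq_of_homotopicRel h ⟨p, (1 : G)⟩
    (by simp [FiberBundleCore.proj]) (by simp [FiberBundleCore.proj])
  replace e := (key i γ₁ h1).symm.trans (e.trans (key j γ₂ h2))
  have e2 : Z.coordChange i (Z.indexAt q) q (Z.coordChange (Z.indexAt p) i p (1 : G))
    = Z.coordChange j (Z.indexAt q) q (Z.coordChange (Z.indexAt p) j p (1 : G)) := by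
    have := (Bundle.TotalSpace.mk.inj e).2
    exact eq_of_heq this
  simp only [Z, Flat.core, mul_assoc, mul_one, mul_right_inj] at e2
  simp only [← mul_assoc] at e2
  have e3 := mul_right_cancel e2
  rw [mul_inv_eq_iff_eq_mul, mul_assoc, e3]
  simp
end cover
end Ant

namespace Ant
open Filter Topology

abbrev E := ℝ × ℝ × ℝ

inductive I | m (s : Bool) | r (s : Bool) | v (s t : Bool)
  deriving DecidableEq, Fintype

def sg : Bool → ℝ | true => 1 | false => -1

def phi : I → E → E
  | .m s, p => (45/100*p.1, sg s*(75+20/100*p.2.1), 2/100*p.2.2)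
  | .r s, p => (sg s*(90+95/1000*p.2.1), 98/100*p.1, 2/100*p.2.2)
  | .v s t, p => (sg s*(60+33/100*p.1), sg t*(75+2/100*p.2.2), 10/100*p.2.1)

def psi : I → E → E
  | .m s, p => (100/45*p.1, 5*(sg s*p.2.1-75), 50*p.2.2)
  | .r s, p => (100/98*p.2.1, 1000/95*(sg s*p.1-90), 50*p.2.2)
  | .v s t, p => (100/33*(sg s*p.1-60), 10*p.2.2, 50*(sg t*p.2.1-75))

def Phi (i : I) : E ≃ₜ E where
  toFun := phi i
  invFun := psi i
  left_inv := by
    rintro ⟨x, y, z⟩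
    rcases i with s | s | ⟨s, t⟩ <;> cases s <;> (try cases t) <;>
    · simp only [phi, psi, sg, Prod.mk.injEq]
      refine ⟨?_, ?_, ?_⟩ <;> ring
  right_inv := by
    rintro ⟨x, y, z⟩
    rcases i with s | s | ⟨s, t⟩ <;> cases s <;> (try cases t) <;>
    · simp only [phi, psi, sg, Prod.mk.injEq]
      refine ⟨?_, ?_, ?_⟩ <;> ring
  continuous_toFun := by
    rcases i with s | s | ⟨s, t⟩ <;> unfold phi <;> fun_prop
  continuous_invFun := by
    rcases i with s | s | ⟨s, t⟩ <;> unfold psi <;> fun_prop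

def inV (x y z : ℝ) : Prop := -100 ≤ x ∧ x ≤ 100 ∧ -100 ≤ y ∧ y ≤ 100 ∧ -100 ≤ z ∧ z ≤ 100 ∧
  ¬ (-80 < x ∧ x < 80 ∧ -50 < y ∧ y < 50)
def inN (x y z : ℝ) : Prop := -101 < x ∧ x < 101 ∧ -101 < y ∧ y < 101 ∧ -101 < z ∧ z < 101 ∧
  ¬ (-79 ≤ x ∧ x ≤ 79 ∧ -49 ≤ y ∧ y ≤ 49)

def V : Set E := {p | inV p.1 p.2.1 p.2.2}
def N : Set E := {p | inN p.1 p.2.1 p.2.2}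

theorem V_sub_N : V ⊆ N := by
  rintro ⟨x, y, z⟩ h
  simp only [V, N, mem_ofPred_eq, inV, inN] at *
  grind

theorem isOpen_N : IsOpen N := by
  have : N = {p : E | -101 < p.1} ∩ {p | p.1 < 101} ∩ {p | -101 < p.2.1} ∩ {p | p.2.1 < 101} ∩
     {p | -101 < p.2.2} ∩ {p | p.2.2 < 101} ∩ ({p | -79 ≤ p.1} ∩ {p | p.1 ≤ 79} ∩ {p | -49 ≤ p.2.1} ∩ {p | p.2.1 ≤ 49})ᶜ := by
     ext p
     simp only [N, inN, mem_ofPred_eq, mem_inter_iff, mem_compl_iff]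
     tauto
  rw [this]
  have hc : IsClosed ({p : E | -79 ≤ p.1} ∩ {p | p.1 ≤ 79} ∩ {p | -49 ≤ p.2.1} ∩ {p | p.2.1 ≤ 49}) :=
    (((isClosed_le (by fun_prop) (by fun_prop)).inter (isClosed_le (by fun_prop) (by fun_prop))).inter
      (isClosed_le (by fun_prop) (by fun_prop))).inter (isClosed_le (by fun_prop) (by fun_prop))
  refine IsOpen.inter ?_ hc.isOpen_compl
  refine IsOpen.inter (IsOpen.inter (IsOpen.inter (IsOpen.inter (IsOpen.inter ?_ ?_) ?_) ?_) ?_) ?_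
  all_goals exact isOpen_lt (by fun_prop) (by fun_prop)

theorem isClosed_V : IsClosed V := by
  have : V = {p : E | -100 ≤ p.1} ∩ {p | p.1 ≤ 100} ∩ {p | -100 ≤ p.2.1} ∩ {p | p.2.1 ≤ 100} ∩
     {p | -100 ≤ p.2.2} ∩ {p | p.2.2 ≤ 100} ∩ ({p | -80 < p.1} ∩ {p | p.1 < 80} ∩ {p | -50 < p.2.1} ∩ {p | p.2.1 < 50})ᶜ := by
     ext p
     simp only [V, inV, mem_ofPred_eq, mem_inter_iff, mem_compl_iff]
     tauto
  rw [this]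
  have hc : IsOpen ({p : E | -80 < p.1} ∩ {p | p.1 < 80} ∩ {p | -50 < p.2.1} ∩ {p | p.2.1 < 50}) :=
    (((isOpen_lt (by fun_prop) (by fun_prop)).inter (isOpen_lt (by fun_prop) (by fun_prop))).inter
      (isOpen_lt (by fun_prop) (by fun_prop))).inter (isOpen_lt (by fun_prop) (by fun_prop))
  refine IsClosed.inter ?_ hc.isClosed_compl
  refine IsClosed.inter (IsClosed.inter (IsClosed.inter (IsClosed.inter (IsClosed.inter ?_ ?_) ?_) ?_) ?_) ?_
  all_goals exact isClosed_le (by fun_prop) (by fun_prop)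

theorem child_sub (i : I) (p : E) (h : psi i p ∈ N) : p ∈ V := by
  obtain ⟨x, y, z⟩ := p
  rcases i with s | s | ⟨s, t⟩ <;> cases s <;> (try cases t) <;>
    simp only [V, N, psi, sg, mem_ofPred_eq, inV, inN] at * <;> grind

theorem child_disj (i j : I) (hij : i ≠ j) (p : E) (h : psi i p ∈ N) (h' : psi j p ∈ N) : False := by
  obtain ⟨x, y, z⟩ := p
  rcases i with s | s | ⟨s, t⟩ <;> cases s <;> (try cases t) <;>
  rcases j with s' | s' | ⟨s', t'⟩ <;> cases s' <;> (try cases t') <;>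
  first | exact absurd rfl hij | (
    simp only [N, psi, sg, mem_ofPred_eq, inN] at h h'; grind)
end Ant

namespace Ant
open Filter Topology

abbrev G := Equiv.Perm (Fin 5)
def a0 : G := Equiv.swap 0 1 * Equiv.swap 1 2
def c0 : G := Equiv.swap 0 3 * Equiv.swap 3 4
def s0 : G := c0 * a0 * c0⁻¹ * a0⁻¹
def k1 : G := Equiv.swap 1 0 * Equiv.swap 3 2
def k2 : G := Equiv.swap 4 1
def val (k : G) : G := k * s0 * k⁻¹
theorem k1_s0 : k1 * s0 * k1⁻¹ = a0 := by decide
theorem k2_s0 : k2 * s0 * k2⁻¹ = c0 := by decide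
theorem s0_ne : s0 ≠ 1 := by decide

theorem val_ne (k : G) : val k ≠ 1 := by
  intro h
  apply s0_ne
  have : s0 = k⁻¹ * val k * k := by simp [val, mul_assoc]
  rw [this, h]; simp

def va (k : G) : G := val (k * k1)
def vc (k : G) : G := val (k * k2)
theorem val_eq (k : G) : val k = vc k * va k * (vc k)⁻¹ * (va k)⁻¹ := by
  have h1 : va k = k * a0 * k⁻¹ := by rw [← k1_s0]; simp [va, val, mul_assoc]
  have h2 : vc k = k * c0 * k⁻¹ := by rw [← k2_s0]; simp [vc, val, mul_assoc]
  rw [h1, h2]; simp [val, s0, mul_assoc]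

def isH : I → Prop
  | .m _ => True
  | .r _ => True
  | .v _ _ => False

open Classical in
def lab (k : G) (i : I) : G := if isH i then k * k1 else k * k2

theorem exH (Q : I → Prop) : (∃ i, isH i ∧ Q i) ↔ Q (.m true) ∨ Q (.m false) ∨ Q (.r true) ∨ Q (.r false) := by
  constructor
  · rintro ⟨(s | s | ⟨s, t⟩), h, hQ⟩ <;> cases s <;> simp [isH] at h <;> tauto
  · rintro (h | h | h | h)
    exacts [⟨.m true, trivial, h⟩, ⟨.m false, trivial, h⟩, ⟨.r true, trivial, h⟩, ⟨.r false, trivial, h⟩]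
theorem exV (Q : I → Prop) : (∃ i, ¬ isH i ∧ Q i) ↔
    Q (.v true true) ∨ Q (.v true false) ∨ Q (.v false true) ∨ Q (.v false false) := by
  constructor
  · rintro ⟨(s | s | ⟨s, t⟩), h, hQ⟩
    · simp [isH] at h
    · simp [isH] at h
    · cases s <;> cases t <;> tauto
  · rintro (h | h | h | h)
    exacts [⟨.v true true, fun h => h, h⟩, ⟨.v true false, fun h => h, h⟩, ⟨.v false true, fun h => h, h⟩, ⟨.v false false, fun h => h, h⟩]
theorem allH (Q : I → Prop) : (∀ i, isH i → Q i) ↔ Q (.m true) ∧ Q (.m false) ∧ Q (.r true) ∧ Q (.r false) := by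
  have := exH (fun i => ¬ Q i)
  constructor
  · intro h
    exact ⟨h _ trivial, h _ trivial, h _ trivial, h _ trivial⟩
  · intro h i hi
    by_contra hq
    have := this.1 ⟨i, hi, hq⟩
    tauto
theorem allV (Q : I → Prop) : (∀ i, ¬ isH i → Q i) ↔
    Q (.v true true) ∧ Q (.v true false) ∧ Q (.v false true) ∧ Q (.v false false) := by
  have := exV (fun i => ¬ Q i)
  constructor
  · intro h
    exact ⟨h _ (fun h => h), h _ (fun h => h), h _ (fun h => h), h _ (fun h => h)⟩
  · intro h i hi
    by_contra hq
    have := this.1 ⟨i, hi, hq⟩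
    tauto

def inP (x y : ℝ) : Prop := -100 ≤ x ∧ x ≤ 100 ∧ -100 ≤ y ∧ y ≤ 100
def inPo (x y : ℝ) : Prop := -100 < x ∧ x < 100 ∧ -100 < y ∧ y < 100
def ins (x y : ℝ) : Prop := -94 < x ∧ x < 94 ∧ -75 < y ∧ y < 75
def out (x y : ℝ) : Prop := x < -94 ∨ 94 < x ∨ y < -75 ∨ 75 < y
def inQ (x y : ℝ) : Prop := (-945/10 < x ∧ x < 945/10 ∧ -755/10 < y ∧ y < 755/10) ∧
  ¬ (-935/10 ≤ x ∧ x ≤ 935/10 ∧ -745/10 ≤ y ∧ y ≤ 745/10)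

def Pc : Set E := {p | inP p.1 p.2.1}
def Po : Set E := {p | inPo p.1 p.2.1}
def Ins : Set E := {p | ins p.1 p.2.1}
def Out : Set E := {p | out p.1 p.2.1}
def Str : Set E := {p | inQ p.1 p.2.1}

theorem o1 (f : E → ℝ) (hf : Continuous f) (a : ℝ) : IsOpen {p : E | a < f p} := isOpen_lt continuous_const hf
theorem o2 (f : E → ℝ) (hf : Continuous f) (a : ℝ) : IsOpen {p : E | f p < a} := isOpen_lt hf continuous_const
theorem q1 (f : E → ℝ) (hf : Continuous f) (a : ℝ) : IsClosed {p : E | a ≤ f p} := isClosed_le continuous_const hf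
theorem q2 (f : E → ℝ) (hf : Continuous f) (a : ℝ) : IsClosed {p : E | f p ≤ a} := isClosed_le hf continuous_const
def cx : E → ℝ := fun p => p.1
def cy : E → ℝ := fun p => p.2.1
def cz : E → ℝ := fun p => p.2.2
theorem ctx : Continuous cx := by unfold cx; fun_prop
theorem cty : Continuous cy := by unfold cy; fun_prop
theorem ctz : Continuous cz := by unfold cz; fun_prop
theorem isClosed_Pc : IsClosed Pc := by
  have : Pc = {p : E | -100 ≤ p.1} ∩ {p | p.1 ≤ 100} ∩ {p | -100 ≤ p.2.1} ∩ {p | p.2.1 ≤ 100} := by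
    ext p; simp only [Pc, inP, mem_ofPred_eq, mem_inter_iff]; tauto
  rw [this]
  refine IsClosed.inter (IsClosed.inter (IsClosed.inter ?_ ?_) ?_) ?_
  all_goals exact isClosed_le (by fun_prop) (by fun_prop)
theorem isOpen_box4 (a b c d : ℝ) : IsOpen {p : E | a < p.1 ∧ p.1 < b ∧ c < p.2.1 ∧ p.2.1 < d} :=
  (o1 _ ctx _).inter ((o2 _ ctx _).inter ((o1 _ cty _).inter (o2 _ cty _)))
theorem isClosed_box4 (a b c d : ℝ) : IsClosed {p : E | a ≤ p.1 ∧ p.1 ≤ b ∧ c ≤ p.2.1 ∧ p.2.1 ≤ d} :=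
  (q1 _ ctx _).inter ((q2 _ ctx _).inter ((q1 _ cty _).inter (q2 _ cty _)))
theorem isOpen_Po : IsOpen Po := isOpen_box4 _ _ _ _
theorem isOpen_Ins : IsOpen Ins := isOpen_box4 _ _ _ _
theorem isOpen_Str : IsOpen Str := IsOpen.inter (isOpen_box4 _ _ _ _) (isClosed_box4 _ _ _ _).isOpen_compl
theorem isOpen_Out : IsOpen Out :=
  (o2 _ ctx _).union ((o1 _ ctx _).union ((o2 _ cty _).union (o1 _ cty _)))

inductive J | e0 | e1 | f0 | f1 | f2

def dom0 : J → Set E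
  | .e0 => Vᶜ ∩ ({p | p.2.2 ≠ 0} ∪ Po)
  | .e1 => Pcᶜ
  | .f0 => N ∩ {p | ∀ i, psi i p ∉ V} ∩ {p | p.2.2 ≠ 0 ∨ ∃ i, isH i ∧ psi i p ∈ Po} ∩
      {p | (p ∈ Ins ∨ p ∈ Out) ∨ ∃ i, ¬ isH i ∧ psi i p ∈ Po}
  | .f1 => N ∩ {p | -1 < p.2.2 ∧ p.2.2 < 1} ∩ {p | ∀ i, isH i → psi i p ∉ Pc}
  | .f2 => N ∩ Str ∩ {p | ∀ i, ¬ isH i → psi i p ∉ Pc}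

theorem cont_psi (i : I) : Continuous (psi i) := (Phi i).symm.continuous

theorem isOpen_dom0 (j : J) : IsOpen (dom0 j) := by
  have hz : IsOpen {p : E | p.2.2 ≠ 0} := isOpen_ne_fun (by fun_prop) (by fun_prop)
  have hall (Q : I → Prop) (S : Set E) (hS : IsClosed S) : IsOpen {p | ∀ i, Q i → psi i p ∉ S} := by
    have : {p | ∀ i, Q i → psi i p ∉ S} = ⋂ i, {p | Q i → psi i p ∉ S} := by ext; simp
    rw [this]
    refine isOpen_iInter_of_finite fun i => ?_
    by_cases hq : Q i
    · simp only [hq, true_imp_iff]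
      exact (hS.preimage (cont_psi i)).isOpen_compl
    · simp [hq]
  have hex (Q : I → Prop) (S : Set E) (hS : IsOpen S) : IsOpen {p | ∃ i, Q i ∧ psi i p ∈ S} := by
    have : {p | ∃ i, Q i ∧ psi i p ∈ S} = ⋃ i, {p | Q i ∧ psi i p ∈ S} := by ext; simp
    rw [this]
    refine isOpen_iUnion fun i => ?_
    by_cases hq : Q i
    · simp only [hq, true_and]
      exact hS.preimage (cont_psi i)
    · simp [hq]
  cases j
  · exact isClosed_V.isOpen_compl.inter (hz.union isOpen_Po)
  · exact isClosed_Pc.isOpen_compl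
  · refine ((isOpen_N.inter ?_).inter ?_).inter ?_
    · simpa using hall (fun _ => True) V isClosed_V
    · exact hz.union (hex _ _ isOpen_Po)
    · exact (isOpen_Ins.union isOpen_Out).union (hex _ _ isOpen_Po)
  · refine (isOpen_N.inter ?_).inter (hall _ _ isClosed_Pc)
    exact (o1 _ ctz _).inter (o2 _ ctz _)
  · exact (isOpen_N.inter isOpen_Str).inter (hall _ _ isClosed_Pc)

open Classical in
def h (k : G) (p : E) : G := (if p ∈ Ins then 1 else (vc k)⁻¹) * (if p.2.2 < 0 then 1 else (va k)⁻¹)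

open Classical in
def fn0 (k : G) : J → E → G
  | .e0, _ => 1
  | .e1, p => if p.2.2 < 0 then 1 else val k
  | .f0, p => h k p
  | .f1, p => (if p.2.2 < 0 then 1 else va k) * h k p
  | .f2, p => (if p ∈ Ins then 1 else vc k) * h k p

def Rel (x : E) (f f' : E → G) : Prop := ∃ c, ∀ᶠ y in 𝓝 x, f y = c * f' y

theorem Rel.symm {x f f'} (h : Rel x f f') : Rel x f' f := by
  obtain ⟨c, hc⟩ := h
  exact ⟨c⁻¹, hc.mono fun y hy => by simp [hy]⟩
theorem Rel.refl (x f) : Rel x f f := ⟨1, by simp⟩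
theorem Rel.trans {x f f' f''} (h : Rel x f f') (h' : Rel x f' f'') : Rel x f f'' := by
  obtain ⟨c, hc⟩ := h
  obtain ⟨c', hc'⟩ := h'
  refine ⟨c * c', ?_⟩
  filter_upwards [hc, hc'] with y h1 h2
  rw [h1, h2, mul_assoc]

/-- eventual sign of z -/
theorem zsign {x : E} (hx : x.2.2 ≠ 0) : (∀ᶠ y : E in 𝓝 x, y.2.2 < 0) ∨ (∀ᶠ y : E in 𝓝 x, ¬ y.2.2 < 0) := by
  rcases lt_or_gt_of_ne hx with h | h
  · left; exact (isOpen_lt (f := fun y : E => y.2.2) (by fun_prop) continuous_const).mem_nhds h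
  · right
    have : ∀ᶠ y : E in 𝓝 x, 0 < y.2.2 :=
      (isOpen_lt (g := fun y : E => y.2.2) continuous_const (by fun_prop)).mem_nhds h
    exact this.mono fun y hy => not_lt.2 hy.le

theorem Out_not {x : E} (hx : x ∈ Out) : x ∉ Ins := by
  simp only [Out, Ins, out, ins, mem_ofPred_eq] at *; grind

theorem ssign {x : E} (hx : x ∈ Ins ∨ x ∈ Out) : (∀ᶠ y : E in 𝓝 x, y ∈ Ins) ∨ (∀ᶠ y : E in 𝓝 x, y ∉ Ins) := by
  rcases hx with hx | hx
  · exact Or.inl (isOpen_Ins.mem_nhds hx)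
  · exact Or.inr ((show ∀ᶠ y in 𝓝 x, y ∈ Out from isOpen_Out.mem_nhds hx).mono fun y hy => Out_not hy)

end Ant

namespace Ant
open Filter Topology

theorem evz {x : E} (hx : x.2.2 ≠ 0) : ∀ᶠ y : E in 𝓝 x, (y.2.2 < 0) = (x.2.2 < 0) := by
  rcases zsign hx with h | h
  · have := h.self_of_nhds
    filter_upwards [h] with y hy; simp [hy, this]
  · have := h.self_of_nhds
    filter_upwards [h] with y hy; simp [hy, this]

theorem evs {x : E} (hx : x ∈ Ins ∨ x ∈ Out) : ∀ᶠ y : E in 𝓝 x, (y ∈ Ins) = (x ∈ Ins) := by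
  rcases ssign hx with h | h
  · have := h.self_of_nhds
    filter_upwards [h] with y hy; simp [hy, this]
  · have := h.self_of_nhds
    filter_upwards [h] with y hy; simp [hy, this]

theorem relz {x : E} (hx : x.2.2 ≠ 0) (f f' : E → G) (F : Prop → G)
    (h : ∀ y, f y = F (y.2.2 < 0) * f' y) : Rel x f f' := by
  refine ⟨F (x.2.2 < 0), ?_⟩
  filter_upwards [evz hx] with y hy
  rw [h, hy]

theorem rels {x : E} (hx : x ∈ Ins ∨ x ∈ Out) (f f' : E → G) (F : Prop → G)
    (h : ∀ y, f y = F (y ∈ Ins) * f' y) : Rel x f f' := by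
  refine ⟨F (x ∈ Ins), ?_⟩
  filter_upwards [evs hx] with y hy
  rw [h, hy]

theorem relzs {x : E} (hz : x.2.2 ≠ 0) (hx : x ∈ Ins ∨ x ∈ Out) (f f' : E → G) (F : Prop → Prop → G)
    (h : ∀ y, f y = F (y.2.2 < 0) (y ∈ Ins) * f' y) : Rel x f f' := by
  refine ⟨F (x.2.2 < 0) (x ∈ Ins), ?_⟩
  filter_upwards [evs hx, evz hz] with y hy hy'
  rw [h, hy, hy']

theorem g_f0 {x : E} (h0 : x ∈ dom0 .f0) (h1 : x ∉ V) (h2 : x.2.2 ≠ 0 ∨ x ∈ Po) :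
    x.2.2 ≠ 0 ∧ (x ∈ Ins ∨ x ∈ Out) := by
  obtain ⟨⟨⟨h0, -⟩, h3⟩, h4⟩ := h0
  obtain ⟨x, y, z⟩ := x
  simp only [exH, exV, N, V, Po, Ins, Out, inN, inV, inPo, ins, out, psi, sg, mem_ofPred_eq] at *
  grind (splits := 30)
theorem g_f0' {x : E} (h0 : x ∈ dom0 .f0) (h2 : x ∉ Pc) :
    x.2.2 ≠ 0 ∧ (x ∈ Ins ∨ x ∈ Out) := by
  obtain ⟨⟨⟨h0, -⟩, h3⟩, h4⟩ := h0
  obtain ⟨x, y, z⟩ := x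
  simp only [exH, exV, N, V, Po, Pc, inP, Ins, Out, inN, inV, inPo, ins, out, psi, sg, mem_ofPred_eq] at *
  grind (splits := 30)
theorem g_f1 {x : E} (h0 : x ∈ dom0 .f1) (h1 : x ∉ V) (h2 : x.2.2 ≠ 0 ∨ x ∈ Po) :
    x ∈ Ins ∨ x.2.2 ≠ 0 ∧ x ∈ Out := by
  obtain ⟨⟨h0, h3⟩, -⟩ := h0
  obtain ⟨x, y, z⟩ := x
  simp only [N, V, Po, Ins, Out, inN, inV, inPo, ins, out, mem_ofPred_eq] at *
  grind (splits := 30)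
theorem g_e1 {x : E} (h2 : x ∉ Pc) : x ∈ Out := by
  obtain ⟨x, y, z⟩ := x
  simp only [Pc, inP, Out, out, mem_ofPred_eq] at *
  grind (splits := 30)
theorem g_f2 {x : E} (h0 : x ∈ dom0 .f2) (h1 : x ∉ V) : x.2.2 ≠ 0 := by
  obtain ⟨⟨h0, h3⟩, -⟩ := h0
  obtain ⟨x, y, z⟩ := x
  simp only [N, V, Str, inN, inV, inQ, mem_ofPred_eq] at *
  grind (splits := 30)
theorem g_f2' {x : E} (h0 : x ∈ dom0 .f2) : x ∈ Pc := by
  obtain ⟨⟨h0, h3⟩, -⟩ := h0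
  obtain ⟨x, y, z⟩ := x
  simp only [N, Pc, Str, inN, inP, inQ, mem_ofPred_eq] at *
  grind (splits := 30)
theorem g_f12 {x : E} (h1 : x ∈ dom0 .f1) (h2 : x ∈ dom0 .f2) : False := by
  obtain ⟨⟨h0, h3⟩, h4⟩ := h1
  obtain ⟨⟨-, h5⟩, h6⟩ := h2
  obtain ⟨x, y, z⟩ := x
  simp only [allH, allV, N, Pc, Str, inN, inP, inQ, psi, sg, mem_ofPred_eq] at *
  grind (splits := 30)
theorem g_f1V {x : E} {i : I} (h1 : x ∈ dom0 .f1) (hi : ¬ isH i) (h2 : psi i x ∈ N) : False := by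
  obtain ⟨⟨h0, h3⟩, h4⟩ := h1
  obtain ⟨x, y, z⟩ := x
  rcases i with s | s | ⟨s, t⟩
  · exact hi trivial
  · exact hi trivial
  cases s <;> cases t <;>
  · simp only [allH, N, Pc, inN, inP, psi, sg, mem_ofPred_eq] at *
    grind (splits := 30)
theorem g_f2H {x : E} {i : I} (h1 : x ∈ dom0 .f2) (hi : isH i) (h2 : psi i x ∈ N) : False := by
  obtain ⟨⟨h0, h3⟩, h4⟩ := h1
  obtain ⟨x, y, z⟩ := x
  rcases i with s | s | ⟨s, t⟩
  · cases s <;>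
    · simp only [allV, N, Pc, inN, inP, psi, sg, Str, inQ, mem_ofPred_eq] at *
      grind (splits := 30)
  · cases s <;>
    · simp only [allV, N, Pc, inN, inP, psi, sg, Str, inQ, mem_ofPred_eq] at *
      grind (splits := 30)
  · exact hi
theorem V_sub_Pc {x : E} (h : x ∈ V) : x ∈ Pc := by
  simp only [V, Pc, inV, inP, mem_ofPred_eq] at *; grind (splits := 30)
theorem f0_lz {x : E} {i : I} (h1 : x ∈ dom0 .f0) (h2 : psi i x ∈ N) (h3 : psi i x ∉ Pc) :
    (psi i x).2.2 ≠ 0 := by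
  obtain ⟨⟨⟨h0, -⟩, h4⟩, h5⟩ := h1
  obtain ⟨x, y, z⟩ := x
  rcases i with s | s | ⟨s, t⟩
  · clear h5
    cases s <;>
    · simp only [exH, N, Pc, Po, inN, inP, inPo, psi, sg, mem_ofPred_eq] at *
      grind (splits := 30)
  · clear h5
    cases s <;>
    · simp only [exH, N, Pc, Po, inN, inP, inPo, psi, sg, mem_ofPred_eq] at *
      grind (splits := 30)
  · clear h4
    cases s <;> cases t <;>
    · simp only [exV, N, Pc, Po, Ins, Out, ins, out, inN, inP, inPo, psi, sg, mem_ofPred_eq] at *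
      grind (splits := 30)
theorem H_lz {x : E} {i : I} (hi : isH i) : (psi i x).2.2 = 50 * x.2.2 := by
  rcases i with s | s | ⟨s, t⟩
  · rfl
  · rfl
  · exact hi.elim
theorem V_lz {x : E} {i : I} (hi : ¬ isH i) (h2 : psi i x ∈ N) : (psi i x).2.2 < 0 ↔ x ∈ Ins := by
  obtain ⟨x, y, z⟩ := x
  rcases i with s | s | ⟨s, t⟩
  · exact (hi trivial).elim
  · exact (hi trivial).elim
  cases s <;> cases t <;>
  · simp only [N, Ins, ins, inN, psi, sg, mem_ofPred_eq] at *
    grind (splits := 30)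
theorem V_lz' {x : E} {i : I} (hi : ¬ isH i) (h2 : psi i x ∈ N) (h : (psi i x).2.2 ≠ 0) : x ∈ Ins ∨ x ∈ Out := by
  obtain ⟨x, y, z⟩ := x
  rcases i with s | s | ⟨s, t⟩
  · exact (hi trivial).elim
  · exact (hi trivial).elim
  cases s <;> cases t <;>
  · simp only [N, Ins, ins, Out, out, inN, psi, sg, mem_ofPred_eq] at *
    grind (splits := 30)
theorem e_cover {x : E} (h : x ∉ V) : x ∈ dom0 .e0 ∨ x ∈ dom0 .e1 := by
  by_cases h1 : x.2.2 = 0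
  · by_cases h2 : x ∈ Po
    · exact Or.inl ⟨h, Or.inr h2⟩
    · right
      obtain ⟨x, y, z⟩ := x
      change _ ∉ Pc
      simp only [V, Pc, Po, inV, inP, inPo, mem_ofPred_eq] at *
      grind (splits := 30)
  · exact Or.inl ⟨h, Or.inl h1⟩
theorem f_disj {x : E} {i : I} {j : J} (hj : j ≠ .e0 ∧ j ≠ .e1) (h : x ∈ dom0 j) : psi i x ∉ V := by
  intro hV
  rcases j with _ | _ | _ | _ | _
  · exact hj.1 rfl
  · exact hj.2 rfl
  · exact h.1.1.2 i hV
  · by_cases hi : isH i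
    · exact h.2 i hi (V_sub_Pc hV)
    · exact g_f1V h hi (V_sub_N hV)
  · by_cases hi : isH i
    · exact g_f2H h hi (V_sub_N hV)
    · exact h.2 i hi (V_sub_Pc hV)
theorem f_cover {x : E} (hV : x ∈ V) (hi : ∀ i, psi i x ∉ V) :
    x ∈ dom0 .f0 ∨ x ∈ dom0 .f1 ∨ x ∈ dom0 .f2 := by
  by_cases h1 : x.2.2 ≠ 0 ∨ ∃ i, isH i ∧ psi i x ∈ Po
  · by_cases h2 : (x ∈ Ins ∨ x ∈ Out) ∨ ∃ i, ¬ isH i ∧ psi i x ∈ Po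
    · exact Or.inl ⟨⟨⟨V_sub_N hV, hi⟩, h1⟩, h2⟩
    · right; right
      refine ⟨⟨V_sub_N hV, ?_⟩, ?_⟩
      · simp only [Str, inQ, Ins, ins, Out, out, mem_ofPred_eq] at *
        grind (splits := 30)
      · intro i hH hP
        obtain ⟨x, y, z⟩ := x
        rcases i with s | s | ⟨s, t⟩
        · exact (hH trivial).elim
        · exact (hH trivial).elim
        have hi1 := hi (.v s true)
        have hi2 := hi (.v s false)
        clear hi h1
        simp only [exV] at h2
        cases s <;>
        · simp only [V, Pc, Po, inV, inP, inPo, Ins, ins, Out, out, psi, sg, mem_ofPred_eq] at *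
          grind (splits := 30)
  · right; left
    refine ⟨⟨V_sub_N hV, ?_⟩, ?_⟩
    · simp only [mem_ofPred_eq] at *
      grind (splits := 30)
    · intro i hH hP
      apply hi i
      obtain ⟨x, y, z⟩ := x
      clear hi
      simp only [exH] at h1
      rcases i with s | s | ⟨s, t⟩
      · cases s <;>
        · simp only [V, Pc, Po, inV, inP, inPo, psi, sg, mem_ofPred_eq] at *
          grind (splits := 30)
      · cases s <;>
        · simp only [V, Pc, Po, inV, inP, inPo, psi, sg, mem_ofPred_eq] at *
          grind (splits := 30)
      · exact hH.elim
end Ant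

namespace Ant
open Filter Topology

theorem r_e0e1 (k : G) {x : E} (h0 : x ∈ dom0 .e0) (h1 : x ∈ dom0 .e1) : Rel x (fn0 k .e0) (fn0 k .e1) := by
  classical
  have hz : x.2.2 ≠ 0 := by
    rcases h0.2 with h | h
    · exact h
    · exact absurd ⟨h.1.le, h.2.1.le, h.2.2.1.le, h.2.2.2.le⟩ h1
  refine relz hz _ _ (fun P => if P then 1 else (val k)⁻¹) ?_
  intro y; simp only [fn0]; split_ifs <;> simp
theorem r_e0f0 (k : G) {x : E} (h0 : x ∈ dom0 .e0) (h1 : x ∈ dom0 .f0) : Rel x (fn0 k .f0) (fn0 k .e0) := by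
  classical
  have := g_f0 h1 h0.1 h0.2
  refine relzs this.1 this.2 _ _ (fun P Q => (if Q then 1 else (vc k)⁻¹) * (if P then 1 else (va k)⁻¹)) ?_
  intro y; simp only [fn0, h]; split_ifs <;> simp
theorem r_e1f0 (k : G) {x : E} (h0 : x ∈ dom0 .e1) (h1 : x ∈ dom0 .f0) : Rel x (fn0 k .f0) (fn0 k .e1) := by
  classical
  have := g_f0' h1 h0
  refine relzs this.1 this.2 _ _ (fun P Q => (if Q then 1 else (vc k)⁻¹) *
    (if P then 1 else (va k)⁻¹) * (if P then 1 else (val k)⁻¹)) ?_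
  intro y; simp only [fn0, h]; split_ifs <;> simp
theorem r_e0f1 (k : G) {x : E} (h0 : x ∈ dom0 .e0) (h1 : x ∈ dom0 .f1) : Rel x (fn0 k .f1) (fn0 k .e0) := by
  classical
  rcases g_f1 h1 h0.1 h0.2 with h2 | ⟨h2, h3⟩
  · refine ⟨1, ?_⟩
    filter_upwards [isOpen_Ins.mem_nhds h2] with y hy
    simp only [fn0, h, hy]; split_ifs <;> simp
  · refine relzs h2 (Or.inr h3) _ _ (fun P Q => (if P then 1 else va k) * ((if Q then 1 else (vc k)⁻¹) *
      (if P then 1 else (va k)⁻¹))) ?_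
    intro y; simp only [fn0, h]; split_ifs <;> simp
theorem r_e1f1 (k : G) {x : E} (h0 : x ∈ dom0 .e1) (_h1 : x ∈ dom0 .f1) : Rel x (fn0 k .f1) (fn0 k .e1) := by
  classical
  have h3 := g_e1 h0
  refine ⟨(vc k)⁻¹, ?_⟩
  filter_upwards [isOpen_Out.mem_nhds h3] with y hy
  have := Out_not hy
  simp only [fn0, h, this, if_false]
  split_ifs
  · simp
  · simp [val_eq, mul_assoc]
theorem r_e0f2 (k : G) {x : E} (h0 : x ∈ dom0 .e0) (h1 : x ∈ dom0 .f2) : Rel x (fn0 k .f2) (fn0 k .e0) := by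
  classical
  refine relz (g_f2 h1 h0.1) _ _ (fun P => if P then 1 else (va k)⁻¹) ?_
  intro y; simp only [fn0, h]; split_ifs <;> simp
theorem r_f0f1 (k : G) {x : E} (h0 : x ∈ dom0 .f0) (h1 : x ∈ dom0 .f1) : Rel x (fn0 k .f1) (fn0 k .f0) := by
  classical
  have : x.2.2 ≠ 0 := by
    rcases h0.1.2 with h | ⟨i, hi, h⟩
    · exact h
    · exact absurd ⟨h.1.le, h.2.1.le, h.2.2.1.le, h.2.2.2.le⟩ (h1.2 i hi)
  exact relz this _ _ (fun P => if P then 1 else (va k)) (fun y => rfl)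
theorem r_f0f2 (k : G) {x : E} (h0 : x ∈ dom0 .f0) (h1 : x ∈ dom0 .f2) : Rel x (fn0 k .f2) (fn0 k .f0) := by
  classical
  have : x ∈ Ins ∨ x ∈ Out := by
    rcases h0.2 with h | ⟨i, hi, h⟩
    · exact h
    · exact absurd ⟨h.1.le, h.2.1.le, h.2.2.1.le, h.2.2.2.le⟩ (h1.2 i hi)
  exact rels this _ _ (fun P => if P then 1 else (vc k)) (fun y => rfl)

theorem base (k : G) (j j' : J) {x : E} (h : x ∈ dom0 j) (h' : x ∈ dom0 j') : Rel x (fn0 k j) (fn0 k j') := by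
  rcases j with _ | _ | _ | _ | _ <;> rcases j' with _ | _ | _ | _ | _
  · exact .refl _ _
  · exact r_e0e1 k h h'
  · exact (r_e0f0 k h h').symm
  · exact (r_e0f1 k h h').symm
  · exact (r_e0f2 k h h').symm
  · exact (r_e0e1 k h' h).symm
  · exact .refl _ _
  · exact (r_e1f0 k h h').symm
  · exact (r_e1f1 k h h').symm
  · exact absurd (g_f2' h') h
  · exact r_e0f0 k h' h
  · exact r_e1f0 k h' h
  · exact .refl _ _
  · exact (r_f0f1 k h h').symm
  · exact (r_f0f2 k h h').symm
  · exact r_e0f1 k h' h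
  · exact r_e1f1 k h' h
  · exact r_f0f1 k h' h
  · exact .refl _ _
  · exact (g_f12 h h').elim
  · exact r_e0f2 k h' h
  · exact absurd (g_f2' h) h'
  · exact r_f0f2 k h' h
  · exact (g_f12 h' h).elim
  · exact .refl _ _

def dom : List I → J → Set E
  | [], j => dom0 j
  | i :: w, j => {x | psi i x ∈ N ∧ psi i x ∈ dom w j}

def fn (k : G) : List I → J → E → G
  | [], j => fn0 k j
  | i :: w, j => fun x => fn (lab k i) w j (psi i x) * h k x

theorem Rel.lift {k : G} {i : I} {x : E} {f f' : E → G} (hr : Rel (psi i x) f f') :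
    Rel x (fun y => f (psi i y) * h k y) (fun y => f' (psi i y) * h k y) := by
  obtain ⟨c, hc⟩ := hr
  refine ⟨c, ?_⟩
  filter_upwards [(cont_psi i).continuousAt.eventually hc] with y hy
  rw [hy, mul_assoc]

theorem val_lab_H {k i} (hi : isH i) : val (lab k i) = va k := by simp [lab, hi, va]
theorem val_lab_V {k i} (hi : ¬ isH i) : val (lab k i) = vc k := by simp [lab, hi, vc]

theorem evlz {i : I} {x : E} (hx : (psi i x).2.2 ≠ 0) :
    ∀ᶠ y : E in 𝓝 x, ((psi i y).2.2 < 0) = ((psi i x).2.2 < 0) :=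
  (cont_psi i).continuousAt.eventually (evz hx)

/-- parent f vs child e -/
theorem pc_e (k : G) (i : I) (j : J) (hj : j ≠ .e0 ∧ j ≠ .e1) (j' : J) (hj' : j' = .e0 ∨ j' = .e1)
    {x : E} (h0 : x ∈ dom0 j) (hN : psi i x ∈ N) (h1 : psi i x ∈ dom0 j') :
    Rel x (fn0 k j) (fn k [i] j') := by
  classical
  rcases j with _ | _ | _ | _ | _
  · exact absurd rfl hj.1
  · exact absurd rfl hj.2
  · rcases hj' with rfl | rfl
    · exact ⟨1, by simp [fn, fn0]⟩
    · have := f0_lz h0 hN h1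
      apply Rel.symm
      refine ⟨if (psi i x).2.2 < 0 then 1 else val (lab k i), ?_⟩
      filter_upwards [evlz this] with y hy
      simp only [fn, fn0, hy]
  · by_cases hi : isH i
    swap
    · exact (g_f1V h0 hi hN).elim
    have hP : psi i x ∉ Pc := h0.2 i hi
    rcases hj' with rfl | rfl
    · have hz : (psi i x).2.2 ≠ 0 := by
        rcases h1.2 with h | h
        · exact h
        · exact absurd ⟨h.1.le, h.2.1.le, h.2.2.1.le, h.2.2.2.le⟩ hP
      rw [H_lz hi] at hz
      have hz : x.2.2 ≠ 0 := by intro h; simp [h] at hz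
      refine relz hz _ _ (fun P => if P then 1 else (va k)) ?_
      intro y; simp [fn, fn0]
    · refine ⟨1, Eventually.of_forall fun y => ?_⟩
      have : 50 * y.2.2 < 0 ↔ y.2.2 < 0 := by constructor <;> intro <;> linarith
      simp only [fn, fn0, val_lab_H hi, H_lz hi, one_mul, this]
  · by_cases hi : isH i
    · exact (g_f2H h0 hi hN).elim
    have hP : psi i x ∉ Pc := h0.2 i hi
    have hN' : ∀ᶠ y in 𝓝 x, psi i y ∈ N :=
      (cont_psi i).continuousAt.eventually (isOpen_N.mem_nhds hN)
    rcases hj' with rfl | rfl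
    · have hz : (psi i x).2.2 ≠ 0 := by
        rcases h1.2 with h | h
        · exact h
        · exact absurd ⟨h.1.le, h.2.1.le, h.2.2.1.le, h.2.2.2.le⟩ hP
      refine rels (V_lz' hi hN hz) _ _ (fun P => if P then 1 else (vc k)) ?_
      intro y; simp [fn, fn0]
    · refine ⟨1, ?_⟩
      filter_upwards [hN'] with y hy
      simp only [fn, fn0, val_lab_V hi, V_lz hi hy, one_mul]

theorem pc (k : G) (i : I) (j : J) (w : List I) (j' : J) {x : E} (h0 : x ∈ dom0 j)
    (h1 : x ∈ dom (i :: w) j') : Rel x (fn0 k j) (fn k (i :: w) j') := by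
  have hV : x ∈ V := child_sub i x h1.1
  have hj : j ≠ .e0 ∧ j ≠ .e1 := by
    constructor
    · rintro rfl; exact h0.1 hV
    · rintro rfl; exact h0 (V_sub_Pc hV)
  have hiV : psi i x ∉ V := f_disj hj h0
  rcases w with _ | ⟨i', w⟩
  · obtain ⟨h1, h2⟩ := h1
    rcases e_cover hiV with he | he
    · exact (pc_e k i j hj .e0 (Or.inl rfl) h0 h1 he).trans (Rel.lift (base (lab k i) _ _ he h2))
    · exact (pc_e k i j hj .e1 (Or.inr rfl) h0 h1 he).trans (Rel.lift (base (lab k i) _ _ he h2))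
  · exact absurd (child_sub i' _ h1.2.1) hiV

theorem compat (w w' : List I) (k : G) (j j' : J) {x : E} (h : x ∈ dom w j) (h' : x ∈ dom w' j') :
    Rel x (fn k w j) (fn k w' j') := by
  induction w generalizing w' k x with
  | nil =>
    rcases w' with _ | ⟨i', w'⟩
    · exact base k j j' h h'
    · exact pc k i' j w' j' h h'
  | cons i w ih =>
    rcases w' with _ | ⟨i', w'⟩
    · exact (pc k i j' w j h' h).symm
    · have : i = i' := by
        by_contra hii
        exact child_disj i i' hii x h.1 h'.1
      subst this
      exact Rel.lift (ih w' (lab k i) h.2 h'.2)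

theorem isOpen_dom (w : List I) (j : J) : IsOpen (dom w j) := by
  induction w with
  | nil => exact isOpen_dom0 j
  | cons i w ih => exact (isOpen_N.preimage (cont_psi i)).inter (ih.preimage (cont_psi i))

def K : ℕ → Set E
  | 0 => V
  | n + 1 => {x | ∃ i, psi i x ∈ K n}
def W : Set E := ⋂ n, K n

theorem K_sub_V (n : ℕ) : K n ⊆ V := by
  induction n with
  | zero => exact subset_rfl
  | succ n ih => rintro x ⟨i, hi⟩; exact child_sub i x (V_sub_N (ih hi))

theorem dom_cover (x : E) (hx : x ∉ W) : ∃ w j, x ∈ dom w j := by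
  have : ∃ n, x ∉ K n := by simpa [W] using hx
  obtain ⟨n, hn⟩ := this
  clear hx
  induction n generalizing x with
  | zero =>
    rcases e_cover hn with h | h
    exacts [⟨[], .e0, h⟩, ⟨[], .e1, h⟩]
  | succ n ih =>
    by_cases hV : x ∈ V
    · by_cases hi : ∀ i, psi i x ∉ V
      · rcases f_cover hV hi with h | h | h
        exacts [⟨[], .f0, h⟩, ⟨[], .f1, h⟩, ⟨[], .f2, h⟩]
      · push Not at hi
        obtain ⟨i, hi⟩ := hi
        obtain ⟨w, j, h⟩ := ih (psi i x) (fun h => hn ⟨i, h⟩)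
        exact ⟨i :: w, j, V_sub_N hi, h⟩
    · rcases e_cover hV with h | h
      exacts [⟨[], .e0, h⟩, ⟨[], .e1, h⟩]

def flat : Flat ↥Wᶜ G (List I × J) where
  U i := Subtype.val ⁻¹' dom i.1 i.2
  op i := (isOpen_dom i.1 i.2).preimage continuous_subtype_val
  cov x := by
    obtain ⟨w, j, h⟩ := dom_cover x.1 x.2
    exact ⟨(w, j), h⟩
  f i x := fn 1 i.1 i.2 x.1
  rel i j x hi hj := by
    obtain ⟨c, hc⟩ := compat j.1 i.1 1 j.2 i.2 hj hi
    have h1 := hc.self_of_nhds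
    have : ∀ᶠ y : ↥Wᶜ in 𝓝 x, fn 1 j.1 j.2 y.1 = c * fn 1 i.1 i.2 y.1 :=
      continuous_subtype_val.continuousAt.eventually hc
    filter_upwards [this] with y hy
    rw [hy, h1]; simp

end Ant

namespace Ant
open Filter Topology

def PhiW : List I → (E ≃ₜ E)
  | [] => Homeomorph.refl E
  | i :: w => (PhiW w).trans (Phi i)

@[simp] theorem PhiW_nil (x : E) : PhiW [] x = x := rfl
@[simp] theorem PhiW_cons (i w) (x : E) : PhiW (i :: w) x = phi i (PhiW w x) := rfl
@[simp] theorem PhiW_symm_cons (i w) (x : E) : (PhiW (i :: w)).symm x = (PhiW w).symm (psi i x) := rfl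
@[simp] theorem psi_phi (i) (x : E) : psi i (phi i x) = x := (Phi i).left_inv x
@[simp] theorem phi_psi (i) (x : E) : phi i (psi i x) = x := (Phi i).right_inv x
theorem PhiW_append (w w' : List I) (x : E) : PhiW (w ++ w') x = PhiW w (PhiW w' x) := by
  induction w with
  | nil => rfl
  | cons i w ih => simp [ih]

theorem PhiW_N (w : List I) {y : E} (hy : y ∈ N) : PhiW w y ∈ N := by
  induction w with
  | nil => exact hy
  | cons i w ih => exact V_sub_N (child_sub i _ (by simpa using ih))

theorem PhiW_dom (w : List I) (j : J) {y : E} (hy : y ∈ N) (h : y ∈ dom0 j) : PhiW w y ∈ dom w j := by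
  induction w with
  | nil => exact h
  | cons i w ih => exact ⟨by simpa using PhiW_N w hy, by simpa using ih⟩

theorem fn_word (w : List I) (k : G) : ∃ (k' : G) (H : E → G), ∀ j y, fn k w j (PhiW w y) = fn0 k' j y * H y := by
  induction w generalizing k with
  | nil => exact ⟨k, fun _ => 1, fun j y => by simp [fn]⟩
  | cons i w ih =>
    obtain ⟨k', H, hH⟩ := ih (lab k i)
    refine ⟨k', fun y => H y * h k (PhiW (i :: w) y), fun j y => ?_⟩
    simp [fn, hH, mul_assoc]

/-- restricting the codomain of a path -/
def subPath {X : Type*} [TopologicalSpace X] {S : Set X} {a b : X} (γ : Path a b) (h : ∀ t, γ t ∈ S) :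
    Path (⟨a, by simpa using h 0⟩ : S) ⟨b, by simpa using h 1⟩ where
  toFun t := ⟨γ t, h t⟩
  continuous_toFun := by fun_prop
  source' := by simp
  target' := by simp

theorem joined_seg {S : Set E} {a b : E} (h : segment ℝ a b ⊆ S) : JoinedIn S a b :=
  ((convex_segment a b).isPathConnected ⟨a, left_mem_segment ℝ a b⟩ |>.joinedIn a
    (left_mem_segment ℝ a b) b (right_mem_segment ℝ a b)).mono h

def p0 : E := (1005/10, 0, -1)
def q0 : E := (1005/10, 0, 1)

theorem seg_mem {a b x : E} (h : x ∈ segment ℝ a b) : ∃ t : ℝ, 0 ≤ t ∧ t ≤ 1 ∧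
    x.1 = a.1 + t * (b.1 - a.1) ∧ x.2.1 = a.2.1 + t * (b.2.1 - a.2.1) ∧ x.2.2 = a.2.2 + t * (b.2.2 - a.2.2) := by
  rw [segment_eq_image'] at h
  obtain ⟨t, ⟨h0, h1⟩, rfl⟩ := h
  exact ⟨t, h0, h1, rfl, rfl, rfl⟩

theorem joined_e1 : JoinedIn (dom0 .e1 ∩ (N \ V)) p0 q0 := by
  apply joined_seg
  intro x hx
  obtain ⟨t, h0, h1, e1, e2, e3⟩ := seg_mem hx
  simp only [p0, q0] at e1 e2 e3
  simp only [dom0, Pc, N, V, inP, inN, inV, mem_inter_iff, mem_diff, mem_compl_iff, mem_ofPred_eq]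
  grind (splits := 30)

theorem joined_e0 : JoinedIn (dom0 .e0 ∩ (N \ V)) p0 q0 := by
  have key : ∀ a b : E, (∀ t : ℝ, 0 ≤ t → t ≤ 1 → (⟨a.1 + t * (b.1 - a.1), a.2.1 + t * (b.2.1 - a.2.1), a.2.2 + t * (b.2.2 - a.2.2)⟩ : E) ∈ dom0 .e0 ∩ (N \ V)) → JoinedIn (dom0 .e0 ∩ (N \ V)) a b := by
    intro a b h
    apply joined_seg
    intro x hx
    obtain ⟨t, h0, h1, e1, e2, e3⟩ := seg_mem hx
    have := h t h0 h1
    rwa [← e1, ← e2, ← e3] at this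
  have s1 := key p0 (1005/10, 0, -1005/10) (by
    intro t h0 h1
    simp only [p0, dom0, Po, N, V, inPo, inN, inV, mem_union, mem_inter_iff, mem_diff, mem_compl_iff, mem_ofPred_eq]
    grind (splits := 30))
  have s2 := key (1005/10, 0, -1005/10) (795/10, 0, -1005/10) (by
    intro t h0 h1
    simp only [p0, dom0, Po, N, V, inPo, inN, inV, mem_union, mem_inter_iff, mem_diff, mem_compl_iff, mem_ofPred_eq]
    grind (splits := 30))
  have s3 := key (795/10, 0, -1005/10) (795/10, 0, 1005/10) (by
    intro t h0 h1
    simp only [p0, dom0, Po, N, V, inPo, inN, inV, mem_union, mem_inter_iff, mem_diff, mem_compl_iff, mem_ofPred_eq]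
    grind (splits := 30))
  have s4 := key (795/10, 0, 1005/10) (1005/10, 0, 1005/10) (by
    intro t h0 h1
    simp only [p0, dom0, Po, N, V, inPo, inN, inV, mem_union, mem_inter_iff, mem_diff, mem_compl_iff, mem_ofPred_eq]
    grind (splits := 30))
  have s5 := key (1005/10, 0, 1005/10) q0 (by
    intro t h0 h1
    simp only [q0, dom0, Po, N, V, inPo, inN, inV, mem_union, mem_inter_iff, mem_diff, mem_compl_iff, mem_ofPred_eq]
    grind (splits := 30))
  exact (((s1.trans s2).trans s3).trans s4).trans s5

theorem loops (w : List I) (S : Set E) (hS : PhiW w '' (N \ V) ⊆ S) (hW : S ⊆ Wᶜ) :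
    ∃ (a b : S) (γ γ' : Path a b), (∀ t, (γ t).1 ∈ PhiW w '' (N \ V)) ∧
      (∀ t, (γ' t).1 ∈ PhiW w '' (N \ V)) ∧ ¬ γ.Homotopic γ' := by
  obtain ⟨g0, hg0⟩ := joined_e0
  obtain ⟨g1, hg1⟩ := joined_e1
  have m0 : ∀ t, (g0.map (PhiW w).continuous) t ∈ PhiW w '' (N \ V) := fun t => ⟨g0 t, (hg0 t).2, rfl⟩
  have m1 : ∀ t, (g1.map (PhiW w).continuous) t ∈ PhiW w '' (N \ V) := fun t => ⟨g1 t, (hg1 t).2, rfl⟩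
  refine ⟨_, _, subPath (g0.map (PhiW w).continuous) (fun t => hS (m0 t)),
    subPath (g1.map (PhiW w).continuous) (fun t => hS (m1 t)), m0, m1, ?_⟩
  intro hh
  have hh' := hh.map ⟨Set.inclusion hW, continuous_inclusion hW⟩
  have := flat.hom _ _ (w, .e0) (w, .e1) ?_ ?_ hh'
  · obtain ⟨k', H, hH⟩ := fn_word w 1
    simp only [flat] at this
    change fn 1 w .e1 (PhiW w p0) * (fn 1 w .e0 (PhiW w p0))⁻¹ = fn 1 w .e1 (PhiW w q0) * (fn 1 w .e0 (PhiW w q0))⁻¹ at this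
    simp only [hH] at this
    simp [fn0, p0, q0] at this
    have h3 : ¬ ((1:ℝ) < 0) := by norm_num
    simp only [h3, if_false] at this
    exact val_ne k' this.symm
  · intro t; exact PhiW_dom w .e0 (hg0 t).2.1 (hg0 t).1
  · intro t; exact PhiW_dom w .e1 (hg1 t).2.1 (hg1 t).1
end Ant

namespace Ant
open Filter Topology

theorem dist_E (p q : E) : dist p q = max |p.1 - q.1| (max |p.2.1 - q.2.1| |p.2.2 - q.2.2|) := by
  simp [Prod.dist_eq, Real.dist_eq]

theorem phi_lip (i : I) (p q : E) : dist (phi i p) (phi i q) ≤ 98/100 * dist p q := by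
  have h1 : |p.1 - q.1| ≤ dist p q := by rw [dist_E]; exact le_max_left _ _
  have h2 : |p.2.1 - q.2.1| ≤ dist p q := by
    rw [dist_E]; exact (le_max_left _ _).trans (le_max_right _ _)
  have h3 : |p.2.2 - q.2.2| ≤ dist p q := by
    rw [dist_E]; exact (le_max_right _ _).trans (le_max_right _ _)
  generalize dist p q = d at *
  rw [dist_E]
  rw [abs_le] at h1 h2 h3
  rcases i with s | s | ⟨s, t⟩ <;> cases s <;> (try cases t) <;>
    simp only [phi, sg] <;>
    refine max_le ?_ (max_le ?_ ?_) <;> rw [abs_le] <;> constructor <;> linarith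

theorem PhiW_lip (w : List I) (p q : E) : dist (PhiW w p) (PhiW w q) ≤ (98/100)^w.length * dist p q := by
  induction w with
  | nil => simp
  | cons i w ih =>
    have := phi_lip i (PhiW w p) (PhiW w q)
    simp only [PhiW_cons, List.length_cons, pow_succ]
    nlinarith

theorem V_dist {p q : E} (hp : p ∈ V) (hq : q ∈ V) : dist p q ≤ 200 := by
  obtain ⟨a1, a2, a3, a4, a5, a6, -⟩ := hp
  obtain ⟨b1, b2, b3, b4, b5, b6, -⟩ := hq
  rw [dist_E]
  refine max_le ?_ (max_le ?_ ?_) <;> rw [abs_le] <;> constructor <;> linarith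

theorem PhiW_V_dist (w : List I) {p q : E} (hp : p ∈ V) (hq : q ∈ V) :
    dist (PhiW w p) (PhiW w q) ≤ (98/100)^w.length * 200 :=
  (PhiW_lip w p q).trans (by gcongr; exact V_dist hp hq)

theorem exists_small {ε : ℝ} (hε : 0 < ε) : ∃ n : ℕ, (98/100 : ℝ)^n * 200 < ε := by
  obtain ⟨n, hn⟩ := exists_pow_lt_of_lt_one (show 0 < ε/200 by positivity) (show (98/100:ℝ) < 1 by norm_num)
  exact ⟨n, by linarith⟩

theorem small_mono {n m : ℕ} (h : n ≤ m) : (98/100 : ℝ)^m * 200 ≤ (98/100 : ℝ)^n * 200 := by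
  gcongr ?_ * 200
  exact pow_le_pow_of_le_one (by norm_num) (by norm_num) h

theorem K_closed (n : ℕ) : IsClosed (K n) := by
  induction n with
  | zero => exact isClosed_V
  | succ n ih =>
    have : K (n+1) = ⋃ i, psi i ⁻¹' (K n) := by ext x; simp [K]
    rw [this]
    exact isClosed_iUnion_of_finite fun i => ih.preimage (cont_psi i)

theorem K_anti (n : ℕ) : K (n+1) ⊆ K n := by
  induction n with
  | zero => exact K_sub_V 1
  | succ n ih => rintro x ⟨i, hi⟩; exact ⟨i, ih hi⟩

theorem W_sub_V : W ⊆ V := fun x hx => K_sub_V 0 (mem_iInter.1 hx 0)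

theorem V_compact : IsCompact V := by
  refine Metric.isCompact_of_isClosed_isBounded isClosed_V ?_
  exact Metric.isBounded_iff.2 ⟨200, fun p hp q hq => V_dist hp hq⟩

theorem W_closed : IsClosed W := isClosed_iInter K_closed
theorem W_compact : IsCompact W := V_compact.of_isClosed_subset W_closed W_sub_V

theorem mem_W_of_psi {i : I} {x : E} (h : psi i x ∈ W) : x ∈ W := by
  refine mem_iInter.2 fun n => K_anti n ⟨i, mem_iInter.1 h n⟩

theorem psi_mem_W {i : I} {x : E} (hx : x ∈ W) (h : psi i x ∈ N) : psi i x ∈ W := by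
  refine mem_iInter.2 fun n => ?_
  obtain ⟨j, hj⟩ := mem_iInter.1 hx (n+1)
  by_cases hij : i = j
  · exact hij ▸ hj
  · exact (child_disj i j hij x h (V_sub_N (K_sub_V n hj))).elim

theorem W_child {x : E} (hx : x ∈ W) : ∃ i, psi i x ∈ W := by
  obtain ⟨i, hi⟩ := mem_iInter.1 hx 1
  exact ⟨i, psi_mem_W hx (V_sub_N hi)⟩

theorem PhiW_W {w : List I} {x : E} (h : x ∈ W) : PhiW w x ∈ W := by
  induction w with
  | nil => exact h
  | cons i w ih => exact mem_W_of_psi (i := i) (by simpa using ih)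

theorem W_addr {x : E} (hx : x ∈ W) (n : ℕ) : ∃ w : List I, w.length = n ∧ ∃ y ∈ W, PhiW w y = x := by
  induction n generalizing x with
  | zero => exact ⟨[], rfl, x, hx, rfl⟩
  | succ n ih =>
    obtain ⟨i, hi⟩ := W_child hx
    obtain ⟨w, hw, y, hy, e⟩ := ih hi
    exact ⟨i :: w, by simp [hw], y, hy, by simp [e]⟩

theorem PhiW_V (w : List I) {y : E} (hy : y ∈ V) : PhiW w y ∈ V := by
  cases w with
  | nil => exact hy
  | cons i w => exact child_sub i _ (by simpa using PhiW_N w (V_sub_N hy))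

/-- words of the same length with intersecting images of `N` are equal -/
theorem word_eq {w w' : List I} (hl : w.length = w'.length) {y y' : E} (hy : y ∈ N) (hy' : y' ∈ N)
    (h : PhiW w y = PhiW w' y') : w = w' := by
  induction w generalizing w' with
  | nil => simpa using hl.symm
  | cons i w ih =>
    cases w' with
    | nil => simp at hl
    | cons j w' =>
      have hij : i = j := by
        by_contra hij
        refine child_disj i j hij (PhiW (i :: w) y) (by simpa using PhiW_N w hy) ?_
        rw [h]; simpa using PhiW_N w' hy'
      subst hij
      have : PhiW w y = PhiW w' y' := by
        have := congrArg (psi i) h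
        simpa using this
      rw [ih (by simpa using hl) this]

/-- words with intersecting images of `N` are comparable -/
theorem word_comp {w w' : List I} (hl : w.length ≤ w'.length) {y y' : E} (hy : y ∈ N) (hy' : y' ∈ N)
    (h : PhiW w y = PhiW w' y') : ∃ u, w' = w ++ u ∧ y = PhiW u y' := by
  have e : w' = w'.take w.length ++ w'.drop w.length := (List.take_append_drop _ _).symm
  rw [e, PhiW_append] at h
  have : w = w'.take w.length := word_eq (by simp [hl]) hy (PhiW_N _ hy') h
  refine ⟨w'.drop w.length, by rw [← this] at e; exact e, ?_⟩
  rw [← this] at h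
  exact (PhiW w).injective h

theorem PhiW_mem_W {w : List I} {y : E} (hy : y ∈ N) (h : PhiW w y ∈ W) : y ∈ W := by
  obtain ⟨w', hl, z, hz, e⟩ := W_addr h w.length
  have := word_eq hl (V_sub_N (W_sub_V hz)) hy e
  subst this
  rw [← (PhiW w').injective e]; exact hz

theorem PhiW_NV_W (w : List I) : Disjoint (PhiW w '' (N \ V)) W := by
  rw [Set.disjoint_left]
  rintro _ ⟨y, hy, rfl⟩ h
  exact hy.2 (W_sub_V (PhiW_mem_W hy.1 h))

theorem isOpen_PhiN (w : List I) : IsOpen (PhiW w '' N) := (PhiW w).isOpenMap _ isOpen_N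

def fp (s : Bool) : E := (0, if s then 9375/100 else -(625/10), 0)

theorem phi_fp (s : Bool) : phi (.m s) (fp s) = fp s := by
  cases s <;> simp [phi, fp, sg] <;> norm_num
theorem fp_V (s : Bool) : fp s ∈ V := by
  cases s <;> simp [V, inV, fp] <;> norm_num
theorem fp_W (s : Bool) : fp s ∈ W := by
  refine mem_iInter.2 fun n => ?_
  induction n with
  | zero => exact fp_V s
  | succ n ih => exact ⟨.m s, by rw [← phi_fp s, psi_phi]; exact ih⟩

theorem W_acc {x : E} (hx : x ∈ W) {ε : ℝ} (hε : 0 < ε) : ∃ y ∈ W, y ≠ x ∧ dist y x < ε := by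
  obtain ⟨n, hn⟩ := exists_small hε
  obtain ⟨w, hl, y, hy, rfl⟩ := W_addr hx n
  have : ∃ z ∈ W, z ≠ y := by
    by_contra! hc
    have h1 := hc _ (fp_W true)
    have h2 := hc _ (fp_W false)
    have := congrArg (fun p : E => p.2.1) (h1.trans h2.symm)
    simp [fp] at this
    norm_num at this
  obtain ⟨z, hz, hzy⟩ := this
  refine ⟨PhiW w z, PhiW_W hz, fun e => hzy ((PhiW w).injective e), ?_⟩
  exact (PhiW_V_dist w (W_sub_V hz) (W_sub_V hy)).trans_lt (hl ▸ hn)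

/-- preconnected subsets of `W` are subsingletons -/
theorem W_tot : IsTotallyDisconnected W := by
  intro S hS hc
  rcases S.eq_empty_or_nonempty with rfl | ⟨x, hx⟩
  · exact subsingleton_empty
  have key : ∀ n, ∃ w : List I, w.length = n ∧ S ⊆ PhiW w '' V := by
    intro n
    obtain ⟨w, hl, y, hy, e⟩ := W_addr (hS hx) n
    refine ⟨w, hl, ?_⟩
    have : S ⊆ PhiW w '' N := by
      refine hc.subset_left_of_subset_union (isOpen_PhiN w)
        (v := ⋃ w' ∈ {w' : List I | w'.length = n ∧ w' ≠ w}, (PhiW w') '' N)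
        (isOpen_biUnion fun w' _ => isOpen_PhiN w') ?_ ?_ ⟨x, hx, y, V_sub_N (W_sub_V hy), e⟩
      · rw [Set.disjoint_left]
        rintro _ ⟨a, ha, rfl⟩ h
        obtain ⟨w', ⟨h1, h2⟩, b, hb, e⟩ := mem_iUnion₂.1 h
        exact h2 (word_eq (by omega) hb ha e)
      · intro z hz
        obtain ⟨w', hl', y', hy', e'⟩ := W_addr (hS hz) n
        by_cases h : w' = w
        · left; exact ⟨y', V_sub_N (W_sub_V hy'), h ▸ e'⟩
        · right; exact mem_iUnion₂.2 ⟨w', ⟨hl', h⟩, y', V_sub_N (W_sub_V hy'), e'⟩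
    intro z hz
    obtain ⟨y', hy', rfl⟩ := this hz
    exact ⟨y', W_sub_V (PhiW_mem_W hy' (hS hz)), rfl⟩
  intro a ha b hb
  refine dist_le_zero.1 (le_of_forall_pos_lt_add fun ε hε => ?_)
  obtain ⟨n, hn⟩ := exists_small hε
  obtain ⟨w, hl, h⟩ := key n
  obtain ⟨a', ha', rfl⟩ := h ha
  obtain ⟨b', hb', rfl⟩ := h hb
  have := PhiW_V_dist w ha' hb'
  rw [hl] at this
  linarith

end Ant

namespace Ant
open Filter Topology

/-! The ternary Cantor set -/

theorem cantor_acc (n : ℕ) : ∀ x ∈ cantorSet, ∃ y ∈ cantorSet, y ≠ x ∧ |y - x| ≤ (1/3)^n := by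
  induction n with
  | zero =>
    intro x hx
    have h01 := cantorSet_subset_unitInterval hx
    by_cases h : x = 0
    · exact ⟨1/4, quarter_mem_cantorSet, by simp [h], by rw [h, abs_le]; constructor <;> norm_num⟩
    · refine ⟨0, zero_mem_cantorSet, fun e => h e.symm, ?_⟩
      rw [abs_le]; constructor <;> norm_num <;> linarith [h01.1, h01.2]
  | succ n ih =>
    intro x hx
    rw [cantorSet_eq_union_halves] at hx
    rcases hx with ⟨x', hx', rfl⟩ | ⟨x', hx', rfl⟩
    · obtain ⟨y, hy, hne, hd⟩ := ih x' hx'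
      refine ⟨y/3, ?_, fun e => hne (by simp at e; linarith), ?_⟩
      · rw [cantorSet_eq_union_halves]; left; exact ⟨y, hy, rfl⟩
      · simp only; rw [← sub_div, abs_div, abs_of_pos (show (0:ℝ) < 3 by norm_num), pow_succ]; linarith
    · obtain ⟨y, hy, hne, hd⟩ := ih x' hx'
      refine ⟨(2+y)/3, ?_, fun e => hne (by simp at e; linarith), ?_⟩
      · rw [cantorSet_eq_union_halves]; right; exact ⟨y, hy, rfl⟩
      · simp only; rw [← sub_div, abs_div, abs_of_pos (show (0:ℝ) < 3 by norm_num), pow_succ,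
          add_sub_add_left_eq_sub]; linarith

theorem cantor_null : MeasureTheory.volume cantorSet = 0 := by
  have hfin : MeasureTheory.volume cantorSet ≠ ⊤ := isCompact_cantorSet.measure_lt_top.ne
  set m := MeasureTheory.volume cantorSet with hm
  have h1 : MeasureTheory.volume ((fun x : ℝ => x/3) '' cantorSet) = ENNReal.ofReal (1/3) * m := by
    have := MeasureTheory.Measure.addHaar_image_homothety (MeasureTheory.volume : MeasureTheory.Measure ℝ) (0:ℝ) (1/3:ℝ) cantorSet
    have e : (fun x : ℝ => x/3) = AffineMap.homothety (0:ℝ) (1/3:ℝ) := by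
      ext x; simp [AffineMap.homothety_apply]; ring
    rw [e, this]; simp; rfl
  have h2 : MeasureTheory.volume ((fun x : ℝ => (2+x)/3) '' cantorSet) = ENNReal.ofReal (1/3) * m := by
    have := MeasureTheory.Measure.addHaar_image_homothety (MeasureTheory.volume : MeasureTheory.Measure ℝ) (1:ℝ) (1/3:ℝ) cantorSet
    have e : (fun x : ℝ => (2+x)/3) = AffineMap.homothety (1:ℝ) (1/3:ℝ) := by
      ext x; simp [AffineMap.homothety_apply]; ring
    rw [e, this]; simp; rfl
  have h3 : m ≤ ENNReal.ofReal (1/3) * m + ENNReal.ofReal (1/3) * m := by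
    conv_lhs => rw [hm, cantorSet_eq_union_halves]
    exact (MeasureTheory.measure_union_le _ _).trans (by rw [h1, h2])
  have h4 : m.toReal ≤ 1/3 * m.toReal + 1/3 * m.toReal := by
    have := ENNReal.toReal_mono (by finiteness) h3
    rwa [ENNReal.toReal_add (by finiteness) (by finiteness), ENNReal.toReal_mul, ENNReal.toReal_ofReal (by norm_num)] at this
  have h5 : m.toReal = 0 := le_antisymm (by linarith) ENNReal.toReal_nonneg
  exact ((ENNReal.toReal_eq_zero_iff _).1 h5).resolve_right hfin

theorem cantor_tot {S : Set ℝ} (hS : S ⊆ cantorSet) (hc : IsPreconnected S) : S.Subsingleton := by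
  have : ∀ a ∈ S, ∀ b ∈ S, ¬ a < b := by
    intro a ha b hb hab
    have h := (hc.Icc_subset ha hb).trans hS
    have := MeasureTheory.measure_mono_null h cantor_null
    simp at this
    linarith
  intro a ha b hb
  exact le_antisymm (not_lt.1 (this b hb a ha)) (not_lt.1 (this a ha b hb))

/-! The tame pieces -/

def kap (τ : ℝ) : E := (τ, 75, 50)
def T0 : Set E := kap '' cantorSet
def B0 : Set E := {p | -2 ≤ p.1 ∧ p.1 ≤ 2 ∧ 74 ≤ p.2.1 ∧ p.2.1 ≤ 76 ∧ 49 ≤ p.2.2 ∧ p.2.2 ≤ 51}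
def iB0 : Set E := {p | -2 < p.1 ∧ p.1 < 2 ∧ 74 < p.2.1 ∧ p.2.1 < 76 ∧ 49 < p.2.2 ∧ p.2.2 < 51}

theorem kap_cont : Continuous kap := by unfold kap; fun_prop
theorem T0_compact : IsCompact T0 := isCompact_cantorSet.image kap_cont
theorem T0_sub : T0 ⊆ iB0 := by
  rintro _ ⟨t, ht, rfl⟩
  have := cantorSet_subset_unitInterval ht
  simp only [iB0, kap, mem_ofPred_eq]
  refine ⟨?_, ?_, ?_, ?_, ?_, ?_⟩ <;> linarith [this.1, this.2]
theorem iB0_sub : iB0 ⊆ B0 := fun p ⟨a, b, c, d, e, f⟩ => ⟨a.le, b.le, c.le, d.le, e.le, f.le⟩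
theorem B0_sub : B0 ⊆ V := by
  rintro p ⟨a, b, c, d, e, f⟩
  simp only [V, inV, mem_ofPred_eq]
  grind
theorem iB0_open : IsOpen iB0 := by
  have : iB0 = Ioo (-2) 2 ×ˢ Ioo 74 76 ×ˢ Ioo 49 51 := by
    ext p; simp only [iB0, mem_ofPred_eq, mem_prod, mem_Ioo]; tauto
  rw [this]; exact isOpen_Ioo.prod (isOpen_Ioo.prod isOpen_Ioo)
theorem B0_closed : IsClosed B0 := by
  have : B0 = Icc (-2) 2 ×ˢ Icc 74 76 ×ˢ Icc 49 51 := by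
    ext p; simp only [B0, mem_ofPred_eq, mem_prod, mem_Icc]; tauto
  rw [this]; exact isClosed_Icc.prod (isClosed_Icc.prod isClosed_Icc)
theorem B0_child {p : E} (hp : p ∈ B0) (i : I) : psi i p ∉ N := by
  intro h
  obtain ⟨x, y, z⟩ := p
  rcases i with s | s | ⟨s, t⟩ <;> cases s <;> (try cases t) <;>
    simp only [B0, N, psi, sg, mem_ofPred_eq, inN] at * <;> grind

theorem B0_word {p y : E} (hp : p ∈ B0) (hy : y ∈ N) {u : List I} (h : p = PhiW u y) : u = [] := by
  cases u with
  | nil => rfl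
  | cons i u => exact (B0_child hp i (by rw [h]; simpa using PhiW_N u hy)).elim

theorem B0_W {p : E} (hp : p ∈ B0) : p ∉ W := by
  intro h
  obtain ⟨i, hi⟩ := W_child h
  exact B0_child hp i (V_sub_N (W_sub_V hi))

theorem PhiB0_W {p : E} (w : List I) (hp : p ∈ B0) : PhiW w p ∉ W :=
  fun h => B0_W hp (PhiW_mem_W (V_sub_N (B0_sub hp)) h)

theorem PhiB0_eq {w w' : List I} {p p' : E} (hp : p ∈ B0) (hp' : p' ∈ B0) (h : PhiW w p = PhiW w' p') : w = w' := by
  have hN := V_sub_N (B0_sub hp)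
  have hN' := V_sub_N (B0_sub hp')
  rcases le_total w.length w'.length with hl | hl
  · obtain ⟨u, rfl, e⟩ := word_comp hl hN hN' h
    simp [B0_word hp hN' e]
  · obtain ⟨u, rfl, e⟩ := word_comp hl hN' hN h.symm
    simp [B0_word hp' hN e]

theorem NV_B0 {w w' : List I} {y p : E} (hy : y ∈ N \ V) (hp : p ∈ B0) (h : PhiW w y = PhiW w' p) : False := by
  have hN := V_sub_N (B0_sub hp)
  rcases le_total w.length w'.length with hl | hl
  · obtain ⟨u, rfl, e⟩ := word_comp hl hy.1 hN h
    exact hy.2 (e ▸ PhiW_V u (B0_sub hp))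
  · obtain ⟨u, rfl, e⟩ := word_comp hl hN hy.1 h.symm
    obtain rfl := B0_word hp hy.1 e
    exact hy.2 (by simp at e; exact e ▸ B0_sub hp)

def TT (S : Set (List I)) : Set E := ⋃ w ∈ S, PhiW w '' T0
def CC (S : Set (List I)) : Set E := W ∪ TT S

theorem mem_TT {S : Set (List I)} {x : E} : x ∈ TT S ↔ ∃ w ∈ S, ∃ y ∈ T0, PhiW w y = x := by
  simp [TT]

theorem T0_B0 : T0 ⊆ B0 := T0_sub.trans iB0_sub
theorem T0_V : T0 ⊆ V := T0_B0.trans B0_sub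

theorem PhiW_K (w : List I) {y : E} (hy : y ∈ V) {n : ℕ} (hn : n ≤ w.length) : PhiW w y ∈ K n := by
  induction w generalizing n with
  | nil => simp at hn; subst hn; exact hy
  | cons i w ih =>
    cases n with
    | zero => exact PhiW_V (i :: w) hy
    | succ n => exact ⟨i, by simpa using ih (n := n) (by simpa using hn)⟩

theorem TT_lt_closed (S : Set (List I)) (n : ℕ) : IsClosed (⋃ w ∈ S ∩ {w | w.length < n}, PhiW w '' T0) := by
  refine Set.Finite.isClosed_biUnion ((List.finite_length_lt I n).subset inter_subset_right) fun w _ => ?_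
  exact (T0_compact.image (PhiW w).continuous).isClosed

theorem CC_eq (S : Set (List I)) : CC S = ⋂ n, (K n ∪ ⋃ w ∈ S ∩ {w | w.length < n}, PhiW w '' T0) := by
  ext x
  simp only [mem_iInter]
  constructor
  · rintro (hx | hx) n
    · left; exact mem_iInter.1 hx n
    · obtain ⟨w, hw, y, hy, rfl⟩ := mem_TT.1 hx
      by_cases hn : w.length < n
      · right; exact mem_iUnion₂.2 ⟨w, ⟨hw, hn⟩, y, hy, rfl⟩
      · left; exact PhiW_K w (T0_V hy) (not_lt.1 hn)
  · intro h
    by_cases hx : x ∈ W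
    · exact Or.inl hx
    · simp only [W, mem_iInter, not_forall] at hx
      obtain ⟨n, hn⟩ := hx
      obtain ⟨w, ⟨hw, -⟩, h⟩ := mem_iUnion₂.1 ((h n).resolve_left hn)
      exact Or.inr (mem_iUnion₂.2 ⟨w, hw, h⟩)

theorem CC_closed (S) : IsClosed (CC S) := by
  rw [CC_eq]; exact isClosed_iInter fun n => (K_closed n).union (TT_lt_closed S n)
theorem CC_sub_V (S) : CC S ⊆ V := by
  rintro x (hx | hx)
  · exact W_sub_V hx
  · obtain ⟨w, hw, y, hy, rfl⟩ := mem_TT.1 hx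
    exact PhiW_V w (T0_V hy)
theorem CC_compact (S) : IsCompact (CC S) := V_compact.of_isClosed_subset (CC_closed S) (CC_sub_V S)

theorem CC_NV (S) (w : List I) : PhiW w '' (N \ V) ⊆ (CC S)ᶜ := by
  rintro _ ⟨y, hy, rfl⟩ (h | h)
  · exact Set.disjoint_left.1 (PhiW_NV_W w) ⟨y, hy, rfl⟩ h
  · obtain ⟨w', hw, z, hz, e⟩ := mem_TT.1 h
    exact NV_B0 hy (T0_B0 hz) e.symm

theorem TT_disj_W (S) {x : E} (hx : x ∈ TT S) : x ∉ W := by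
  obtain ⟨w, hw, y, hy, rfl⟩ := mem_TT.1 hx
  exact PhiB0_W w (T0_B0 hy)

theorem T0_acc {x : E} (hx : x ∈ T0) {ε : ℝ} (hε : 0 < ε) : ∃ y ∈ T0, y ≠ x ∧ dist y x < ε := by
  obtain ⟨t, ht, rfl⟩ := hx
  obtain ⟨n, hn⟩ := exists_pow_lt_of_lt_one hε (show (1/3:ℝ) < 1 by norm_num)
  obtain ⟨y, hy, hne, hd⟩ := cantor_acc n t ht
  refine ⟨kap y, ⟨y, hy, rfl⟩, fun e => hne (congrArg (fun p : E => p.1) e), ?_⟩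
  rw [dist_E]; simp [kap]
  exact hd.trans_lt hn

theorem CC_perfect (S) : Perfect (CC S) := by
  refine ⟨CC_closed S, fun x hx => ?_⟩
  rw [accPt_iff_nhds]
  intro U hU
  obtain ⟨ε, hε, hb⟩ := Metric.mem_nhds_iff.1 hU
  rcases hx with hx | hx
  · obtain ⟨y, hy, hne, hd⟩ := W_acc hx hε
    exact ⟨y, ⟨hb hd, Or.inl hy⟩, hne⟩
  · obtain ⟨w, hw, y, hy, rfl⟩ := mem_TT.1 hx
    obtain ⟨z, hz, hne, hd⟩ := T0_acc hy hε
    refine ⟨PhiW w z, ⟨hb ?_, Or.inr (mem_TT.2 ⟨w, hw, z, hz, rfl⟩)⟩, fun e => hne ((PhiW w).injective e)⟩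
    refine (PhiW_lip w z y).trans_lt (lt_of_le_of_lt ?_ hd)
    exact mul_le_of_le_one_left dist_nonneg (pow_le_one₀ (by norm_num) (by norm_num))

theorem CC_tot (S) : IsTotallyDisconnected (CC S) := by
  intro A hA hc
  by_cases h : ∃ x ∈ A, x ∈ TT S
  · obtain ⟨x, hxA, hx⟩ := h
    obtain ⟨w, hw, y, hy, rfl⟩ := mem_TT.1 hx
    have h1 : A ⊆ PhiW w '' iB0 := by
      refine hc.subset_left_of_subset_union ((PhiW w).isOpenMap _ iB0_open)
        (v := (PhiW w '' B0)ᶜ) ((PhiW w).isClosedMap _ B0_closed).isOpen_compl ?_ ?_ ⟨_, hxA, y, T0_sub hy, rfl⟩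
      · exact disjoint_compl_right.mono_left (image_mono iB0_sub)
      · intro z hz
        by_cases hzB : z ∈ PhiW w '' B0
        · left
          obtain ⟨b, hb, rfl⟩ := hzB
          rcases hA hz with h | h
          · exact (PhiB0_W w hb h).elim
          · obtain ⟨w', hw', b', hb', e⟩ := mem_TT.1 h
            obtain rfl := PhiB0_eq (T0_B0 hb') hb e
            rw [← e]; exact ⟨b', T0_sub hb', rfl⟩
        · exact Or.inr hzB
    have h2 : ∀ a ∈ A, (PhiW w).symm a ∈ T0 := by
      intro a ha
      obtain ⟨b, hb, rfl⟩ := h1 ha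
      rcases hA ha with h | h
      · exact (PhiB0_W w (iB0_sub hb) h).elim
      · obtain ⟨w', hw', b', hb', e⟩ := mem_TT.1 h
        obtain rfl := PhiB0_eq (T0_B0 hb') (iB0_sub hb) e
        rw [← e]; simpa using hb'
    have h3 : ((fun a : E => ((PhiW w).symm a).1) '' A).Subsingleton := by
      refine cantor_tot ?_ (hc.image _ (by fun_prop))
      rintro _ ⟨a, ha, rfl⟩
      obtain ⟨t, ht, e⟩ := h2 a ha
      simp only [← e]; exact ht
    intro a ha b hb
    have h4 := h3 ⟨a, ha, rfl⟩ ⟨b, hb, rfl⟩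
    obtain ⟨t, ht, e⟩ := h2 a ha
    obtain ⟨t', ht', e'⟩ := h2 b hb
    simp only [← e, ← e'] at h4
    have : t = t' := h4
    subst this
    exact (PhiW w).symm.injective (e.symm.trans e')
  · push Not at h
    exact W_tot A (fun a ha => (hA ha).resolve_right (h a ha)) hc

/-- words whose cell meets `F` -/
def SF (F : Set E) : Set (List I) := {w | ∃ y ∈ V, PhiW w y ∈ F}

theorem closure_TT {F : Set E} (hF : IsClosed F) (hFW : F ⊆ W) : W ∩ closure (TT (SF F)) = F := by
  ext x
  constructor
  · rintro ⟨hx, hc⟩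
    rw [← hF.closure_eq, Metric.mem_closure_iff]
    intro ε hε
    obtain ⟨n, hn⟩ := exists_small hε
    obtain ⟨w, hl, y, hy, rfl⟩ := W_addr hx n
    have hO : IsOpen (PhiW w '' N ∩ (⋃ u ∈ univ ∩ {u : List I | u.length < n}, PhiW u '' T0)ᶜ) :=
      (isOpen_PhiN w).inter (TT_lt_closed univ n).isOpen_compl
    obtain ⟨z, ⟨⟨b, hb, rfl⟩, hz2⟩, hz⟩ := mem_closure_iff.1 hc _ hO ⟨⟨y, V_sub_N (W_sub_V hy), rfl⟩, by
      intro h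
      obtain ⟨u, -, b, hb, e⟩ := mem_iUnion₂.1 h
      exact PhiB0_W u (T0_B0 hb) (e ▸ hx)⟩
    obtain ⟨u, ⟨c, hc, hcF⟩, d, hd, e⟩ := mem_TT.1 hz
    have hul : w.length ≤ u.length := by
      by_contra hlt
      exact hz2 (mem_iUnion₂.2 ⟨u, ⟨trivial, by simp; omega⟩, d, hd, e⟩)
    obtain ⟨u', rfl, -⟩ := word_comp hul hb (V_sub_N (T0_V hd)) e.symm
    rw [PhiW_append] at hcF
    exact ⟨_, hcF, (PhiW_V_dist w (W_sub_V hy) (PhiW_V u' hc)).trans_lt (hl ▸ hn)⟩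
  · intro hx
    refine ⟨hFW hx, Metric.mem_closure_iff.2 fun ε hε => ?_⟩
    obtain ⟨n, hn⟩ := exists_small hε
    obtain ⟨w, hl, y, hy, rfl⟩ := W_addr (hFW hx) n
    have h0 : kap 0 ∈ T0 := ⟨0, zero_mem_cantorSet, rfl⟩
    refine ⟨PhiW w (kap 0), mem_TT.2 ⟨w, ⟨y, W_sub_V hy, hx⟩, _, h0, rfl⟩, ?_⟩
    exact (PhiW_V_dist w (W_sub_V hy) (T0_V h0)).trans_lt (hl ▸ hn)

end Ant

namespace Ant
open Filter Topology

abbrev Q := unitInterval × unitInterval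
def qc (q : Q) : ℝ × ℝ := (q.1, q.2)
theorem qc_cont : Continuous qc := by unfold qc; fun_prop

def smoothAlg : Subalgebra ℝ C(Q, ℝ) where
  carrier := {f | ∃ g : ℝ × ℝ → ℝ, Differentiable ℝ g ∧ ∀ q, f q = g (qc q)}
  mul_mem' := by
    rintro a b ⟨g, hg, h⟩ ⟨g', hg', h'⟩
    exact ⟨fun x => g x * g' x, hg.mul hg', fun q => by simp [h, h']⟩
  add_mem' := by
    rintro a b ⟨g, hg, h⟩ ⟨g', hg', h'⟩
    exact ⟨fun x => g x + g' x, hg.add hg', fun q => by simp [h, h']⟩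
  algebraMap_mem' r := ⟨fun _ => r, by fun_prop, fun q => by simp⟩

theorem smooth_approx (f : C(Q, ℝ)) {ε : ℝ} (hε : 0 < ε) :
    ∃ g : ℝ × ℝ → ℝ, Differentiable ℝ g ∧ ∀ q, |g (qc q) - f q| < ε := by
  have hsep : smoothAlg.SeparatesPoints := by
    intro x y hxy
    by_cases h1 : (x.1 : ℝ) = y.1
    · have h2 : (x.2 : ℝ) ≠ y.2 := fun h2 => hxy (Prod.ext (Subtype.ext h1) (Subtype.ext h2))
      exact ⟨_, ⟨⟨fun q : Q => (q.2 : ℝ), by fun_prop⟩, ⟨fun x => x.2, by fun_prop, fun q => rfl⟩, rfl⟩, h2⟩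
    · exact ⟨_, ⟨⟨fun q : Q => (q.1 : ℝ), by fun_prop⟩, ⟨fun x => x.1, by fun_prop, fun q => rfl⟩, rfl⟩, h1⟩
  obtain ⟨⟨g, g', hg', hgg⟩, hg⟩ := ContinuousMap.exists_mem_subalgebra_near_continuous_of_separatesPoints
    smoothAlg hsep f f.continuous ε hε
  exact ⟨g', hg', fun q => by rw [← hgg]; simpa using hg q⟩

theorem smooth_approx3 (f : C(Q, E)) {ε : ℝ} (hε : 0 < ε) :
    ∃ g : ℝ × ℝ → E, Differentiable ℝ g ∧ ∀ q, dist (g (qc q)) (f q) < ε := by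
  obtain ⟨g1, d1, h1⟩ := smooth_approx ⟨fun q => (f q).1, by fun_prop⟩ hε
  obtain ⟨g2, d2, h2⟩ := smooth_approx ⟨fun q => (f q).2.1, by fun_prop⟩ hε
  obtain ⟨g3, d3, h3⟩ := smooth_approx ⟨fun q => (f q).2.2, by fun_prop⟩ hε
  refine ⟨fun x => (g1 x, g2 x, g3 x), by fun_prop, fun q => ?_⟩
  rw [dist_E]
  exact max_lt (h1 q) (max_lt (h2 q) (h3 q))

theorem phi_diff (i : I) : Differentiable ℝ (phi i) := by
  rcases i with s | s | ⟨s, t⟩ <;> unfold phi <;> fun_prop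

theorem PhiW_diff (w : List I) : Differentiable ℝ (PhiW w) := by
  induction w with
  | nil => exact differentiable_id
  | cons i w ih => exact (phi_diff i).comp ih

theorem kap_diff : Differentiable ℝ kap := by unfold kap; fun_prop

instance haarR2 : (MeasureTheory.volume : MeasureTheory.Measure (ℝ × ℝ)).IsAddHaarMeasure :=
  inferInstanceAs ((MeasureTheory.volume : MeasureTheory.Measure ℝ).prod
    (MeasureTheory.volume : MeasureTheory.Measure ℝ)).IsAddHaarMeasure
instance haarE : (MeasureTheory.volume : MeasureTheory.Measure E).IsAddHaarMeasure :=
  inferInstanceAs ((MeasureTheory.volume : MeasureTheory.Measure ℝ).prod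
    (MeasureTheory.volume : MeasureTheory.Measure (ℝ × ℝ))).IsAddHaarMeasure

open MeasureTheory in
theorem generic_v (S : Set (List I)) (g : ℝ × ℝ → E) (hg : Differentiable ℝ g) {ε : ℝ} (hε : 0 < ε) :
    ∃ v : E, ‖v‖ < ε ∧ ∀ x, g x + v ∉ TT S := by
  have hnull : ∀ w : List I, volume ((fun p : E => PhiW w (kap p.1) - g p.2) '' (cantorSet ×ˢ univ)) = 0 := by
    intro w
    refine addHaar_image_eq_zero_of_differentiableOn_of_addHaar_eq_zero volume ?_ ?_
    · have h1 : Differentiable ℝ (fun p : E => PhiW w (kap p.1)) :=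
        ((PhiW_diff w).comp kap_diff).comp differentiable_fst
      exact (h1.sub (hg.comp differentiable_snd)).differentiableOn
    · rw [Measure.volume_eq_prod, Measure.prod_prod, cantor_null, zero_mul]
  have hae : ∀ᵐ v : E, ∀ w : List I, v ∉ ((fun p : E => PhiW w (kap p.1) - g p.2) '' (cantorSet ×ˢ univ)) :=
    ae_all_iff.2 fun w => measure_eq_zero_iff_ae_notMem.1 (hnull w)
  obtain ⟨v, hv, hvε⟩ := (Measure.dense_of_ae hae).exists_mem_open (isOpen_ball (x := (0:E)) (ε := ε)) ⟨0, mem_ball_self hε⟩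
  refine ⟨v, by simpa using hvε, fun x hx => ?_⟩
  obtain ⟨w, hw, _, ⟨t, ht, rfl⟩, e⟩ := mem_TT.1 hx
  exact hv w ⟨(t, x), ⟨ht, trivial⟩, by simp [e]⟩

theorem exists_nbhd {A O : Set E} (hA : IsCompact A) (hO : IsOpen O) (h : A ⊆ O) :
    ∃ δ > 0, ∀ a ∈ A, ∀ x, dist x a < δ → x ∈ O := by
  obtain ⟨δ, hδ, hs⟩ := hA.exists_thickening_subset_open hO h
  exact ⟨δ, hδ, fun a ha x hx => hs (mem_thickening_iff.2 ⟨a, ha, hx⟩)⟩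

theorem gen_pos (S : Set (List I)) (H : C(Q, E)) (hW : ∀ q, H q ∉ W) (A : Set Q) (hA : IsClosed A)
    (hAC : ∀ q ∈ A, H q ∉ CC S) {ε : ℝ} (hε : 0 < ε) :
    ∃ H' : C(Q, E), (∀ q, H' q ∉ CC S) ∧ (∀ q ∈ A, H' q = H q) ∧ ∀ q, dist (H' q) (H q) < ε := by
  obtain ⟨ε1, hε1, h1⟩ := exists_nbhd (isCompact_range H.continuous) W_closed.isOpen_compl
    (by rintro _ ⟨q, rfl⟩; exact hW q)
  obtain ⟨ε2, hε2, h2⟩ := exists_nbhd (hA.isCompact.image H.continuous) (CC_closed S).isOpen_compl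
    (by rintro _ ⟨q, hq, rfl⟩; exact hAC q hq)
  set O : Set Q := ⋃ a ∈ A, {q | dist (H q) (H a) < ε2 / 2} with hO
  have hOo : IsOpen O := isOpen_biUnion fun a _ => isOpen_lt (by fun_prop) continuous_const
  have hAO : A ⊆ O := fun a ha => mem_iUnion₂.2 ⟨a, ha, by simp; positivity⟩
  obtain ⟨χ, c0, c1, c2⟩ := exists_continuous_zero_one_of_isClosed hA hOo.isClosed_compl
    (disjoint_compl_right.mono_left hAO)
  set e := min ε (min ε1 (ε2/2)) with he
  have hepos : 0 < e := lt_min hε (lt_min hε1 (by positivity))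
  have he1 : e ≤ ε := min_le_left _ _
  have he2 : e ≤ ε1 := (min_le_right _ _).trans (min_le_left _ _)
  have he3 : e ≤ ε2/2 := (min_le_right _ _).trans (min_le_right _ _)
  obtain ⟨g, hg, hgH⟩ := smooth_approx3 H (show 0 < e/2 by positivity)
  obtain ⟨v, hv, hvT⟩ := generic_v S g hg (show 0 < e/2 by positivity)
  have hgc := hg.continuous
  have hqc := qc_cont
  let H' : C(Q, E) := ⟨fun q => H q + χ q • (g (qc q) + v - H q), by fun_prop⟩
  have hH' : ∀ q, H' q = H q + χ q • (g (qc q) + v - H q) := fun q => rfl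
  have hd : ∀ q, dist (H' q) (H q) < e := by
    intro q
    rw [hH', dist_eq_norm, add_sub_cancel_left, norm_smul]
    have hχ := c2 q
    have : ‖g (qc q) + v - H q‖ < e := by
      have h3 := hgH q
      rw [dist_eq_norm] at h3
      calc ‖g (qc q) + v - H q‖ = ‖(g (qc q) - H q) + v‖ := by congr 1; abel
        _ ≤ _ := norm_add_le _ _
        _ < e := by linarith
    rw [Real.norm_of_nonneg hχ.1]
    nlinarith [hχ.1, hχ.2, norm_nonneg (g (qc q) + v - H q)]
  refine ⟨H', fun q => ?_, fun q hq => ?_, fun q => (hd q).trans_le he1⟩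
  · by_cases hq : q ∈ O
    · obtain ⟨a, ha, haq⟩ := mem_iUnion₂.1 hq
      refine h2 (H a) ⟨a, ha, rfl⟩ _ ?_
      have haq' : dist (H q) (H a) < ε2/2 := haq
      calc dist (H' q) (H a) ≤ dist (H' q) (H q) + dist (H q) (H a) := dist_triangle _ _ _
        _ < ε2 := by linarith [hd q]
    · rintro (h | h)
      · exact h1 (H q) ⟨q, rfl⟩ (H' q) ((hd q).trans_le he2) h
      · have : χ q = 1 := c1 hq
        rw [hH', this] at h
        exact hvT (qc q) (by simpa using h)
  · have : χ q = 0 := c0 hq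
    rw [hH', this]; simp

end Ant

namespace Ant
open Filter Topology

/-- build a path homotopy in a subset from a map of the square -/
theorem homotopic_of_sq {X : Type*} [TopologicalSpace X] {S : Set X} {a b : S} (γ γ' : Path a b)
    (H : C(Q, X)) (hS : ∀ q, H q ∈ S) (h0 : ∀ t, H (0, t) = γ t) (h1 : ∀ t, H (1, t) = γ' t)
    (ha : ∀ s, H (s, 0) = a) (hb : ∀ s, H (s, 1) = b) : γ.Homotopic γ' :=
  ⟨{ toFun := fun q => ⟨H q, hS q⟩
     continuous_toFun := by fun_prop
     map_zero_left := fun t => Subtype.ext (h0 t)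
     map_one_left := fun t => Subtype.ext (h1 t)
     prop' := by
       rintro s t (rfl | rfl)
       · exact Subtype.ext (by simp [ha])
       · exact Subtype.ext (by simp [hb]) }⟩

theorem hom_lift (S : Set (List I)) {a b : ↥(CC S)ᶜ} (γ γ' : Path a b)
    (H : C(Q, E)) (hW : ∀ q, H q ∉ W) (h0 : ∀ t, H (0, t) = γ t) (h1 : ∀ t, H (1, t) = γ' t)
    (ha : ∀ s, H (s, 0) = a) (hb : ∀ s, H (s, 1) = b) : γ.Homotopic γ' := by
  let A : Set Q := {q | q.1 = 0} ∪ {q | q.1 = 1} ∪ {q | q.2 = 0} ∪ {q | q.2 = 1}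
  have hA : IsClosed A := by
    refine ((IsClosed.union ?_ ?_).union ?_).union ?_ <;>
    exact isClosed_eq (by fun_prop) (by fun_prop)
  obtain ⟨H', c1, c2, -⟩ := gen_pos S H hW A hA (by
    rintro ⟨s, t⟩ (((h | h) | h) | h) <;> (simp only [mem_ofPred_eq] at h; subst h)
    · rw [h0]; exact (γ t).2
    · rw [h1]; exact (γ' t).2
    · rw [ha]; exact a.2
    · rw [hb]; exact b.2) one_pos
  refine homotopic_of_sq γ γ' H' c1 ?_ ?_ ?_ ?_
  · intro t; rw [c2 _ (by simp [A]), h0]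
  · intro t; rw [c2 _ (by simp [A]), h1]
  · intro t; rw [c2 _ (by simp [A]), ha]
  · intro t; rw [c2 _ (by simp [A]), hb]

theorem CC_W (S) : (CC S)ᶜ ⊆ Wᶜ := compl_subset_compl.2 subset_union_left
def incl (S : Set (List I)) : C(↥(CC S)ᶜ, ↥Wᶜ) := ⟨Set.inclusion (CC_W S), continuous_inclusion _⟩
@[simp] theorem incl_coe (S) (x : ↥(CC S)ᶜ) : ((incl S x : ↥Wᶜ) : E) = x := rfl

theorem incl_inj (S) {a b : ↥(CC S)ᶜ} (γ γ' : Path a b)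
    (h : (γ.map (incl S).continuous).Homotopic (γ'.map (incl S).continuous)) : γ.Homotopic γ' := by
  obtain ⟨F⟩ := h
  refine hom_lift S γ γ' ⟨fun q => (F q : E), by fun_prop⟩ (fun q => (F q).2) ?_ ?_ ?_ ?_
  · intro t; simp
  · intro t; simp
  · intro t; simp
  · intro t; simp

theorem line_mem {x y : E} {ε : ℝ} (h : dist x y < ε) (s : unitInterval) :
    dist ((1 - (s:ℝ)) • x + (s:ℝ) • y) y < ε := by
  have : (1 - (s:ℝ)) • x + (s:ℝ) • y - y = (1 - (s:ℝ)) • (x - y) := by module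
  rw [dist_eq_norm, this, norm_smul, Real.norm_of_nonneg (by linarith [s.2.2])]
  rw [dist_eq_norm] at h
  have := s.2.1; have := s.2.2
  nlinarith [norm_nonneg (x - y)]

theorem incl_surj (S) {a b : ↥(CC S)ᶜ} (δ : Path (incl S a) (incl S b)) :
    ∃ γ : Path a b, (γ.map (incl S).continuous).Homotopic δ := by
  let A : Set Q := {q | q.2 = 0} ∪ {q | q.2 = 1}
  have hA : IsClosed A := by
    refine IsClosed.union ?_ ?_ <;> exact isClosed_eq (by fun_prop) (by fun_prop)
  obtain ⟨ε, hε, hn⟩ := exists_nbhd (A := range fun t => (δ t : E)) (isCompact_range (by fun_prop)) W_closed.isOpen_compl (by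
    rintro _ ⟨t, rfl⟩; exact (δ t).2)
  obtain ⟨H', c1, c2, c3⟩ := gen_pos S ⟨fun q : Q => (δ q.2 : E), by fun_prop⟩ (fun q => (δ q.2).2) A hA (by
    rintro ⟨s, t⟩ (h | h) <;> (simp only [mem_ofPred_eq] at h; subst h)
    · simp; exact a.2
    · simp; exact b.2) hε
  simp only [ContinuousMap.coe_mk] at c2 c3
  have e0 : H' (0, 0) = a := by rw [c2 _ (by simp [A])]; simp
  have e1 : H' (0, 1) = b := by rw [c2 _ (by simp [A])]; simp
  let γ : Path a b :=
    { toFun := fun t => ⟨H' (0, t), c1 _⟩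
      continuous_toFun := by fun_prop
      source' := Subtype.ext e0
      target' := Subtype.ext e1 }
  refine ⟨γ, homotopic_of_sq _ _ ⟨fun q : Q => (1 - (q.1:ℝ)) • H' (0, q.2) + (q.1:ℝ) • (δ q.2 : E), by fun_prop⟩ ?_ ?_ ?_ ?_ ?_⟩
  · rintro ⟨s, t⟩
    exact hn _ ⟨t, rfl⟩ _ (line_mem (c3 (0, t)) s)
  · intro t; simp [γ]
  · intro t; simp
  · intro s; simp [e0]; module
  · intro s; simp [e1]; module

/-- two paths with the same endpoints in a convex set off `W` are homotopic off `CC S` -/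
theorem hom_convex (S) {U : Set E} (hU : Convex ℝ U) (hW : U ⊆ Wᶜ) {a b : ↥(CC S)ᶜ} (γ γ' : Path a b)
    (h : ∀ t, (γ t : E) ∈ U) (h' : ∀ t, (γ' t : E) ∈ U) : γ.Homotopic γ' := by
  refine hom_lift S γ γ' ⟨fun q : Q => (1 - (q.1:ℝ)) • (γ q.2 : E) + (q.1:ℝ) • (γ' q.2 : E), by fun_prop⟩
    (fun q => hW ?_) ?_ ?_ ?_ ?_
  · exact hU (h _) (h' _) (by linarith [q.1.2.2]) q.1.2.1 (by ring)
  · intro t; simp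
  · intro t; simp
  · intro s; simp; module
  · intro s; simp; module

theorem pi1_equiv {X Y : Type} [TopologicalSpace X] [TopologicalSpace Y] (f : C(X, Y)) (x : X)
    (hi : ∀ γ γ' : Path x x, (γ.map f.continuous).Homotopic (γ'.map f.continuous) → γ.Homotopic γ')
    (hs : ∀ δ : Path (f x) (f x), ∃ γ : Path x x, (γ.map f.continuous).Homotopic δ) :
    Nonempty (FundamentalGroup X x ≃* FundamentalGroup Y (f x)) := by
  refine ⟨MulEquiv.ofBijective (FundamentalGroup.map f x) ⟨?_, ?_⟩⟩
  · intro p q h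
    induction p using Path.Homotopic.Quotient.ind with | mk p => ?_
    induction q using Path.Homotopic.Quotient.ind with | mk q => ?_
    exact Quotient.sound (hi p q (Quotient.exact h))
  · intro d
    induction d using Path.Homotopic.Quotient.ind with | mk d => ?_
    obtain ⟨γ, hγ⟩ := hs d
    exact ⟨Path.Homotopic.Quotient.mk γ, Quotient.sound hγ⟩

theorem pi1_homeo {X Y : Type} [TopologicalSpace X] [TopologicalSpace Y] (f : X ≃ₜ Y) (x : X) :
    Nonempty (FundamentalGroup X x ≃* FundamentalGroup Y (f x)) := by
  refine pi1_equiv (f : C(X, Y)) x ?_ ?_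
  · intro γ γ' h
    have := h.map (f.symm : C(Y, X))
    obtain ⟨F⟩ := this
    exact ⟨{ toFun := F
             continuous_toFun := by fun_prop
             map_zero_left := fun t => by simp
             map_one_left := fun t => by simp
             prop' := by
               rintro s t (rfl | rfl) <;> simp }⟩
  · intro δ
    refine ⟨(δ.map f.symm.continuous).cast (by simp) (by simp), ?_⟩
    convert Path.Homotopic.refl δ using 1
    ext t; simp

theorem pi1_CC (S) (x : ↥(CC S)ᶜ) : Nonempty (FundamentalGroup ↥(CC S)ᶜ x ≃* FundamentalGroup ↥Wᶜ (incl S x)) :=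
  pi1_equiv (incl S) x (incl_inj S) (incl_surj S)

end Ant

namespace Ant
open Filter Topology MeasureTheory

def aff (a b c d e f : ℝ) (p : ℝ × ℝ) : ℝ × ℝ := (e + (a * p.1 + b * p.2), f + (c * p.1 + d * p.2))

theorem aff_vol (a b c d e f : ℝ) (A : Set (ℝ × ℝ)) :
    volume (aff a b c d e f '' A) = ENNReal.ofReal |a*d-b*c| * volume A := by
  have h1 : aff a b c d e f '' A = (fun x => (e, f) + x) ''
      ((Matrix.toLin (Module.Basis.finTwoProd ℝ) (Module.Basis.finTwoProd ℝ) !![a,b;c,d]) '' A) := by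
    rw [image_image]
    refine image_congr fun p _ => ?_
    rw [Matrix.toLin_finTwoProd_apply]; rfl
  rw [h1, image_add_left, measure_preimage_add, Measure.addHaar_image_linearMap, LinearMap.det_toLin,
    Matrix.det_fin_two_of]

inductive Pj | xy | xz | yz
def pr : Pj → E → ℝ × ℝ
  | .xy, p => (p.1, p.2.1)
  | .xz, p => (p.1, p.2.2)
  | .yz, p => (p.2.1, p.2.2)

theorem pr_cont (k : Pj) : Continuous (pr k) := by cases k <;> unfold pr <;> fun_prop
theorem pr_diff (k : Pj) : Differentiable ℝ (pr k) := by cases k <;> unfold pr <;> fun_prop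

theorem pr_phi (k : Pj) (i : I) : ∃ j a b c d e f, |a*d-b*c| ≤ 1/10 ∧ ∀ x, pr k (phi i x) = aff a b c d e f (pr j x) := by
  rcases i with s | s | ⟨s, t⟩ <;> cases k
  · refine ⟨.xy, 45/100, 0, 0, 20/100*sg s, 0, 75*sg s, ?_, ?_⟩
    · cases s <;> norm_num [sg, abs_le]
    · intro x; simp only [pr, phi, aff, Prod.mk.injEq]; constructor <;> ring
  · refine ⟨.xz, 45/100, 0, 0, 2/100, 0, 0, ?_, ?_⟩
    · cases s <;> norm_num [sg, abs_le]
    · intro x; simp only [pr, phi, aff, Prod.mk.injEq]; constructor <;> ring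
  · refine ⟨.yz, 20/100*sg s, 0, 0, 2/100, 75*sg s, 0, ?_, ?_⟩
    · cases s <;> norm_num [sg, abs_le]
    · intro x; simp only [pr, phi, aff, Prod.mk.injEq]; constructor <;> ring
  · refine ⟨.xy, 0, 95/1000*sg s, 98/100, 0, 90*sg s, 0, ?_, ?_⟩
    · cases s <;> norm_num [sg, abs_le]
    · intro x; simp only [pr, phi, aff, Prod.mk.injEq]; constructor <;> ring
  · refine ⟨.yz, 95/1000*sg s, 0, 0, 2/100, 90*sg s, 0, ?_, ?_⟩
    · cases s <;> norm_num [sg, abs_le]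
    · intro x; simp only [pr, phi, aff, Prod.mk.injEq]; constructor <;> ring
  · refine ⟨.xz, 98/100, 0, 0, 2/100, 0, 0, ?_, ?_⟩
    · cases s <;> norm_num [sg, abs_le]
    · intro x; simp only [pr, phi, aff, Prod.mk.injEq]; constructor <;> ring
  · refine ⟨.xz, 33/100*sg s, 0, 0, 2/100*sg t, 60*sg s, 75*sg t, ?_, ?_⟩
    · cases s <;> cases t <;> norm_num [sg, abs_le]
    · intro x; simp only [pr, phi, aff, Prod.mk.injEq]; constructor <;> ring
  · refine ⟨.xy, 33/100*sg s, 0, 0, 10/100, 60*sg s, 0, ?_, ?_⟩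
    · cases s <;> cases t <;> norm_num [sg, abs_le]
    · intro x; simp only [pr, phi, aff, Prod.mk.injEq]; constructor <;> ring
  · refine ⟨.yz, 0, 2/100*sg t, 10/100, 0, 75*sg t, 0, ?_, ?_⟩
    · cases s <;> cases t <;> norm_num [sg, abs_le]
    · intro x; simp only [pr, phi, aff, Prod.mk.injEq]; constructor <;> ring

theorem W_null (k : Pj) : volume (pr k '' W) = 0 := by
  set m : Pj → ENNReal := fun k => volume (pr k '' W) with hm
  set M := max (m .xy) (max (m .xz) (m .yz)) with hM
  have hle : ∀ j, m j ≤ M := by intro j; cases j <;> simp [hM]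
  have hfin : ∀ j, m j ≠ ⊤ := fun j => (W_compact.image (pr_cont j)).measure_lt_top.ne
  have hMfin : M ≠ ⊤ := (max_lt (hfin _).lt_top (max_lt (hfin _).lt_top (hfin _).lt_top)).ne
  have h1 : ∀ k i, volume (pr k '' (phi i '' W)) ≤ ENNReal.ofReal (1/10) * M := by
    intro k i
    obtain ⟨j, a, b, c, d, e, f, hd, h⟩ := pr_phi k i
    have : pr k '' (phi i '' W) = aff a b c d e f '' (pr j '' W) := by
      rw [image_image, image_image]; exact image_congr fun x _ => h x
    rw [this, aff_vol]
    exact mul_le_mul' (ENNReal.ofReal_le_ofReal hd) (hle j)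
  have h2 : ∀ k, m k ≤ 8 * (ENNReal.ofReal (1/10) * M) := by
    intro k
    have hsub : pr k '' W ⊆ ⋃ i, pr k '' (phi i '' W) := by
      rintro _ ⟨x, hx, rfl⟩
      obtain ⟨i, hi⟩ := W_child hx
      exact mem_iUnion.2 ⟨i, x, ⟨_, hi, phi_psi i x⟩, rfl⟩
    calc m k ≤ volume (⋃ i, pr k '' (phi i '' W)) := measure_mono hsub
      _ ≤ ∑ i, volume (pr k '' (phi i '' W)) := measure_iUnion_fintype_le _ _
      _ ≤ ∑ i : I, ENNReal.ofReal (1/10) * M := Finset.sum_le_sum fun i _ => h1 k i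
      _ = 8 * (ENNReal.ofReal (1/10) * M) := by
        rw [Finset.sum_const, Finset.card_univ, show Fintype.card I = 8 by decide]; simp
  have h3 : M ≤ 8 * (ENNReal.ofReal (1/10) * M) := max_le (h2 _) (max_le (h2 _) (h2 _))
  have h4 : M.toReal ≤ 8 * (1/10 * M.toReal) := by
    have := ENNReal.toReal_mono (by finiteness) h3
    rwa [ENNReal.toReal_mul, ENNReal.toReal_mul, ENNReal.toReal_ofReal (by norm_num)] at this
  have h5 : M.toReal = 0 := le_antisymm (by linarith) ENNReal.toReal_nonneg
  have h6 := ((ENNReal.toReal_eq_zero_iff _).1 h5).resolve_right hMfin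
  exact le_antisymm (h6 ▸ hle k) bot_le

theorem CC_null (S) (k : Pj) : volume (pr k '' CC S) = 0 := by
  have h1 : ∀ w, volume (pr k '' (PhiW w '' T0)) = 0 := by
    intro w
    have h2 : volume ((fun p : ℝ × ℝ => pr k (PhiW w (kap p.1))) '' (cantorSet ×ˢ univ)) = 0 := by
      refine addHaar_image_eq_zero_of_differentiableOn_of_addHaar_eq_zero volume ?_ ?_
      · exact ((pr_diff k).comp (((PhiW_diff w).comp kap_diff).comp differentiable_fst)).differentiableOn
      · rw [Measure.volume_eq_prod, Measure.prod_prod, cantor_null, zero_mul]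
    refine measure_mono_null ?_ h2
    rintro _ ⟨_, ⟨_, ⟨t, ht, rfl⟩, rfl⟩, rfl⟩
    exact ⟨(t, 0), ⟨ht, trivial⟩, rfl⟩
  have h3 : pr k '' CC S ⊆ pr k '' W ∪ ⋃ w, pr k '' (PhiW w '' T0) := by
    rintro _ ⟨x, hx | hx, rfl⟩
    · exact Or.inl ⟨x, hx, rfl⟩
    · obtain ⟨w, -, y, hy, rfl⟩ := mem_TT.1 hx
      exact Or.inr (mem_iUnion.2 ⟨w, _, ⟨y, hy, rfl⟩, rfl⟩)
  exact measure_mono_null h3 (measure_union_null (W_null k) (measure_iUnion_null h1))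

theorem CC_ae (S) (k : Pj) : ∀ᵐ x : ℝ, ∀ᵐ y : ℝ, (x, y) ∉ pr k '' CC S := by
  have := measure_eq_zero_iff_ae_notMem.1 (CC_null S k)
  rw [Measure.volume_eq_prod] at this
  exact Measure.ae_ae_of_ae_prod this

theorem ae_near {P : ℝ → Prop} (h : ∀ᵐ x : ℝ, P x) (a : ℝ) {r : ℝ} (hr : 0 < r) : ∃ x, P x ∧ |x - a| < r := by
  obtain ⟨x, hx, hxr⟩ := (Measure.dense_of_ae h).exists_mem_open (isOpen_ball (x := a) (ε := r)) ⟨a, mem_ball_self hr⟩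
  exact ⟨x, hx, by simpa [Real.dist_eq] using hxr⟩

theorem box_joined (S) {A B D : Set ℝ} (hA : IsOpen A) (hB : IsOpen B) (hD : IsOpen D)
    (cA : Convex ℝ A) (cB : Convex ℝ B) (cD : Convex ℝ D) {a b : E}
    (ha : a ∈ (A ×ˢ B ×ˢ D) \ CC S) (hb : b ∈ (A ×ˢ B ×ˢ D) \ CC S) :
    JoinedIn ((A ×ˢ B ×ˢ D) \ CC S) a b := by
  set U : Set E := A ×ˢ B ×ˢ D with hU
  have hUo : IsOpen U := hA.prod (hB.prod hD)
  have hUc : Convex ℝ U := cA.prod (cB.prod cD)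
  have hUC : IsOpen (U \ CC S) := hUo.sdiff (CC_closed S)
  obtain ⟨r, hr, hra⟩ := Metric.isOpen_iff.1 hUC a ha
  obtain ⟨r', hr', hrb⟩ := Metric.isOpen_iff.1 hUC b hb
  obtain ⟨x', ⟨hx1, hx2⟩, hx'⟩ := ae_near ((CC_ae S .xz).and (CC_ae S .xy)) b.1 hr'
  obtain ⟨y, hy, hyr⟩ := ae_near (CC_ae S .yz) a.2.1 hr
  obtain ⟨z, ⟨hz1, hz2⟩, hzr⟩ := ae_near (hx1.and hy) a.2.2 hr
  obtain ⟨y', hy', hyr'⟩ := ae_near hx2 b.2.1 hr'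
  have ha' : ((a.1, y, z) : E) ∈ ball a r := by
    rw [mem_ball, dist_E]; simp [hr, hyr, hzr]
  have hb' : ((x', y', b.2.2) : E) ∈ ball b r' := by
    rw [mem_ball, dist_E]; simp [hr', hx', hyr']
  have ua := (hra ha').1
  have ub := (hrb hb').1
  simp only [hU, mem_prod] at ua ub
  have m1 : ((x', y, z) : E) ∈ U := ⟨ub.1, ua.2.1, ua.2.2⟩
  have m2 : ((x', y', z) : E) ∈ U := ⟨ub.1, ub.2.1, ua.2.2⟩
  have j1 : JoinedIn (U \ CC S) a (a.1, y, z) :=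
    joined_seg (((convex_ball a r).segment_subset (mem_ball_self hr) ha').trans hra)
  have j5 : JoinedIn (U \ CC S) (x', y', b.2.2) b :=
    joined_seg (((convex_ball b r').segment_subset hb' (mem_ball_self hr')).trans hrb)
  have j2 : JoinedIn (U \ CC S) (a.1, y, z) (x', y, z) := by
    refine joined_seg fun p hp => ⟨hUc.segment_subset (hra ha').1 m1 hp, fun hC => hz2 ⟨p, hC, ?_⟩⟩
    obtain ⟨t, -, -, e1, e2, e3⟩ := seg_mem hp
    simp [pr, e2, e3]
  have j3 : JoinedIn (U \ CC S) (x', y, z) (x', y', z) := by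
    refine joined_seg fun p hp => ⟨hUc.segment_subset m1 m2 hp, fun hC => hz1 ⟨p, hC, ?_⟩⟩
    obtain ⟨t, -, -, e1, e2, e3⟩ := seg_mem hp
    simp [pr, e1, e3]
  have j4 : JoinedIn (U \ CC S) (x', y', z) (x', y', b.2.2) := by
    refine joined_seg fun p hp => ⟨hUc.segment_subset m2 (hrb hb').1 hp, fun hC => hy' ⟨p, hC, ?_⟩⟩
    obtain ⟨t, -, -, e1, e2, e3⟩ := seg_mem hp
    simp [pr, e1, e2]
  exact j1.trans (j2.trans (j3.trans (j4.trans j5)))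

theorem ball_E (x : E) (ε : ℝ) : ball x ε = ball x.1 ε ×ˢ ball x.2.1 ε ×ˢ ball x.2.2 ε := by
  rw [ball_prod_same, ball_prod_same]

theorem ball_conn (S) (x : E) (ε : ℝ) : IsPreconnected (ball x ε \ CC S) := by
  refine isPreconnected_of_forall_pair fun a ha b hb => ?_
  have : JoinedIn (ball x ε \ CC S) a b := by
    rw [ball_E] at *
    exact box_joined S isOpen_ball isOpen_ball isOpen_ball (convex_ball _ _) (convex_ball _ _) (convex_ball _ _) ha hb
  obtain ⟨γ, hγ⟩ := this
  exact ⟨range γ, by rintro _ ⟨t, rfl⟩; exact hγ t, ⟨0, by simp⟩, ⟨1, by simp⟩, isPreconnected_range γ.continuous⟩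

theorem CC_dense (S) : Dense (CC S)ᶜ := by
  intro x
  rw [Metric.mem_closure_iff]
  intro ε hε
  obtain ⟨y, hy, h1⟩ := ae_near (CC_ae S .xy) x.1 hε
  obtain ⟨z, hz, h2⟩ := ae_near hy x.2.1 hε
  refine ⟨(y, z, x.2.2), fun h => hz ⟨_, h, rfl⟩, ?_⟩
  rw [dist_comm, dist_E]; simp [hε, h1, h2]

theorem CC_empty : CC ∅ = W := by simp [CC, TT]

theorem Wc_pathConn : PathConnectedSpace ↥(Wᶜ) := by
  rw [← isPathConnected_iff_pathConnectedSpace]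
  have hd := CC_dense ∅
  rw [CC_empty] at hd
  obtain ⟨x, hx⟩ := hd.nonempty
  refine ⟨x, hx, fun {y} hy => ?_⟩
  have := box_joined ∅ (A := univ) (B := univ) (D := univ) isOpen_univ isOpen_univ isOpen_univ convex_univ convex_univ
    convex_univ (a := x) (b := y) (by simpa [CC_empty] using hx) (by simpa [CC_empty] using hy)
  refine this.mono ?_
  rw [CC_empty]; exact fun z hz => hz.2

theorem compl_ball_conn {R : ℝ} (hR : 0 ≤ R) : IsPreconnected (closedBall (0:E) R)ᶜ := by
  have h0 : IsConnected ({0}ᶜ : Set E) := isConnected_compl_singleton_of_one_lt_rank (by simp; norm_num) 0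
  have h1 : (closedBall (0:E) R)ᶜ = (fun x : E => (1 + R / ‖x‖) • x) '' {0}ᶜ := by
    ext y
    simp only [mem_compl_iff, mem_closedBall, dist_zero_right, not_le, mem_image, mem_singleton_iff]
    constructor
    · intro hy
      have hy0 : 0 < ‖y‖ := hR.trans_lt hy
      have hp : 0 < 1 - R/‖y‖ := by rw [sub_pos, div_lt_one hy0]; exact hy
      refine ⟨(1 - R/‖y‖) • y, ?_, ?_⟩
      · exact smul_ne_zero hp.ne' (norm_pos_iff.1 hy0)
      · rw [norm_smul, Real.norm_of_nonneg hp.le, smul_smul]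
        have h3 : ‖y‖ - R ≠ 0 := by linarith
        have : (1 + R / ((1 - R/‖y‖) * ‖y‖)) * (1 - R/‖y‖) = 1 := by
          have h4 : (1 - R/‖y‖) * ‖y‖ = ‖y‖ - R := by field_simp
          rw [h4]; field_simp; ring
        rw [this, one_smul]
    · rintro ⟨x, hx, rfl⟩
      have hx0 : 0 < ‖x‖ := norm_pos_iff.2 hx
      rw [norm_smul, Real.norm_of_nonneg (by positivity)]
      have : (1 + R/‖x‖) * ‖x‖ = ‖x‖ + R := by field_simp
      linarith
  rw [h1]
  refine h0.isPreconnected.image _ ?_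
  refine ContinuousOn.smul (ContinuousOn.add continuousOn_const (ContinuousOn.div continuousOn_const continuous_norm.continuousOn ?_)) continuousOn_id
  intro x hx; exact norm_ne_zero_iff.2 hx

end Ant

namespace Ant
open Filter Topology

theorem cluster_preconn {M X : Type*} [TopologicalSpace M] [TopologicalSpace X] [CompactSpace X] [T2Space X]
    (l : Filter M) (hl : ∀ U ∈ l, ∃ P ∈ l, P ⊆ U ∧ IsPreconnected P) (f : M → X) (hf : Continuous f) :
    IsPreconnected {x | MapClusterPt x l f} := by
  have hcl : IsClosed {x | MapClusterPt x l f} := isClosed_setOfPred_clusterPt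
  rw [isPreconnected_iff_subset_of_fully_disjoint_closed hcl]
  intro u v hu hv huv hd
  obtain ⟨O1, O2, ho1, ho2, h1, h2, hdO⟩ := normal_separation hu hv hd
  have h3 : map f l ≤ 𝓝ˢ {x | MapClusterPt x l f} :=
    isCompact_univ.le_nhdsSet_of_clusterPt univ_mem fun x _ hx => hx
  have h4 : O1 ∪ O2 ∈ map f l := h3 ((ho1.union ho2).mem_nhdsSet.2 (huv.trans (union_subset_union h1 h2)))
  obtain ⟨P, hP, hPs, hPc⟩ := hl _ h4
  have hfP : f '' P ⊆ O1 ∪ O2 := image_subset_iff.2 hPs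
  have hfc : IsPreconnected (f '' P) := hPc.image f hf.continuousOn
  have key : ∀ O O' : Set X, IsOpen O' → Disjoint O O' → f '' P ⊆ O → ∀ x, MapClusterPt x l f → x ∉ O' := by
    intro O O' hO' hdd hsub x hx hxO
    have h5 : O' ∈ 𝓝 x := hO'.mem_nhds hxO
    have h6 : O ∈ map f l := mem_of_superset (image_mem_map hP) hsub
    obtain ⟨z, hz1, hz2⟩ := (clusterPt_iff_nonempty.1 hx) h5 h6
    exact disjoint_left.1 hdd hz2 hz1
  by_cases hne : (f '' P ∩ O1).Nonempty
  · left
    have := hfc.subset_left_of_subset_union ho1 ho2 hdO hfP hne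
    intro x hx
    exact (huv hx).resolve_right fun hxv => key O1 O2 ho2 hdO this x hx (h2 hxv)
  · right
    have : f '' P ⊆ O2 := fun z hz => (hfP hz).resolve_left fun h => hne ⟨z, hz, h⟩
    intro x hx
    exact (huv hx).resolve_left fun hxu => key O2 O1 ho1 hdO.symm this x hx (h1 hxu)

theorem ext_exists {M M' X X' : Type*} [TopologicalSpace M] [TopologicalSpace M'] [TopologicalSpace X]
    [TopologicalSpace X'] [CompactSpace X'] [T2Space X'] [T2Space X]
    {i : M → X} {i' : M' → X'} (hi : IsOpenEmbedding i) (hd : DenseRange i) (hi' : IsOpenEmbedding i')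
    (hB : IsTotallyDisconnected (range i')ᶜ)
    (hLC : ∀ p, ∀ U ∈ 𝓝 p, ∃ V ∈ 𝓝 p, V ⊆ U ∧ IsPreconnected (i ⁻¹' V))
    (h : M ≃ₜ M') : ∃ g : X → X', Continuous g ∧ ∀ m, g (i m) = i' (h m) := by
  have di : IsDenseInducing i := ⟨hi.isInducing, hd⟩
  have hf : Continuous (fun m => i' (h m)) := hi'.continuous.comp h.continuous
  refine ⟨di.extend fun m => i' (h m), di.continuous_extend fun p => ?_, fun m => di.extend_eq hf m⟩
  by_cases hp : p ∈ range i
  · obtain ⟨m, rfl⟩ := hp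
    refine ⟨i' (h m), ?_⟩
    rw [← hi.isInducing.nhds_eq_comap]
    exact hf.tendsto m
  have hne : (comap i (𝓝 p)).NeBot := di.comap_nhds_neBot p
  have hpre : IsPreconnected {x | MapClusterPt x (comap i (𝓝 p)) fun m => i' (h m)} := by
    refine cluster_preconn _ ?_ _ hf
    intro U hU
    obtain ⟨t, ht, hs⟩ := mem_comap.1 hU
    obtain ⟨V, hV, hVs, hVc⟩ := hLC p t ht
    exact ⟨i ⁻¹' V, preimage_mem_comap hV, (preimage_mono hVs).trans hs, hVc⟩
  have hsub : {x | MapClusterPt x (comap i (𝓝 p)) fun m => i' (h m)} ⊆ (range i')ᶜ := by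
    rintro _ hx ⟨m', rfl⟩
    have hmp : i (h.symm m') ≠ p := fun e => hp ⟨_, e⟩
    obtain ⟨U, V, hU, hV, hmU, hpV, hUV⟩ := t2_separation hmp
    have h1 : (i') '' (h '' (i ⁻¹' U)) ∈ 𝓝 (i' m') := by
      refine (hi'.isOpenMap _ (h.isOpenMap _ (hU.preimage hi.continuous))).mem_nhds ?_
      exact ⟨m', ⟨h.symm m', hmU, by simp⟩, rfl⟩
    have h2 : (fun m => i' (h m)) '' (i ⁻¹' V) ∈ map (fun m => i' (h m)) (comap i (𝓝 p)) :=
      image_mem_map (preimage_mem_comap (hV.mem_nhds hpV))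
    obtain ⟨_, ⟨_, ⟨a, ha, rfl⟩, rfl⟩, ⟨b, hb, e⟩⟩ := (clusterPt_iff_nonempty.1 hx) h1 h2
    have : b = a := h.injective (hi'.injective e)
    subst this
    exact disjoint_left.1 hUV ha hb
  have hss := hB _ hsub hpre
  obtain ⟨q, hq⟩ : ∃ q, MapClusterPt q (comap i (𝓝 p)) fun m => i' (h m) := by
    obtain ⟨q, -, hq⟩ := isCompact_univ (X := X') (f := map (fun m => i' (h m)) (comap i (𝓝 p))) (by simp)
    exact ⟨q, hq⟩
  exact ⟨q, tendsto_nhds_of_unique_mapClusterPt fun x hx => hss hx hq⟩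

theorem ext_homeo {M M' X X' : Type*} [TopologicalSpace M] [TopologicalSpace M'] [TopologicalSpace X]
    [TopologicalSpace X'] [CompactSpace X'] [T2Space X'] [T2Space X] [CompactSpace X]
    {i : M → X} {i' : M' → X'} (hi : IsOpenEmbedding i) (hd : DenseRange i) (hi' : IsOpenEmbedding i')
    (hd' : DenseRange i')
    (hB : IsTotallyDisconnected (range i)ᶜ)
    (hB' : IsTotallyDisconnected (range i')ᶜ)
    (hLC : ∀ p, ∀ U ∈ 𝓝 p, ∃ V ∈ 𝓝 p, V ⊆ U ∧ IsPreconnected (i ⁻¹' V))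
    (hLC' : ∀ p, ∀ U ∈ 𝓝 p, ∃ V ∈ 𝓝 p, V ⊆ U ∧ IsPreconnected (i' ⁻¹' V))
    (h : M ≃ₜ M') : ∃ g : X ≃ₜ X', ∀ m, g (i m) = i' (h m) := by
  obtain ⟨g, hg, hgi⟩ := ext_exists hi hd hi' hB' hLC h
  obtain ⟨g', hg', hgi'⟩ := ext_exists hi' hd' hi hB hLC' h.symm
  have e1 : g' ∘ g = id := hd.equalizer (hg'.comp hg) continuous_id (by ext m; simp [hgi, hgi'])
  have e2 : g ∘ g' = id := hd'.equalizer (hg.comp hg') continuous_id (by ext m; simp [hgi, hgi'])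
  exact ⟨⟨⟨g, g', congrFun e1, congrFun e2⟩, hg, hg'⟩, hgi⟩

def ii (S : Set (List I)) (m : ↥(CC S)ᶜ) : OnePoint E := ((m : E) : OnePoint E)

theorem ii_open (S) : IsOpenEmbedding (ii S) :=
  OnePoint.isOpenEmbedding_coe.comp (CC_closed S).isOpen_compl.isOpenEmbedding_subtypeVal

theorem ii_dense (S) : DenseRange (ii S) :=
  OnePoint.isDenseEmbedding_coe.dense.comp (CC_dense S).denseRange_val OnePoint.continuous_coe

theorem ii_range (S) (x : E) : (x : OnePoint E) ∈ (range (ii S))ᶜ ↔ x ∈ CC S := by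
  simp [ii]

theorem V_ball : V ⊆ closedBall (0:E) 100 := by
  intro p hp
  obtain ⟨a1, a2, a3, a4, a5, a6, -⟩ := hp
  rw [mem_closedBall, dist_E]
  refine max_le ?_ (max_le ?_ ?_) <;> rw [abs_le] <;> constructor <;> simp <;> linarith

theorem ii_LC (S) (p : OnePoint E) (U) (hU : U ∈ 𝓝 p) : ∃ V ∈ 𝓝 p, V ⊆ U ∧ IsPreconnected (ii S ⁻¹' V) := by
  have hcoe : Topology.IsInducing (Subtype.val : ↥(CC S)ᶜ → E) := Topology.IsInducing.subtypeVal
  induction p using OnePoint.rec with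
  | infty =>
    obtain ⟨K, ⟨hK1, hK2⟩, hs⟩ := OnePoint.hasBasis_nhds_infty.mem_iff.1 hU
    obtain ⟨R, hR⟩ := hK2.isBounded.subset_closedBall (0:E)
    set R' := max R 100 with hR'
    refine ⟨(↑) '' (closedBall (0:E) R')ᶜ ∪ {OnePoint.infty}, ?_, ?_, ?_⟩
    · exact OnePoint.hasBasis_nhds_infty.mem_of_mem (i := closedBall (0:E) R') ⟨isClosed_closedBall, isCompact_closedBall _ _⟩
    · refine Subset.trans (union_subset_union_left _ (image_mono ?_)) hs
      exact compl_subset_compl.2 (hR.trans (closedBall_subset_closedBall (le_max_left _ _)))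
    · rw [← hcoe.isPreconnected_image]
      convert compl_ball_conn (R := R') (le_trans (by norm_num) (le_max_right _ _)) using 1
      ext x
      constructor
      · rintro ⟨m, hm, rfl⟩
        simpa [ii] using hm
      · intro hx
        refine ⟨⟨x, fun hC => hx ?_⟩, ?_, rfl⟩
        · exact closedBall_subset_closedBall (le_max_right _ _) (V_ball (CC_sub_V S hC))
        · simpa [ii] using hx
  | coe x =>
    rw [OnePoint.nhds_coe_eq, mem_map] at hU
    obtain ⟨ε, hε, hb⟩ := Metric.mem_nhds_iff.1 hU
    refine ⟨(↑) '' ball x ε, ?_, image_subset_iff.2 hb, ?_⟩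
    · rw [OnePoint.nhds_coe_eq]; exact image_mem_map (ball_mem_nhds x hε)
    · rw [← hcoe.isPreconnected_image]
      convert ball_conn S x ε using 1
      ext y
      constructor
      · rintro ⟨m, hm, rfl⟩
        refine ⟨?_, m.2⟩
        simpa [ii] using hm
      · intro hy
        exact ⟨⟨y, hy.2⟩, ⟨y, hy.1, rfl⟩, rfl⟩

theorem compl_V_open : IsOpen (((↑) '' V : Set (OnePoint E))ᶜ) :=
  OnePoint.isOpen_compl_image_coe.2 ⟨isClosed_V, V_compact⟩

theorem ii_tot (S) : IsTotallyDisconnected (range (ii S))ᶜ := by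
  intro A hA hc
  by_cases hinf : OnePoint.infty ∈ A
  · have : A ⊆ {OnePoint.infty} := by
      intro a ha
      by_contra hne
      induction a using OnePoint.rec with
      | infty => exact hne rfl
      | coe x =>
        obtain ⟨z, hz, hz1, hz2⟩ := hc _ _ compl_V_open OnePoint.isOpen_range_coe (by
          intro b hb
          induction b using OnePoint.rec with
          | infty => left; simp
          | coe y => right; exact ⟨y, rfl⟩) ⟨_, hinf, by simp⟩ ⟨_, ha, x, rfl⟩
        obtain ⟨y, rfl⟩ := hz2
        exact hz1 ⟨y, CC_sub_V S ((ii_range S y).1 (hA hz)), rfl⟩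
    exact subsingleton_singleton.anti this
  · have hA' : A = (↑) '' ((↑) ⁻¹' A : Set E) := by
      ext a
      constructor
      · intro ha
        induction a using OnePoint.rec with
        | infty => exact (hinf ha).elim
        | coe x => exact ⟨x, ha, rfl⟩
      · rintro ⟨x, hx, rfl⟩; exact hx
    rw [hA', OnePoint.isOpenEmbedding_coe.isInducing.isPreconnected_image] at hc
    rw [hA']
    refine (CC_tot S _ ?_ hc).image _
    intro x hx
    exact (ii_range S x).1 (hA hx)

theorem g_infty {S S'} (h : ↥(CC S)ᶜ ≃ₜ ↥(CC S')ᶜ) (g : OnePoint E ≃ₜ OnePoint E) (hg : ∀ m, g (ii S m) = ii S' (h m)) :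
    g OnePoint.infty = OnePoint.infty := by
  have hB : ∀ p, g p ∈ (range (ii S'))ᶜ → p ∈ (range (ii S))ᶜ := by
    rintro _ hp ⟨m, rfl⟩; exact hp ⟨_, (hg m).symm⟩
  have hB' : ∀ p, p ∈ (range (ii S))ᶜ → g p ∈ (range (ii S'))ᶜ := by
    rintro p hp ⟨m, hm⟩
    refine hp ⟨h.symm m, g.injective ?_⟩
    rw [hg, h.apply_symm_apply, hm]
  generalize hq : g OnePoint.infty = q
  induction q using OnePoint.rec with
  | infty => rfl
  | coe y =>
    exfalso
    have hy : y ∈ CC S' := (ii_range S' y).1 (hq ▸ hB' _ (by simp [ii]))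
    have hacc := (CC_perfect S').acc y hy
    rw [accPt_iff_nhds] at hacc
    have hO : g '' ((↑) '' V : Set (OnePoint E))ᶜ ∈ 𝓝 (y : OnePoint E) := by
      refine (g.isOpenMap _ compl_V_open).mem_nhds ⟨_, ?_, hq⟩
      simp
    rw [OnePoint.nhds_coe_eq, mem_map] at hO
    obtain ⟨y', ⟨⟨p, hp, hpe⟩, hy'⟩, hne⟩ := hacc _ hO
    have hpB := hB p (hpe ▸ (ii_range S' y').2 hy')
    induction p using OnePoint.rec with
    | infty => exact hne (OnePoint.coe_injective (hpe.symm.trans hq))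
    | coe x => exact hp ⟨x, CC_sub_V S ((ii_range S x).1 hpB), rfl⟩

theorem ext_E {S S'} (h : ↥(CC S)ᶜ ≃ₜ ↥(CC S')ᶜ) : ∃ φ : E ≃ₜ E, ∀ m : ↥(CC S)ᶜ, φ m = h m := by
  obtain ⟨g, hg⟩ := ext_homeo (ii_open S) (ii_dense S) (ii_open S') (ii_dense S') (ii_tot S) (ii_tot S')
    (ii_LC S) (ii_LC S') h
  have hinf := g_infty h g hg
  have h1 : ∀ x : E, ∃ y : E, g x = y := by
    intro x
    generalize hq : g x = q
    induction q using OnePoint.rec with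
    | infty => exact (OnePoint.coe_ne_infty x (g.injective (hq.trans hinf.symm))).elim
    | coe y => exact ⟨y, rfl⟩
  have h2 : ∀ x : E, ∃ y : E, g.symm x = y := by
    intro x
    generalize hq : g.symm x = q
    induction q using OnePoint.rec with
    | infty =>
      rw [g.symm_apply_eq, hinf] at hq
      exact (OnePoint.coe_ne_infty x hq).elim
    | coe y => exact ⟨y, rfl⟩
  choose f hf using h1
  choose f' hf' using h2
  refine ⟨⟨⟨f, f', ?_, ?_⟩, ?_, ?_⟩, ?_⟩
  · intro x; apply OnePoint.coe_injective; rw [← hf', ← hf, g.symm_apply_apply]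
  · intro x; apply OnePoint.coe_injective; rw [← hf, ← hf', g.apply_symm_apply]
  · rw [OnePoint.isOpenEmbedding_coe.isInducing.continuous_iff]
    exact (g.continuous.comp OnePoint.continuous_coe).congr hf
  · rw [OnePoint.isOpenEmbedding_coe.isInducing.continuous_iff]
    exact (g.symm.continuous.comp OnePoint.continuous_coe).congr hf'
  · intro m
    apply OnePoint.coe_injective
    exact (hf m).symm.trans (hg m)

end Ant

namespace Ant
open Filter Topology

theorem hom_of_map {X Y : Type} [TopologicalSpace X] [TopologicalSpace Y] (f : X ≃ₜ Y) {x y : X}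
    (γ γ' : Path x y) (h : (γ.map f.continuous).Homotopic (γ'.map f.continuous)) : γ.Homotopic γ' := by
  have := h.map (f.symm : C(Y, X))
  obtain ⟨F⟩ := this
  exact ⟨{ toFun := F
           continuous_toFun := by fun_prop
           map_zero_left := fun t => by simp
           map_one_left := fun t => by simp
           prop' := by
             rintro s t (rfl | rfl) <;> simp }⟩

def Wild (S : Set (List I)) (p : E) : Prop := ∀ U ∈ 𝓝 p, ∃ (a b : ↥(CC S)ᶜ) (γ γ' : Path a b),
  (∀ t, (γ t : E) ∈ U) ∧ (∀ t, (γ' t : E) ∈ U) ∧ ¬ γ.Homotopic γ'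

theorem N_dist {p q : E} (hp : p ∈ N) (hq : q ∈ N) : dist p q ≤ 202 := by
  obtain ⟨a1, a2, a3, a4, a5, a6, -⟩ := hp
  obtain ⟨b1, b2, b3, b4, b5, b6, -⟩ := hq
  rw [dist_E]
  refine max_le ?_ (max_le ?_ ?_) <;> rw [abs_le] <;> constructor <;> linarith

theorem wild_W (S) {p : E} (hp : p ∈ W) : Wild S p := by
  intro U hU
  obtain ⟨ε, hε, hb⟩ := Metric.mem_nhds_iff.1 hU
  obtain ⟨n, hn⟩ := exists_small (show (0:ℝ) < ε/2 by linarith)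
  obtain ⟨w, hw, y, hy, rfl⟩ := W_addr hp n
  obtain ⟨a, b, γ, γ', h1, h2, h3⟩ := loops w (CC S)ᶜ (CC_NV S w) (CC_W S)
  have key : PhiW w '' (N \ V) ⊆ U := by
    rintro _ ⟨z, hz, rfl⟩
    apply hb
    rw [Metric.mem_ball]
    have e1 := PhiW_lip w z y
    have e2 := N_dist hz.1 (V_sub_N (W_sub_V hy))
    rw [hw] at e1
    have : (0:ℝ) < (98/100)^n := by positivity
    nlinarith
  exact ⟨a, b, γ, γ', fun t => key (h1 t), fun t => key (h2 t), h3⟩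

theorem not_wild (S) {p : E} (hp : p ∉ W) : ¬ Wild S p := by
  intro h
  obtain ⟨ε, hε, hb⟩ := Metric.mem_nhds_iff.1 (W_closed.isOpen_compl.mem_nhds hp)
  obtain ⟨a, b, γ, γ', h1, h2, h3⟩ := h _ (Metric.ball_mem_nhds p hε)
  exact h3 (hom_convex S (convex_ball p ε) hb γ γ' h1 h2)

theorem wild_transfer {S S'} (h : ↥(CC S)ᶜ ≃ₜ ↥(CC S')ᶜ) (φ : E ≃ₜ E) (hφ : ∀ m : ↥(CC S)ᶜ, φ m = h m)
    {p : E} (hp : Wild S p) : Wild S' (φ p) := by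
  intro U hU
  obtain ⟨a, b, γ, γ', h1, h2, h3⟩ := hp _ (φ.continuous.continuousAt.preimage_mem_nhds hU)
  refine ⟨_, _, γ.map h.continuous, γ'.map h.continuous, fun t => ?_, fun t => ?_, fun hh => h3 (hom_of_map h _ _ hh)⟩
  · have := h1 t
    rw [mem_preimage, hφ] at this
    exact this
  · have := h2 t
    rw [mem_preimage, hφ] at this
    exact this

theorem W_transfer {S S'} (h : ↥(CC S)ᶜ ≃ₜ ↥(CC S')ᶜ) (φ : E ≃ₜ E) (hφ : ∀ m : ↥(CC S)ᶜ, φ m = h m)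
    {p : E} (hp : p ∈ W) : φ p ∈ W := by
  by_contra hh
  exact not_wild S' hh (wild_transfer h φ hφ (wild_W S hp))

theorem C_transfer {S S'} (h : ↥(CC S)ᶜ ≃ₜ ↥(CC S')ᶜ) (φ : E ≃ₜ E) (hφ : ∀ m : ↥(CC S)ᶜ, φ m = h m)
    {p : E} (hp : p ∈ CC S) : φ p ∈ CC S' := by
  by_contra hh
  have h1 := hφ (h.symm ⟨φ p, hh⟩)
  rw [h.apply_symm_apply] at h1
  have h2 := φ.injective h1
  exact (h.symm ⟨φ p, hh⟩).2 (by rw [h2]; exact hp)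

theorem homeo_F {F F' : Set E} (hF : IsClosed F) (hFW : F ⊆ W) (hF' : IsClosed F') (hFW' : F' ⊆ W)
    (h : ↥(CC (SF F))ᶜ ≃ₜ ↥(CC (SF F'))ᶜ) : ∃ φ : E ≃ₜ E, φ '' F = F' := by
  obtain ⟨φ, hφ⟩ := ext_E h
  have hs : ∀ m : ↥(CC (SF F'))ᶜ, φ.symm m = h.symm m := by
    intro m
    rw [φ.symm_apply_eq, hφ, h.apply_symm_apply]
  have key : ∀ {F F' : Set E}, IsClosed F → F ⊆ W → IsClosed F' → F' ⊆ W →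
      ∀ (h : ↥(CC (SF F))ᶜ ≃ₜ ↥(CC (SF F'))ᶜ) (φ : E ≃ₜ E), (∀ m : ↥(CC (SF F))ᶜ, φ m = h m) →
      (∀ m : ↥(CC (SF F'))ᶜ, φ.symm m = h.symm m) → φ '' F ⊆ F' := by
    intro F F' hF hFW hF' hFW' h φ hφ hs
    have hT : φ '' TT (SF F) ⊆ TT (SF F') := by
      rintro _ ⟨x, hx, rfl⟩
      have h1 : φ x ∈ CC (SF F') := C_transfer h φ hφ (Or.inr hx)
      refine h1.resolve_left fun h2 => ?_
      have h3 := W_transfer h.symm φ.symm hs h2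
      rw [φ.symm_apply_apply] at h3
      exact TT_disj_W _ hx h3
    rintro _ ⟨x, hx, rfl⟩
    rw [← closure_TT hF hFW] at hx
    rw [← closure_TT hF' hFW']
    refine ⟨W_transfer h φ hφ hx.1, closure_mono hT ?_⟩
    rw [← φ.image_closure]
    exact ⟨x, hx.2, rfl⟩
  refine ⟨φ, (key hF hFW hF' hFW' h φ hφ hs).antisymm ?_⟩
  have := key hF' hFW' hF hFW h.symm φ.symm hs (by simpa using hφ)
  intro y hy
  exact ⟨φ.symm y, this ⟨y, hy, rfl⟩, by simp⟩

end Ant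

namespace Ant
open Filter Topology

section rank
variable {ι : Type} [LinearOrder ι] [WellFoundedLT ι]

def DD (F : Set E) : ι → Set E :=
  WellFounded.fix (wellFounded_lt (α := ι)) fun a D => {y | y ∈ F ∧ ∀ b, (h : b < a) → AccPt y (𝓟 (D b h))}

theorem mem_DD {F : Set E} {a : ι} {y : E} : y ∈ DD F a ↔ y ∈ F ∧ ∀ b < a, AccPt y (𝓟 (DD F b)) := by
  rw [DD, WellFounded.fix_eq]; rfl

theorem DD_anti {F : Set E} {a b : ι} (h : b ≤ a) : DD F a ⊆ DD F b := by
  intro y hy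
  rw [mem_DD] at hy ⊢
  exact ⟨hy.1, fun c hc => hy.2 c (hc.trans_le h)⟩

theorem DD_local {F F' U : Set E} (hU : IsOpen U) (h : F ∩ U ⊆ F') (a : ι) :
    ∀ y ∈ U, y ∈ DD F a → y ∈ DD F' a := by
  induction a using WellFoundedLT.induction with
  | ind a ih =>
    intro y hyU hy
    rw [mem_DD] at hy ⊢
    refine ⟨h ⟨hy.1, hyU⟩, fun b hb => ?_⟩
    have h1 := hy.2 b hb
    rw [accPt_iff_nhds] at h1 ⊢
    intro O hO
    obtain ⟨z, ⟨hz1, hz2⟩, hz3⟩ := h1 (O ∩ U) (inter_mem hO (hU.mem_nhds hyU))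
    exact ⟨z, ⟨hz1.1, ih b hb z hz1.2 hz2⟩, hz3⟩

theorem DD_image (φ : E ≃ₜ E) {F : Set E} (a : ι) : ∀ y, y ∈ DD F a → φ y ∈ DD (φ '' F) a := by
  induction a using WellFoundedLT.induction with
  | ind a ih =>
    intro y hy
    rw [mem_DD] at hy ⊢
    refine ⟨⟨y, hy.1, rfl⟩, fun b hb => ?_⟩
    have h1 := hy.2 b hb
    rw [accPt_iff_nhds] at h1 ⊢
    intro O hO
    obtain ⟨z, ⟨hz1, hz2⟩, hz3⟩ := h1 (φ ⁻¹' O) (φ.continuous.continuousAt.preimage_mem_nhds hO)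
    exact ⟨φ z, ⟨hz1, ih b hb z hz2⟩, fun h => hz3 (φ.injective h)⟩

theorem DD_image' (φ : E ≃ₜ E) {F : Set E} (a : ι) {y} (h : y ∈ DD (φ '' F) a) : φ.symm y ∈ DD F a := by
  have := DD_image φ.symm a y h
  rwa [← image_comp, φ.symm_comp_self, image_id] at this

end rank

def pp : E := fp true
def ww (n : ℕ) : List I := List.replicate n (I.m true) ++ [I.m false]
def Glue (G : ℕ → Set E) : Set E := {pp} ∪ ⋃ n, PhiW (ww n) '' G n

theorem pp_W : pp ∈ W := fp_W true
theorem pp_N : pp ∈ N := V_sub_N (fp_V true)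

theorem PhiW_rep (n : ℕ) : PhiW (List.replicate n (I.m true)) pp = pp := by
  induction n with
  | zero => rfl
  | succ n ih => rw [List.replicate_succ, PhiW_cons, ih]; exact phi_fp true

theorem ww_len (n : ℕ) : (ww n).length = n + 1 := by simp [ww]

theorem pp_cell (n : ℕ) : pp ∉ PhiW (ww n) '' N := by
  rintro ⟨y, hy, h⟩
  rw [← PhiW_rep (n+1)] at h
  have := word_eq (by simp [ww]) hy pp_N h
  rw [ww, List.replicate_succ'] at this
  simp at this

theorem cell_disj {n m : ℕ} {x : E} (h : x ∈ PhiW (ww n) '' N) (h' : x ∈ PhiW (ww m) '' N) : n = m := by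
  wlog hnm : n ≤ m generalizing n m
  · exact (this h' h (by omega)).symm
  obtain ⟨y, hy, rfl⟩ := h
  obtain ⟨z, hz, e⟩ := h'
  obtain ⟨u, hu, -⟩ := word_comp (by rw [ww_len, ww_len]; omega) hy hz e.symm
  by_contra hne
  have hlt : n < m := by omega
  have h1 : (ww m)[n]? = some (I.m true) := by
    simp [ww, List.getElem?_append, hlt]
  rw [hu] at h1
  simp [ww] at h1

theorem cell_dist {n : ℕ} {x : E} (h : x ∈ PhiW (ww n) '' N) : dist x pp ≤ (98/100)^n * 202 := by
  obtain ⟨y, hy, rfl⟩ := h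
  rw [ww, PhiW_append]
  have h1 := PhiW_lip (List.replicate n (I.m true)) (PhiW [I.m false] y) pp
  rw [PhiW_rep, List.length_replicate] at h1
  refine h1.trans ?_
  gcongr
  exact N_dist (PhiW_N _ hy) pp_N

theorem exists_small' {ε : ℝ} (hε : 0 < ε) : ∃ n : ℕ, ∀ m ≥ n, (98/100 : ℝ)^m * 202 < ε := by
  obtain ⟨n, hn⟩ := exists_small (show (0:ℝ) < ε/2 by linarith)
  refine ⟨n, fun m hm => ?_⟩
  have := small_mono hm
  have : (0:ℝ) < (98/100)^m := by positivity
  linarith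

theorem Glue_cell {G : ℕ → Set E} (hG : ∀ n, G n ⊆ W) (n : ℕ) :
    Glue G ∩ PhiW (ww n) '' N ⊆ PhiW (ww n) '' G n := by
  rintro x ⟨hx | hx, hc⟩
  · rw [mem_singleton_iff] at hx
    subst hx
    exact absurd hc (pp_cell n)
  · obtain ⟨m, hm⟩ := mem_iUnion.1 hx
    have : n = m := cell_disj hc (image_mono ((hG m).trans (W_sub_V.trans V_sub_N)) hm)
    subst this
    exact hm

theorem Glue_W {G : ℕ → Set E} (hG : ∀ n, G n ⊆ W) : Glue G ⊆ W := by
  rintro x (hx | hx)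
  · rw [mem_singleton_iff] at hx
    subst hx
    exact pp_W
  · obtain ⟨m, y, hy, rfl⟩ := mem_iUnion.1 hx
    exact PhiW_W (hG m hy)

theorem Glue_closed {G : ℕ → Set E} (hG : ∀ n, G n ⊆ W) (hc : ∀ n, IsClosed (G n)) : IsClosed (Glue G) := by
  rw [← closure_subset_iff_isClosed]
  intro x hx
  by_cases hxp : x = pp
  · exact Or.inl hxp
  have hd : 0 < dist x pp := dist_pos.2 hxp
  obtain ⟨n, hn⟩ := exists_small' (show 0 < dist x pp / 2 by linarith)
  have hA : IsClosed (⋃ m ∈ Set.Iio n, PhiW (ww m) '' G m) :=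
    (Set.finite_Iio n).isClosed_biUnion fun m _ => (PhiW (ww m)).isClosedMap _ (hc m)
  have hs : Glue G ⊆ (⋃ m ∈ Set.Iio n, PhiW (ww m) '' G m) ∪ closedBall pp (dist x pp / 2) := by
    rintro z (hz | hz)
    · rw [mem_singleton_iff] at hz
      subst hz
      exact Or.inr (mem_closedBall_self (by linarith))
    · obtain ⟨m, hm⟩ := mem_iUnion.1 hz
      by_cases hmn : m < n
      · exact Or.inl (mem_biUnion (show m ∈ Set.Iio n from hmn) hm)
      · refine Or.inr ?_
        rw [mem_closedBall]
        exact (cell_dist (image_mono ((hG m).trans (W_sub_V.trans V_sub_N)) hm)).trans (hn m (by omega)).le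
  rcases closure_minimal hs (hA.union isClosed_closedBall) hx with h | h
  · obtain ⟨m, -, hm⟩ := mem_iUnion₂.1 h
    exact Or.inr (mem_iUnion.2 ⟨m, hm⟩)
  · rw [mem_closedBall] at h
    linarith

section fam
variable {ι : Type} [LinearOrder ι] [WellFoundedLT ι] (g : ι → ι → ℕ)

def FF : ι → Set E :=
  WellFounded.fix (wellFounded_lt (α := ι)) fun a D =>
    Glue fun n => {x | ∃ b, ∃ h : b < a, g a b = n.unpair.1 ∧ x ∈ D b h}

def GG (a : ι) (n : ℕ) : Set E := {x | ∃ b, b < a ∧ g a b = n.unpair.1 ∧ x ∈ FF g b}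

theorem FF_eq (a : ι) : FF g a = Glue (GG g a) := by
  rw [FF, WellFounded.fix_eq]; congr 1; funext n; ext x; simp only [GG, mem_ofPred_eq, exists_prop]; rfl

theorem FF_W (a : ι) : FF g a ⊆ W := by
  induction a using WellFoundedLT.induction with
  | ind a ih =>
    rw [FF_eq]
    refine Glue_W fun n => ?_
    rintro x ⟨b, hb, -, hx⟩
    exact ih b hb hx

theorem GG_W (a : ι) (n) : GG g a n ⊆ W := by
  rintro x ⟨b, hb, -, hx⟩
  exact FF_W g b hx

theorem GG_eq (hg : ∀ a, InjOn (g a) (Iio a)) {a b : ι} {n : ℕ} (hb : b < a) (h : g a b = n.unpair.1) : GG g a n = FF g b := by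
  ext x
  constructor
  · rintro ⟨c, hc, h', hx⟩
    rwa [← hg a hc hb (h'.trans h.symm)]
  · intro hx
    exact ⟨b, hb, h, hx⟩

theorem FF_closed (hg : ∀ a, InjOn (g a) (Iio a)) (a : ι) : IsClosed (FF g a) := by
  induction a using WellFoundedLT.induction with
  | ind a ih =>
    rw [FF_eq]
    refine Glue_closed (GG_W g a) fun n => ?_
    by_cases h : ∃ b < a, g a b = n.unpair.1
    · obtain ⟨b, hb, h⟩ := h
      rw [GG_eq g hg hb h]
      exact ih b hb
    · convert isClosed_empty
      ext x
      simp only [mem_empty_iff_false, iff_false]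
      rintro ⟨b, hb, h', -⟩
      exact h ⟨b, hb, h'⟩

theorem pp_DD (hg : ∀ a, InjOn (g a) (Iio a)) (a : ι) : ∀ c ≤ a, pp ∈ DD (FF g a) c := by
  induction a using WellFoundedLT.induction with
  | ind a ih =>
    intro c hc
    rw [mem_DD]
    refine ⟨by rw [FF_eq]; exact Or.inl rfl, fun d hd => ?_⟩
    have hda : d < a := hd.trans_le hc
    rw [accPt_iff_nhds]
    intro O hO
    obtain ⟨ε, hε, hb⟩ := Metric.mem_nhds_iff.1 hO
    obtain ⟨k, hk⟩ := exists_small' hε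
    set n := Nat.pair (g a d) k with hn
    have h1 : GG g a n = FF g d := GG_eq g hg hda (by rw [hn, Nat.unpair_pair])
    have h2 : PhiW (ww n) pp ∈ PhiW (ww n) '' N := ⟨_, pp_N, rfl⟩
    refine ⟨PhiW (ww n) pp, ⟨hb ?_, ?_⟩, fun h => ?_⟩
    · rw [mem_ball]
      exact (cell_dist h2).trans_lt (hk n (Nat.right_le_pair _ _))
    · refine DD_local (isOpen_PhiN (ww n)) (F := PhiW (ww n) '' FF g d) ?_ d _ h2
        (DD_image _ d _ (ih d hda d le_rfl))
      rw [FF_eq g a, ← h1]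
      exact inter_subset_left.trans fun x hx => Or.inr (mem_iUnion.2 ⟨n, hx⟩)
    · rw [h] at h2
      exact pp_cell n h2

theorem DD_empty (hg : ∀ a, InjOn (g a) (Iio a)) (a : ι) : ∀ c > a, ∀ y, y ∉ DD (FF g a) c := by
  induction a using WellFoundedLT.induction with
  | ind a ih =>
    have key : DD (FF g a) a ⊆ {pp} := by
      intro y hy
      by_contra hne
      have h1 : y ∈ FF g a := (mem_DD.1 hy).1
      rw [FF_eq] at h1
      obtain ⟨n, hn⟩ := mem_iUnion.1 (h1.resolve_left hne)
      obtain ⟨z, ⟨b, hb, h, hz⟩, e⟩ := id hn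
      have hc : y ∈ PhiW (ww n) '' N := image_mono ((GG_W g a n).trans (W_sub_V.trans V_sub_N)) hn
      have h2 := DD_local (isOpen_PhiN (ww n)) (F' := PhiW (ww n) '' FF g b)
        (by rw [FF_eq g a, ← GG_eq g hg hb h]; exact Glue_cell (GG_W g a) n) a y hc hy
      exact ih b hb a hb _ (DD_image' _ _ h2)
    intro c hc y hy
    have h1 : y = pp := key (DD_anti hc.le hy)
    have h2 := (mem_DD.1 hy).2 a hc
    rw [accPt_iff_nhds] at h2
    obtain ⟨z, hz, hne⟩ := h2 univ univ_mem
    exact hne ((key hz.2).trans h1.symm)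

theorem FF_lt (hg : ∀ a, InjOn (g a) (Iio a)) {a b : ι} (hab : a < b) (φ : E ≃ₜ E) (h : φ '' FF g a = FF g b) : False := by
  have h1 := pp_DD g hg b b le_rfl
  rw [← h] at h1
  exact DD_empty g hg a b hab _ (DD_image' φ b h1)

theorem FF_ne (hg : ∀ a, InjOn (g a) (Iio a)) {a b : ι} (hab : a ≠ b) (φ : E ≃ₜ E) (h : φ '' FF g a = FF g b) : False := by
  rcases lt_or_gt_of_ne hab with h1 | h1
  · exact FF_lt g hg h1 φ h
  · refine FF_lt g hg h1 φ.symm ?_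
    rw [← h, ← image_comp, φ.symm_comp_self, image_id]
end fam

end Ant

namespace Ant
open Filter Topology

def kR : E ≃ₜ R3 where
  toFun p := !₂[p.1, p.2.1, p.2.2]
  invFun x := (x 0, x 1, x 2)
  left_inv p := by simp
  right_inv x := by ext i; fin_cases i <;> simp
  continuous_toFun := by
    refine (PiLp.continuous_toLp 2 _).comp (continuous_pi fun i => ?_)
    fin_cases i <;> simp <;> fun_prop
  continuous_invFun := by fun_prop

def CR (S : Set (List I)) : Set R3 := kR '' CC S

def kC (S) : ↥(CC S)ᶜ ≃ₜ ↥(CR S)ᶜ :=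
  kR.subtype fun x => by simp [CR]

theorem CR_cantor (S) : IsCantorSubset (CR S) := by
  refine ⟨⟨kR (fp true), _, Or.inl (fp_W true), rfl⟩, (CC_compact S).image kR.continuous,
    ⟨kR.isClosedMap _ (CC_closed S), ?_⟩, ?_⟩
  · rw [preperfect_iff_nhds]
    rintro _ ⟨x, hx, rfl⟩ U hU
    obtain ⟨y, hy, hne⟩ := preperfect_iff_nhds.1 (CC_perfect S).acc x hx _
      (kR.continuous.continuousAt.preimage_mem_nhds hU)
    exact ⟨kR y, ⟨hy.1, y, hy.2, rfl⟩, fun h => hne (kR.injective h)⟩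
  · intro t ht hp x hx y hy
    have h1 := hp.image kR.symm kR.symm.continuous.continuousOn
    have h2 : kR.symm '' t ⊆ CC S := by
      rintro _ ⟨z, hz, rfl⟩
      obtain ⟨u, hu, rfl⟩ := ht hz
      simpa using hu
    exact kR.symm.injective (CC_tot S _ h2 h1 ⟨x, hx, rfl⟩ ⟨y, hy, rfl⟩)

theorem pi1_CR (S) (z : ↥(CR S)ᶜ) : Nonempty (FundamentalGroup ↥(CR S)ᶜ z ≃* FundamentalGroup ↥Wᶜ ⟨fp true + (1000, 0, 0), fun h => by
    have := (W_sub_V h).2.1; simp [fp] at this; norm_num at this⟩) := by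
  obtain ⟨e1⟩ := pi1_homeo (kC S).symm z
  obtain ⟨e2⟩ := pi1_CC S ((kC S).symm z)
  have := Wc_pathConn
  exact ⟨(e1.trans e2).trans (FundamentalGroup.fundamentalGroupMulEquivOfPathConnected _ _)⟩

theorem CR_not_sc (S) : ¬ SimplyConnectedSpace ↥(CR S)ᶜ := by
  intro h
  obtain ⟨a, b, γ, γ', -, -, h3⟩ := loops [] (CC S)ᶜ (CC_NV S []) (CC_W S)
  exact h3 (hom_of_map (kC S) _ _ (SimplyConnectedSpace.paths_homotopic _ _))

abbrev Om : Type := (Cardinal.aleph 1).ord.ToType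

theorem exists_g : ∃ g : Om → Om → ℕ, ∀ a, InjOn (g a) (Iio a) := by
  have h : ∀ a : Om, ∃ f : Om → ℕ, InjOn f (Iio a) := by
    intro a
    apply Set.countable_iff_exists_injOn.1
    rw [Cardinal.countable_iff_lt_aleph_one]
    simpa using Cardinal.mk_Iio_lt a
  choose g hg using h
  exact ⟨g, hg⟩

theorem unc_Om : Uncountable Om := by
  rw [← Cardinal.aleph0_lt_mk_iff]
  simp

theorem stmt_main :
    ∃ (ι : Type) (_ : Uncountable ι) (C : ι → Set R3),
      Function.Injective C ∧
      (∀ α, IsCantorSubset (C α)) ∧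
      (∀ α β (x : R3) (hx : x ∈ (C α)ᶜ) (y : R3) (hy : y ∈ (C β)ᶜ),
        Nonempty (FundamentalGroup ↥((C α)ᶜ) ⟨x, hx⟩ ≃*
          FundamentalGroup ↥((C β)ᶜ) ⟨y, hy⟩)) ∧
      (∀ α, ¬ SimplyConnectedSpace ↥((C α)ᶜ)) ∧
      (∀ α β, α ≠ β → IsEmpty (↥((C α)ᶜ) ≃ₜ ↥((C β)ᶜ))) := by
  obtain ⟨g, hg⟩ := exists_g
  have main : ∀ α β : Om, α ≠ β → IsEmpty (↥((CR (SF (FF g α)))ᶜ) ≃ₜ ↥((CR (SF (FF g β)))ᶜ)) := by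
    intro a b hab
    refine ⟨fun h => ?_⟩
    obtain ⟨φ, hφ⟩ := homeo_F (FF_closed g hg a) (FF_W g a) (FF_closed g hg b) (FF_W g b)
      (((kC _).trans h).trans (kC _).symm)
    exact FF_ne g hg hab φ hφ
  refine ⟨Om, unc_Om, fun a => CR (SF (FF g a)), ?_, fun a => CR_cantor _, ?_, fun a => CR_not_sc _, main⟩
  · intro a b hab
    by_contra hne
    exact (main a b hne).false (Homeomorph.setCongr (congrArg _ hab))
  · intro a b x hx y hy
    obtain ⟨e1⟩ := pi1_CR _ ⟨x, hx⟩
    obtain ⟨e2⟩ := pi1_CR _ ⟨y, hy⟩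
    exact ⟨e1.trans e2.symm⟩

end Ant

/-- There are uncountably many Cantor sets in ℝ³ whose complements are pairwise
nonhomeomorphic, not simply connected, and all have isomorphic fundamental groups. -/
theorem stmt_9 :
    ∃ (ι : Type) (_ : Uncountable ι) (C : ι → Set R3),
      Function.Injective C ∧
      (∀ α, IsCantorSubset (C α)) ∧
      (∀ α β (x : R3) (hx : x ∈ (C α)ᶜ) (y : R3) (hy : y ∈ (C β)ᶜ),
        Nonempty (FundamentalGroup ↥((C α)ᶜ) ⟨x, hx⟩ ≃*
          FundamentalGroup ↥((C β)ᶜ) ⟨y, hy⟩)) ∧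
      (∀ α, ¬ SimplyConnectedSpace ↥((C α)ᶜ)) ∧
      (∀ α β, α ≠ β → IsEmpty (↥((C α)ᶜ) ≃ₜ ↥((C β)ᶜ))) := by
  exact Ant.stmt_main
end
end

section
/- Let C₁ be a Cantor set in ℝ³ contained in the closed unit ball centered at (-2,0,0) with (-1,0,0) ∈ C₁, and let A be the straight segment from (-1,0,0) to (1,0,0). Let U = {p ∈ ℝ³ : p₀ < 1} \ (C₁ ∪ A). Then the fundamental group of U is isomorphic to the fundamental group of ℝ³ \ C₁. -/
open Metric Set

noncomputable section

/-- The straight segment from (-1,0,0) to (1,0,0). -/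
def segA : Set R3 := segment ℝ (pt (-1) 0 0) (pt 1 0 0)

/-- A continuous integer-valued real function takes equal values along a path. -/
lemma eq_of_joinedIn_of_int {O : Set R3} {v w : R3} (h : JoinedIn O v w) (f : R3 → ℝ)
    (hf : ContinuousOn f O) (hint : ∀ x ∈ O, ∃ n : ℤ, (n : ℝ) = f x) : f v = f w := by
  obtain ⟨γ, hγ⟩ := h
  choose n hn using fun t => hint (γ t) (hγ t)
  have hc : Continuous (fun t => f (γ t)) := by
    have := hf.comp_continuous γ.continuous hγ
    exact this
  have hnc : Continuous n := by
    rw [Int.isClosedEmbedding_coe_real.isInducing.continuous_iff]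
    have : ((fun k : ℤ => (k : ℝ)) ∘ n) = fun t => f (γ t) := by
      funext t; exact hn t
    rw [this]; exact hc
  have := PreconnectedSpace.constant (inferInstance) hnc (x := 0) (y := 1)
  have h0 := hn 0
  have h1 := hn 1
  rw [this] at h0
  simp only [γ.source, γ.target] at h0 h1
  rw [← h0, ← h1]

/-- Janiszewski-type lemma: if two disjoint closed sets do not separate `v` from `w`, neither does
their union. -/
lemma joinedIn_compl_union {K₁ K₂ : Set R3} (h₁ : IsClosed K₁) (h₂ : IsClosed K₂)
    (hd : Disjoint K₁ K₂) {v w : R3} (hv₁ : JoinedIn K₁ᶜ v w) (hv₂ : JoinedIn K₂ᶜ v w) :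
    JoinedIn (K₁ ∪ K₂)ᶜ v w := by
  classical
  by_contra hcon
  have hO : IsOpen (K₁ ∪ K₂)ᶜ := (h₁.union h₂).isOpen_compl
  have hvO : v ∈ (K₁ ∪ K₂)ᶜ := by
    rintro (h | h)
    · exact hv₁.source_mem h
    · exact hv₂.source_mem h
  have hwO : w ∈ (K₁ ∪ K₂)ᶜ := by
    rintro (h | h)
    · exact hv₁.target_mem h
    · exact hv₂.target_mem h
  set O := (K₁ ∪ K₂)ᶜ with hOdef
  set W : Set R3 := {x | x ∈ O ∧ ¬ JoinedIn O v x} with hW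
  have hwW : w ∈ W := ⟨hwO, hcon⟩
  have hvW : v ∉ W := fun h => h.2 (JoinedIn.refl hvO)
  have hVo : IsOpen {x | JoinedIn O v x} := hO.pathComponentIn v
  -- the frontier of `W` lies in `K₁ ∪ K₂`
  have hWo : IsOpen W := by
    rw [isOpen_iff_mem_nhds]
    rintro x ⟨hxO, hx⟩
    have : pathComponentIn O x ∈ nhds x := (hO.pathComponentIn x).mem_nhds (JoinedIn.refl hxO)
    filter_upwards [this] with y hy
    exact ⟨hy.target_mem, fun h => hx (h.trans hy.symm)⟩
  have hfr : frontier W ⊆ K₁ ∪ K₂ := by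
    intro x hx
    by_contra hxO
    rw [hWo.frontier_eq] at hx
    have hxV : JoinedIn O v x := by
      by_contra h
      exact hx.2 ⟨hxO, h⟩
    obtain ⟨y, hy, hyW⟩ := mem_closure_iff.1 hx.1 _ hVo hxV
    exact hyW.2 hy
  obtain ⟨φ, hφ₁, hφ₂, -⟩ := exists_continuous_zero_one_of_isClosed h₁ h₂ hd
  -- the circle-valued map
  let g : R3 → AddCircle (1 : ℝ) := fun x => if x ∈ W then ((φ x : ℝ) : AddCircle (1 : ℝ)) else 0
  have hg : Continuous g := by
    refine Continuous.if ?_ ?_ continuous_const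
    · intro x hx
      rcases hfr hx with h | h
      · rw [hφ₁ h]; simp
      · rw [hφ₂ h]; simp
    · exact (AddCircle.continuous_mk' 1).comp φ.continuous
  have hgv : g v = 0 := by simp [g, hvW]
  obtain ⟨h, ⟨-, hh⟩, -⟩ := (AddCircle.isCoveringMap_coe (1 : ℝ)).existsUnique_continuousMap_lifts
    ⟨g, hg⟩ v 0 (by simp [hgv])
  have hh' : ∀ x, ((h x : ℝ) : AddCircle (1 : ℝ)) = g x := fun x => congrFun hh x
  have key : ∀ x (a : ℝ), g x = (a : AddCircle (1 : ℝ)) → ∃ n : ℤ, (n : ℝ) = h x - a := by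
    intro x a hx
    have : ((h x - a : ℝ) : AddCircle (1 : ℝ)) = 0 := by
      rw [AddCircle.coe_sub, hh', hx, sub_self]
    obtain ⟨n, hn⟩ := (AddCircle.coe_eq_zero_iff 1).1 this
    exact ⟨n, by simpa using hn⟩
  have e2 := eq_of_joinedIn_of_int hv₂ (fun x => h x - if x ∈ W then φ x else 0) (by
      refine h.continuous.continuousOn.sub ?_
      refine ContinuousOn.if ?_ φ.continuous.continuousOn continuousOn_const
      rintro x ⟨hx, hx'⟩
      rcases hfr hx' with h | h
      · exact hφ₁ h
      · exact absurd h hx)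
    (by
      intro x _
      apply key
      by_cases hx : x ∈ W <;> simp [g, hx])
  have e1 := eq_of_joinedIn_of_int hv₁ (fun x => h x - if x ∈ W then φ x - 1 else 0) (by
      refine h.continuous.continuousOn.sub ?_
      refine ContinuousOn.if ?_ (φ.continuous.sub continuous_const).continuousOn continuousOn_const
      rintro x ⟨hx, hx'⟩
      rcases hfr hx' with h | h
      · exact absurd h hx
      · rw [hφ₂ h]; simp)
    (by
      intro x _
      apply key
      by_cases hx : x ∈ W
      · have : ((φ x - 1 : ℝ) : AddCircle (1 : ℝ)) = (φ x : ℝ) := by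
          rw [AddCircle.coe_sub, AddCircle.coe_period, sub_zero]
        simp only [g, hx, if_true, this]
      · simp [g, hx])
  simp only [hvW, hwW, if_true, if_false] at e1 e2
  linarith

/-- The complement of a compact totally disconnected set in ℝ³ is path connected. -/
lemma joinedIn_compl_of_totallyDisconnected {C : Set R3} (hC : IsCompact C)
    (hT : IsTotallyDisconnected C) {v w : R3} (hv : v ∉ C) (hw : w ∉ C) : JoinedIn Cᶜ v w := by
  by_contra hcon
  let S : Set (Set R3) := {K | IsClosed K ∧ K ⊆ C ∧ ¬ JoinedIn Kᶜ v w}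
  obtain ⟨K, -, hK⟩ := zorn_superset_nonempty S (by
    intro c hcS hc hne
    refine ⟨⋂₀ c, ⟨isClosed_sInter fun K hK => (hcS hK).1, ?_, ?_⟩, fun s hs => sInter_subset_of_mem hs⟩
    · obtain ⟨K, hK⟩ := hne
      exact (sInter_subset_of_mem hK).trans (hcS hK).2.1
    · rintro ⟨γ, hγ⟩
      have hγc : IsCompact (range γ) := isCompact_range γ.continuous
      have : Nonempty ((fun K => range γ ∩ K) '' c) := (hne.image _).to_subtype
      have := IsCompact.nonempty_sInter_of_directed_nonempty_isCompact_isClosed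
        (S := (fun K => range γ ∩ K) '' c) (by
          rintro _ ⟨K, hK, rfl⟩ _ ⟨L, hL, rfl⟩
          rcases hc.total hK hL with h | h
          · exact ⟨_, ⟨K, hK, rfl⟩, subset_rfl, inter_subset_inter_right _ h⟩
          · exact ⟨_, ⟨L, hL, rfl⟩, inter_subset_inter_right _ h, subset_rfl⟩)
        (by
          rintro _ ⟨K, hK, rfl⟩
          by_contra hemp
          apply (hcS hK).2.2
          refine ⟨γ, fun t ht => hemp ⟨γ t, mem_range_self t, ht⟩⟩)
        (by
          rintro _ ⟨K, hK, rfl⟩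
          exact hγc.inter_right (hcS hK).1)
        (by
          rintro _ ⟨K, hK, rfl⟩
          exact hγc.isClosed.inter (hcS hK).1)
      obtain ⟨x, hx⟩ := this
      rw [mem_sInter] at hx
      obtain ⟨K, hK⟩ := hne
      obtain ⟨t, rfl⟩ := (hx _ ⟨K, hK, rfl⟩).1
      exact hγ t (fun L hL => (hx _ ⟨L, hL, rfl⟩).2)) C ⟨hC.isClosed, subset_rfl, hcon⟩
  obtain ⟨hKc, hKC, hKs⟩ := hK.prop
  have hconn : IsPreconnected K := by
    rw [isPreconnected_iff_subset_of_fully_disjoint_closed hKc]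
    intro a b ha hb hab hd
    by_contra! hne
    have h1 : JoinedIn (K ∩ a)ᶜ v w := by
      by_contra h
      exact hne.1 ((hK.le_of_le (y := K ∩ a)
        ⟨hKc.inter ha, inter_subset_left.trans hKC, h⟩ inter_subset_left).trans inter_subset_right)
    have h2 : JoinedIn (K ∩ b)ᶜ v w := by
      by_contra h
      exact hne.2 ((hK.le_of_le (y := K ∩ b)
        ⟨hKc.inter hb, inter_subset_left.trans hKC, h⟩ inter_subset_left).trans inter_subset_right)
    have := joinedIn_compl_union (hKc.inter ha) (hKc.inter hb)
      (hd.mono inter_subset_right inter_subset_right) h1 h2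
    rw [← inter_union_distrib_left, inter_eq_left.2 hab] at this
    exact hKs this
  have hsub := hT K hKC hconn
  have hvK : v ∉ K := fun h => hv (hKC h)
  have hwK : w ∉ K := fun h => hw (hKC h)
  rcases hsub.eq_empty_or_singleton with h | ⟨x, h⟩
  · apply hKs
    rw [h, compl_empty]
    exact joinedIn_univ.2 (PathConnectedSpace.joined v w)
  · apply hKs
    rw [h] at hvK hwK ⊢
    refine (isPathConnected_compl_singleton_of_one_lt_rank ?_ x).joinedIn _ hvK _ hwK
    rw [← Module.finrank_eq_rank]
    simp

/-- General position: a continuous map from a space of dimension less than three can be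
pushed off a point `p`, changing it only near `p`. -/
lemma exists_avoid {F : Type} [NormedAddCommGroup F] [NormedSpace ℝ F] [FiniteDimensional ℝ F]
    (hF : Module.finrank ℝ F < 3) (f : F → R3) (hf : Continuous f) (p : R3) {ε : ℝ} (hε : 0 < ε) :
    ∃ f' : F → R3, Continuous f' ∧ (∀ x, f' x ≠ p) ∧ (∀ x, ε ≤ dist (f x) p → f' x = f x) ∧
      (∀ x, dist (f x) p < ε → dist (f' x) p < 2 * ε) := by
  obtain ⟨g₀, hg₀⟩ := exists_contMDiffMap_forall_mem_convex_of_local_const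
    (modelWithCornersSelf ℝ F) (n := 1) (t := fun x => ball (f x) (ε / 8))
    (fun x => convex_ball _ _) (fun x => ⟨f x, by
      have : ContinuousAt f x := hf.continuousAt
      filter_upwards [this (ball_mem_nhds (f x) (by positivity : 0 < ε / 8))] with y hy
      rw [mem_ball, dist_comm]; exact hy⟩)
  have hgs : ContDiff ℝ 1 g₀ := g₀.contMDiff.contDiff
  have hdense := hgs.dense_compl_range_of_finrank_lt_finrank (by simpa using hF)
  obtain ⟨q, hq, hqp⟩ := hdense.exists_dist_lt p (by positivity : 0 < ε / 8)
  let h : F → R3 := fun x => g₀ x + (p - q) - f x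
  have hh : Continuous h := (hgs.continuous.add continuous_const).sub hf
  have hhn : ∀ x, ‖h x‖ ≤ ε / 4 := by
    intro x
    have h1 : ‖g₀ x - f x‖ < ε / 8 := by rw [← dist_eq_norm]; exact hg₀ x
    have h2 : ‖p - q‖ < ε / 8 := by rw [← dist_eq_norm]; exact hqp
    have : h x = (g₀ x - f x) + (p - q) := by simp only [h]; abel
    rw [this]
    linarith [norm_add_le (g₀ x - f x) (p - q)]
  let lam : F → ℝ := fun x => max 0 (min 1 (2 - 2 * dist (f x) p / ε))
  have hl : Continuous lam := by fun_prop
  have hl0 : ∀ x, 0 ≤ lam x := fun x => le_max_left _ _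
  have hl1 : ∀ x, lam x ≤ 1 := fun x => max_le zero_le_one (min_le_left _ _)
  have hln : ∀ x, ‖lam x • h x‖ ≤ ε / 4 := by
    intro x
    rw [norm_smul, Real.norm_of_nonneg (hl0 x)]
    nlinarith [hhn x, hl1 x, hl0 x, norm_nonneg (h x)]
  refine ⟨fun x => f x + lam x • h x, by fun_prop, ?_, ?_, ?_⟩
  · intro x hx
    replace hx : f x + lam x • h x = p := hx
    by_cases hd : dist (f x) p ≤ ε / 2
    · have : lam x = 1 := by
        have : 2 * dist (f x) p / ε ≤ 1 := by rw [div_le_one hε]; linarith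
        simp only [lam]
        rw [min_eq_left (by linarith), max_eq_right zero_le_one]
      rw [this, one_smul] at hx
      apply hq
      refine ⟨x, ?_⟩
      simp only [h] at hx
      have h3 : g₀ x - q = 0 := by
        have : f x + (g₀ x + (p - q) - f x) - p = 0 := by rw [hx, sub_self]
        rw [← this]; abel
      exact sub_eq_zero.1 h3
    · push Not at hd
      have : f x - p = - (lam x • h x) := by
        rw [← hx]; abel
      rw [dist_eq_norm, this, norm_neg] at hd
      linarith [hln x]
  · intro x hx
    have : lam x = 0 := by
      have : 2 ≤ 2 * dist (f x) p / ε := by rw [le_div_iff₀ hε]; linarith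
      simp only [lam]
      exact max_eq_left ((min_le_right _ _).trans (by linarith))
    simp [this]
  · intro x hx
    rw [dist_eq_norm] at hx ⊢
    have : f x + lam x • h x - p = (f x - p) + lam x • h x := by abel
    rw [this]
    linarith [norm_add_le (f x - p) (lam x • h x), hln x]

/-- Removing a point from an open subset of ℝ³ does not change the fundamental group. -/
lemma fundamentalGroup_remove_point (M N : Set R3) (hM : IsOpen M) (p : R3) (hp : p ∈ M)
    (hN : N = M \ {p}) (x : R3) (hxN : x ∈ N) (hxM : x ∈ M) :
    Nonempty (FundamentalGroup N ⟨x, hxN⟩ ≃* FundamentalGroup M ⟨x, hxM⟩) := by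
  have hNM : N ⊆ M := by rw [hN]; exact sdiff_subset
  let ι : C(N, M) := ⟨Set.inclusion hNM, continuous_inclusion hNM⟩
  obtain ⟨ε₀, hε₀, hball⟩ := Metric.isOpen_iff.1 hM p hp
  have hne : ∀ y ∈ N, y ≠ p := by rw [hN]; exact fun y hy => hy.2
  have hmem : ∀ y ∈ M, y ≠ p → y ∈ N := by rw [hN]; exact fun y hy hy' => ⟨hy, hy'⟩
  -- stay in `M`
  have stay : ∀ ε, 2 * ε ≤ ε₀ → ∀ {F : Type} (f f' : F → R3) , (∀ x, f x ∈ M) →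
      (∀ x, ε ≤ dist (f x) p → f' x = f x) → (∀ x, dist (f x) p < ε → dist (f' x) p < 2 * ε) →
      0 < ε → ∀ x, segment ℝ (f x) (f' x) ⊆ M := by
    intro ε hε F f f' hfM h1 h2 hε0 x
    by_cases hd : ε ≤ dist (f x) p
    · rw [h1 x hd, segment_same]; exact singleton_subset_iff.2 (hfM x)
    · push Not at hd
      refine ((convex_ball p ε₀).segment_subset ?_ ?_).trans hball
      · rw [mem_ball]; linarith
      · rw [mem_ball]; linarith [h2 x hd]
  refine ⟨MulEquiv.ofBijective (FundamentalGroup.map ι ⟨x, hxN⟩) ⟨?_, ?_⟩⟩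
  · -- injective
    intro a b hab
    induction a using Path.Homotopic.Quotient.ind with | mk a => ?_
    induction b using Path.Homotopic.Quotient.ind with | mk b => ?_
    have hab' : (a.map ι.continuous).Homotopic (b.map ι.continuous) :=
      Path.Homotopic.Quotient.exact hab
    refine Path.Homotopic.Quotient.eq.2 ?_
    obtain ⟨H⟩ := hab'
    -- distance to p
    have hdist : ∀ γ : Path (⟨x, hxN⟩ : N) ⟨x, hxN⟩, ∃ δ > 0, ∀ t, δ ≤ dist (γ t : R3) p := by
      intro γ
      have hc : Continuous fun t => dist (γ t : R3) p := by fun_prop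
      obtain ⟨t₀, -, ht₀⟩ := isCompact_univ.exists_isMinOn univ_nonempty hc.continuousOn
      exact ⟨_, dist_pos.2 (hne _ (γ t₀).2), fun t => ht₀ (mem_univ t)⟩
    obtain ⟨δa, hδa, ha⟩ := hdist a
    obtain ⟨δb, hδb, hb⟩ := hdist b
    let ε := min (min δa δb) (ε₀ / 2)
    have hε : 0 < ε := by simp only [ε]; positivity
    have hεa : ε ≤ δa := (min_le_left _ _).trans (min_le_left _ _)
    have hεb : ε ≤ δb := (min_le_left _ _).trans (min_le_right _ _)
    have hε2 : 2 * ε ≤ ε₀ := by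
      have : ε ≤ ε₀ / 2 := min_le_right _ _
      linarith
    let f : ℝ × ℝ → R3 := fun s => (H (projIcc 0 1 zero_le_one s.1, projIcc 0 1 zero_le_one s.2) : M)
    have hf : Continuous f := by
      refine continuous_subtype_val.comp (H.continuous.comp ?_)
      exact (continuous_projIcc.comp continuous_fst).prodMk (continuous_projIcc.comp continuous_snd)
    obtain ⟨f', hfcont, hfavoid, hf1, hf2⟩ := exists_avoid (by simp) f hf p hε
    have hM' : ∀ s, f' s ∈ M := fun s =>
      stay ε hε2 f f' (fun s => Subtype.coe_prop _) hf1 hf2 hε s (right_mem_segment ℝ _ _)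
    have hfval : ∀ s t : unitInterval, f (s, t) = (H (s, t) : M) := by
      intro s t; simp [f]
    let G : C(unitInterval × unitInterval, N) :=
      ⟨fun s => ⟨f' (s.1, s.2), hmem _ (hM' _) (hfavoid _)⟩, by
        refine Continuous.subtype_mk (hfcont.comp ?_) _
        fun_prop⟩
    have hG : ∀ s t : unitInterval, (ε ≤ dist (H (s, t) : R3) p) → (G (s, t) : R3) = H (s, t) := by
      intro s t h
      rw [← hfval] at h ⊢
      exact hf1 _ h
    have hx : ε ≤ dist x p := by
      have := ha 0
      simp only [Path.source] at this
      exact hεa.trans this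
    refine ⟨⟨⟨G, ?_, ?_⟩, ?_⟩⟩
    · intro t
      apply Subtype.ext
      have h0 : (H (0, t) : R3) = a t := by rw [H.apply_zero]; rfl
      have := hG 0 t (by rw [h0]; exact hεa.trans (ha t))
      rw [h0] at this
      exact this
    · intro t
      apply Subtype.ext
      have h0 : (H (1, t) : R3) = b t := by rw [H.apply_one]; rfl
      have := hG 1 t (by rw [h0]; exact hεb.trans (hb t))
      rw [h0] at this
      exact this
    · rintro s t (rfl | rfl)
      · apply Subtype.ext
        have h0 : (H (s, 0) : R3) = x := by rw [Path.Homotopy.source H s]; rfl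
        have := hG s 0 (by rw [h0]; exact hx)
        rw [h0] at this
        refine this.trans ?_
        simp
      · apply Subtype.ext
        have h0 : (H (s, 1) : R3) = x := by rw [Path.Homotopy.target H s]; rfl
        have := hG s 1 (by rw [h0]; exact hx)
        rw [h0] at this
        refine this.trans ?_
        simp
  · -- surjective
    intro b
    induction b using Path.Homotopic.Quotient.ind with | mk b => ?_
    let ε := min (dist x p) (ε₀ / 2)
    have hε : 0 < ε := lt_min (dist_pos.2 (hne x hxN)) (by positivity)
    have hεx : ε ≤ dist x p := min_le_left _ _
    have hε2 : 2 * ε ≤ ε₀ := by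
      have : ε ≤ ε₀ / 2 := min_le_right _ _
      linarith
    let f : ℝ → R3 := fun s => (b (projIcc 0 1 zero_le_one s) : M)
    have hf : Continuous f :=
      continuous_subtype_val.comp (b.continuous.comp continuous_projIcc)
    obtain ⟨f', hfcont, hfavoid, hf1, hf2⟩ := exists_avoid (by simp) f hf p hε
    have hseg : ∀ s, segment ℝ (f s) (f' s) ⊆ M := 
      stay ε hε2 f f' (fun s => Subtype.coe_prop _) hf1 hf2 hε
    have hfval : ∀ s : unitInterval, f s = (b s : M) := by
      intro s; simp [f]
    have hM' : ∀ s, f' s ∈ M := fun s => hseg s (right_mem_segment ℝ _ _)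
    have hf0 : f 0 = x := by have := hfval 0; simpa using this
    have hfe : f 1 = x := by have := hfval 1; simpa using this
    have hfz : f' 0 = x := by rw [hf1 0 (by rw [hf0]; exact hεx), hf0]
    have hfo : f' 1 = x := by rw [hf1 1 (by rw [hfe]; exact hεx), hfe]
    let a : Path (⟨x, hxN⟩ : N) ⟨x, hxN⟩ :=
      { toFun := fun s => ⟨f' s, hmem _ (hM' _) (hfavoid _)⟩
        continuous_toFun := by
          refine Continuous.subtype_mk (hfcont.comp ?_) _
          fun_prop
        source' := by apply Subtype.ext; simpa using hfz
        target' := by apply Subtype.ext; simpa using hfo }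
    refine ⟨Path.Homotopic.Quotient.mk a, ?_⟩
    have goal : (a.map ι.continuous).Homotopic b := by
      symm
      let G : C(unitInterval × unitInterval, M) :=
        ⟨fun s => ⟨AffineMap.lineMap (f s.2) (f' s.2) (s.1 : ℝ), hseg _ (by
            rw [segment_eq_image_lineMap]; exact ⟨_, s.1.2, rfl⟩)⟩, by
          refine Continuous.subtype_mk ?_ _
          simp only [AffineMap.lineMap_apply_module]
          fun_prop⟩
      have hGe : ∀ s t : unitInterval,
        (G (s, t) : R3) = AffineMap.lineMap (f t) (f' t) (s : ℝ) := fun s t => rfl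
      refine ⟨⟨⟨G, ?_, ?_⟩, ?_⟩⟩
      · intro t
        apply Subtype.ext
        refine (hGe 0 t).trans ?_
        simpa using hfval t
      · intro t
        apply Subtype.ext
        refine (hGe 1 t).trans ?_
        simp only [Icc.coe_one, AffineMap.lineMap_apply_one]
        rfl
      · rintro s t (rfl | rfl)
        · apply Subtype.ext
          refine (hGe s 0).trans ?_
          simp [hf0, hfz]
        · apply Subtype.ext
          refine (hGe s 1).trans ?_
          simp [hfe, hfo]
    exact Path.Homotopic.Quotient.eq.2 goal

/-- Homotopy equivalences induce isomorphisms on fundamental groups. -/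
lemma fundamentalGroup_of_homotopyEquiv {X Y : Type} [TopologicalSpace X] [TopologicalSpace Y]
    (e : ContinuousMap.HomotopyEquiv X Y) (x : X) :
    Nonempty (FundamentalGroup X x ≃* FundamentalGroup Y (e.toFun x)) :=
  ⟨(FundamentalGroupoidFunctor.equivOfHomotopyEquiv e).fullyFaithfulFunctor.mulEquivEnd
    (FundamentalGroupoid.mk x)⟩

/-- Replace the first coordinate of `x` by `r`. -/
def mv (x : R3) (r : ℝ) : R3 := x + (r - x 0) • EuclideanSpace.single (0 : Fin 3) (1 : ℝ)

lemma mv_zero (x : R3) (r : ℝ) : mv x r 0 = r := by simp [mv]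
lemma mv_one (x : R3) (r : ℝ) : mv x r 1 = x 1 := by simp [mv]
lemma mv_two (x : R3) (r : ℝ) : mv x r 2 = x 2 := by simp [mv]
lemma mv_self (x : R3) : mv x (x 0) = x := by simp [mv]

/-- Pushing the first coordinate to the left gives a homotopy equivalence. -/
lemma pushEquiv (P Q : Set R3) (a : ℝ) (hPQ : P ⊆ Q)
    (hP : ∀ x ∈ P, ∀ r, min (x 0) a ≤ r → r ≤ x 0 → mv x r ∈ P)
    (hQ : ∀ x ∈ Q, ∀ r, min (x 0) a ≤ r → r ≤ x 0 → mv x r ∈ Q)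
    (hQP : ∀ x ∈ Q, mv x (min (x 0) a) ∈ P) :
    Nonempty (ContinuousMap.HomotopyEquiv P Q) := by
  have hmvc : Continuous fun s : R3 × ℝ => mv s.1 s.2 := by
    unfold mv; fun_prop
  let ι : C(P, Q) := ⟨Set.inclusion hPQ, continuous_inclusion hPQ⟩
  let ρ : C(Q, P) := ⟨fun x => ⟨mv x (min ((x : R3) 0) a), hQP x x.2⟩, by
    refine Continuous.subtype_mk ?_ _
    unfold mv; fun_prop⟩
  -- homotopy parameter: `r = (1 - t) * min (x 0) a + t * x 0`
  have hr : ∀ (x : R3) (t : unitInterval),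
      min (x 0) a ≤ (1 - (t : ℝ)) * min (x 0) a + t * x 0 ∧
      (1 - (t : ℝ)) * min (x 0) a + t * x 0 ≤ x 0 := by
    intro x t
    have h0 := t.2.1
    have h1 := t.2.2
    have h2 : min (x 0) a ≤ x 0 := min_le_left _ _
    constructor <;> nlinarith
  have hc : ∀ S : Set R3, Continuous fun s : unitInterval × S =>
      mv s.2 ((1 - (s.1 : ℝ)) * min ((s.2 : R3) 0) a + s.1 * (s.2 : R3) 0) := by
    intro S
    unfold mv; fun_prop
  refine ⟨⟨ι, ρ, ⟨⟨⟨fun s => ⟨_, hP s.2 s.2.2 _ (hr s.2 s.1).1 (hr s.2 s.1).2⟩,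
    (hc P).subtype_mk _⟩, ?_, ?_⟩⟩, ⟨⟨⟨fun s => ⟨_, hQ s.2 s.2.2 _ (hr s.2 s.1).1 (hr s.2 s.1).2⟩,
    (hc Q).subtype_mk _⟩, ?_, ?_⟩⟩⟩⟩
  · intro x
    apply Subtype.ext
    simp [ρ, ι]
  · intro x
    apply Subtype.ext
    simp [mv_self]
  · intro x
    apply Subtype.ext
    simp [ρ, ι]
  · intro x
    apply Subtype.ext
    simp [mv_self]

/-- The center of the inversion. -/
abbrev cc : R3 := pt (-1) 0 0

/-- The inversion in the unit sphere around `cc`. -/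
abbrev J (x : R3) : R3 := EuclideanGeometry.inversion cc 1 x

lemma pt_zero (a b c : ℝ) : pt a b c 0 = a := by simp [pt]
lemma pt_one (a b c : ℝ) : pt a b c 1 = b := by simp [pt]
lemma pt_two (a b c : ℝ) : pt a b c 2 = c := by simp [pt]

lemma J_zero (x : R3) : J x 0 = (1 / dist x cc) ^ 2 * (x 0 + 1) - 1 := by
  simp [J, EuclideanGeometry.inversion, pt_zero]; ring
lemma J_one (x : R3) : J x 1 = (1 / dist x cc) ^ 2 * x 1 := by
  simp [J, EuclideanGeometry.inversion, pt_one]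
lemma J_two (x : R3) : J x 2 = (1 / dist x cc) ^ 2 * x 2 := by
  simp [J, EuclideanGeometry.inversion, pt_two]

lemma dist_cc_sq (x : R3) : dist x cc ^ 2 = (x 0 + 1) ^ 2 + x 1 ^ 2 + x 2 ^ 2 := by
  rw [EuclideanSpace.dist_eq, Real.sq_sqrt (by positivity), Fin.sum_univ_three]
  simp [Real.dist_eq, sq_abs, pt_zero, pt_one, pt_two]

lemma mem_ball_coord {y : R3} (h : y ∈ closedBall (pt (-2) 0 0) 1) :
    (y 0 + 2) ^ 2 + y 1 ^ 2 + y 2 ^ 2 ≤ 1 := by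
  have h2 : dist y (pt (-2) 0 0) ^ 2 = (y 0 + 2) ^ 2 + y 1 ^ 2 + y 2 ^ 2 := by
    rw [EuclideanSpace.dist_eq, Real.sq_sqrt (by positivity), Fin.sum_univ_three]
    simp [Real.dist_eq, sq_abs, pt_zero, pt_one, pt_two]
  rw [← h2]
  have h3 : dist y (pt (-2) 0 0) ≤ 1 := h
  have h4 : 0 ≤ dist y (pt (-2) 0 0) := dist_nonneg
  nlinarith

lemma J_J (x : R3) : J (J x) = x := EuclideanGeometry.inversion_inversion _ one_ne_zero x

lemma J_continuousOn : ContinuousOn J {cc}ᶜ :=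
  continuousOn_const.inversion continuousOn_const continuousOn_id (fun _ hx => hx)

/-- Inversion restricts to homeomorphisms. -/
def JHomeo (P Q : Set R3) (hP : cc ∉ P) (hQ : cc ∉ Q) (hPQ : ∀ x ∈ P, J x ∈ Q)
    (hQP : ∀ x ∈ Q, J x ∈ P) : P ≃ₜ Q where
  toFun x := ⟨J x, hPQ x x.2⟩
  invFun x := ⟨J x, hQP x x.2⟩
  left_inv x := Subtype.ext (J_J x)
  right_inv x := Subtype.ext (J_J x)
  continuous_toFun := Continuous.subtype_mk (J_continuousOn.comp_continuous
    continuous_subtype_val (fun x h => hP (by rw [← mem_singleton_iff.1 h]; exact x.2))) _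
  continuous_invFun := Continuous.subtype_mk (J_continuousOn.comp_continuous
    continuous_subtype_val (fun x h => hQ (by rw [← mem_singleton_iff.1 h]; exact x.2))) _

/-- The closed ray starting at `cc`. -/
def ray : Set R3 := {x | x 1 = 0 ∧ x 2 = 0 ∧ -1 ≤ x 0}

lemma J_ray {x : R3} (hx : x ∈ ray) : J x ∈ ray := by
  obtain ⟨h1, h2, h0⟩ := hx
  refine ⟨by rw [J_one, h1, mul_zero], by rw [J_two, h2, mul_zero], ?_⟩
  rw [J_zero]
  have : 0 ≤ (1 / dist x cc) ^ 2 * (x 0 + 1) := mul_nonneg (by positivity) (by linarith)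
  linarith

lemma mem_segA_iff (x : R3) : x ∈ segA ↔ x ∈ ray ∧ x 0 ≤ 1 := by
  constructor
  · rintro ⟨a, b, ha, hb, hab, rfl⟩
    refine ⟨⟨?_, ?_, ?_⟩, ?_⟩ <;> simp [pt_zero, pt_one, pt_two] <;> linarith
  · rintro ⟨⟨h1, h2, h0⟩, h3⟩
    refine ⟨(1 - x 0) / 2, (1 + x 0) / 2, by linarith, by linarith, by ring, ?_⟩
    ext i
    fin_cases i
    · simp [pt_zero]; ring
    · simp [pt_one, h1]
    · simp [pt_two, h2]

theorem stmt_13 (C₁ : Set R3) (h₁ : IsCantorSubset C₁)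
    (hB : C₁ ⊆ closedBall (pt (-2) 0 0) 1) (hx : pt (-1) 0 0 ∈ C₁) :
    ∀ (u : R3) (hu : u ∈ {p : R3 | p 0 < 1} \ (C₁ ∪ segA))
      (w : R3) (hw : w ∈ C₁ᶜ),
      Nonempty (FundamentalGroup ↥({p : R3 | p 0 < 1} \ (C₁ ∪ segA)) ⟨u, hu⟩ ≃*
        FundamentalGroup ↥(C₁ᶜ) ⟨w, hw⟩) := by
  intro u hu w hw
  obtain ⟨-, hcomp, -, htd⟩ := h₁
  have hC0 : ∀ y ∈ C₁, y 0 ≤ -1 := by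
    intro y hy
    have := mem_ball_coord (hB hy)
    nlinarith [sq_nonneg (y 1), sq_nonneg (y 2)]
  have hJc : J cc = cc := EuclideanGeometry.inversion_self _ _
  have hccray : cc ∈ ray := ⟨pt_one _ _ _, pt_two _ _ _, (pt_zero _ _ _).ge⟩
  have hJC : ∀ x : R3, -3 / 2 < x 0 → x ≠ cc → J x ∉ C₁ := by
    intro x hx0 hne hJ
    have h := mem_ball_coord (hB hJ)
    have hd : 0 < dist x cc := dist_pos.2 hne
    have hk : (1 / dist x cc) ^ 2 * ((x 0 + 1) ^ 2 + x 1 ^ 2 + x 2 ^ 2) = 1 := by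
      rw [← dist_cc_sq]; field_simp
    rw [J_zero, J_one, J_two] at h
    have hkp : 0 < (1 / dist x cc) ^ 2 := by positivity
    generalize (1 / dist x cc) ^ 2 = k at *
    have : k * (k * ((x 0 + 1) ^ 2 + x 1 ^ 2 + x 2 ^ 2)) + 2 * k * (x 0 + 1) ≤ 0 := by
      nlinarith
    rw [hk] at this
    nlinarith
  let Y : Set R3 := {x | x ∉ ray ∧ x ∉ C₁}
  let N : Set R3 := {x | x ∉ ray ∧ J x ∉ C₁}
  let M : Set R3 := {x | x = cc ∨ J x ∉ C₁}
  let X' : Set R3 := {x | J x ∉ C₁}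
  have hX'cc : cc ∉ X' := fun h => h (by rw [hJc]; exact hx)
  let U : Set R3 := {p : R3 | p 0 < 1} \ (C₁ ∪ segA)
  have hU : ∀ x, x ∈ U ↔ x 0 < 1 ∧ x ∈ Y := by
    intro x
    simp only [U, Y, Set.mem_sdiff, Set.mem_ofPred_eq, mem_union, mem_segA_iff]
    constructor
    · rintro ⟨h1, h2⟩
      push Not at h2
      exact ⟨h1, fun h => absurd (h2.2 h) (by linarith), h2.1⟩
    · rintro ⟨h1, h2, h3⟩
      exact ⟨h1, by rintro (h | h); exacts [h3 h, h2 h.1]⟩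
  have mvray : ∀ x ∉ ray, ∀ r, r ≤ x 0 → mv x r ∉ ray := by
    rintro x hxr r hr ⟨h1, h2, h0⟩
    rw [mv_one] at h1
    rw [mv_two] at h2
    rw [mv_zero] at h0
    exact hxr ⟨h1, h2, h0.trans hr⟩
  have hYmv : ∀ x ∈ Y, ∀ r, min (x 0) 0 ≤ r → r ≤ x 0 → mv x r ∈ Y := by
    intro x hxY r hr1 hr2
    refine ⟨mvray x hxY.1 r hr2, ?_⟩
    rcases le_total (x 0) 0 with h | h
    · rw [min_eq_left h] at hr1
      rw [le_antisymm hr2 hr1, mv_self]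
      exact hxY.2
    · rw [min_eq_right h] at hr1
      intro hC
      have := hC0 _ hC
      rw [mv_zero] at this
      linarith
  obtain ⟨e1⟩ := pushEquiv U Y 0 (fun x hxU => ((hU x).1 hxU).2)
    (by
      intro x hxU r hr1 hr2
      rw [hU] at hxU ⊢
      exact ⟨by rw [mv_zero]; linarith [hxU.1], hYmv x hxU.2 r hr1 hr2⟩)
    hYmv
    (by
      intro x hxY
      rw [hU]
      refine ⟨?_, hYmv x hxY _ le_rfl (min_le_left _ _)⟩
      rw [mv_zero]
      exact (min_le_right _ _).trans_lt one_pos)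
  let e2 : Y ≃ₜ N := JHomeo Y N (fun h => h.1 hccray) (fun h => h.1 hccray)
    (fun x hxY => ⟨fun h => hxY.1 (by rw [← J_J x]; exact J_ray h), by rw [J_J]; exact hxY.2⟩)
    (fun x hxN => ⟨fun h => hxN.1 (by rw [← J_J x]; exact J_ray h), hxN.2⟩)
  have hMmv : ∀ x ∈ M, ∀ r, min (x 0) (-5 / 4) ≤ r → r ≤ x 0 → mv x r ∈ M := by
    intro x hxM r hr1 hr2
    rcases le_total (x 0) (-5 / 4) with h | h
    · rw [min_eq_left h] at hr1
      rw [le_antisymm hr2 hr1, mv_self]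
      exact hxM
    · rw [min_eq_right h] at hr1
      by_cases hc : mv x r = cc
      · exact Or.inl hc
      · exact Or.inr (hJC _ (by rw [mv_zero]; linarith) hc)
  have hNM : ∀ x, x ∈ N ↔ x ∉ ray ∧ x ∈ M := by
    intro x
    constructor
    · exact fun h => ⟨h.1, Or.inr h.2⟩
    · rintro ⟨h, h' | h'⟩
      · exact absurd (h' ▸ hccray) h
      · exact ⟨h, h'⟩
  obtain ⟨e3⟩ := pushEquiv N M (-5 / 4) (fun x hxN => ((hNM x).1 hxN).2)
    (by
      intro x hxN r hr1 hr2
      rw [hNM] at hxN ⊢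
      exact ⟨mvray x hxN.1 r hr2, hMmv x hxN.2 r hr1 hr2⟩)
    hMmv
    (by
      intro x hxM
      rw [hNM]
      refine ⟨?_, hMmv x hxM _ le_rfl (min_le_left _ _)⟩
      rintro ⟨-, -, h⟩
      rw [mv_zero] at h
      have := min_le_right (x 0) (-5 / 4)
      linarith)
  let e4 : (C₁ᶜ : Set R3) ≃ₜ X' := JHomeo C₁ᶜ X' (fun h => h hx) hX'cc
    (fun x hxX => by change J (J x) ∉ C₁; rw [J_J]; exact hxX) (fun x hxX => hxX)
  have hH : {x : R3 | -3 / 2 < x 0} ⊆ M := by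
    intro x hx0
    by_cases hc : x = cc
    · exact Or.inl hc
    · exact Or.inr (hJC x hx0 hc)
  have hMU : M = X' ∪ {x : R3 | -3 / 2 < x 0} := by
    apply Subset.antisymm
    · rintro x (rfl | h)
      · right
        change -3 / 2 < cc 0
        rw [pt_zero]; norm_num
      · exact Or.inl h
    · rintro x (h | h)
      · exact Or.inr h
      · exact hH h
  have hHo : IsOpen {x : R3 | -3 / 2 < x 0} := isOpen_lt continuous_const (by fun_prop)
  have hX'o : IsOpen X' := by
    have := J_continuousOn.isOpen_inter_preimage isOpen_compl_singleton
      hcomp.isClosed.isOpen_compl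
    convert! this using 1
    ext x
    constructor
    · exact fun h => ⟨fun h' => hX'cc (by rw [← mem_singleton_iff.1 h']; exact h), h⟩
    · exact fun h => h.2
  have hMo : IsOpen M := by rw [hMU]; exact hX'o.union hHo
  have hXpc : IsPathConnected (C₁ᶜ : Set R3) :=
    ⟨w, hw, fun {y} hy => joinedIn_compl_of_totallyDisconnected hcomp htd hw hy⟩
  have hX'pc : IsPathConnected X' := by
    have := isPathConnected_iff_pathConnectedSpace.1 hXpc
    rw [isPathConnected_iff_pathConnectedSpace]
    exact e4.surjective.pathConnectedSpace e4.continuous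
  have hHpc : IsPathConnected {x : R3 | -3 / 2 < x 0} := by
    refine Convex.isPathConnected ?_ ⟨cc, ?_⟩
    · have := convex_halfSpace_gt (𝕜 := ℝ) (f := fun x : R3 => x 0)
        ⟨fun _ _ => by simp, fun _ _ => by simp⟩ (-3 / 2)
      exact this
    · change -3 / 2 < cc 0
      rw [pt_zero]; norm_num
  have hMpc : IsPathConnected M := by
    rw [hMU]
    refine hX'pc.union hHpc ⟨pt (-5 / 4) 0 0, hJC _ ?_ ?_, ?_⟩
    · rw [pt_zero]; norm_num
    · intro h
      have := congrArg (fun x : R3 => x 0) h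
      simp only [pt_zero] at this
      norm_num at this
    · change -3 / 2 < pt (-5 / 4) 0 0 0
      rw [pt_zero]; norm_num
  have : PathConnectedSpace M := isPathConnected_iff_pathConnectedSpace.1 hMpc
  have hJw : J w ∈ X' := by change J (J w) ∉ C₁; rw [J_J]; exact hw
  have hJwM : J w ∈ M := Or.inr hJw
  obtain ⟨i1⟩ := fundamentalGroup_of_homotopyEquiv ((e1.trans e2.toHomotopyEquiv).trans e3) ⟨u, hu⟩
  obtain ⟨i2⟩ := fundamentalGroup_remove_point M X' hMo cc (Or.inl rfl) (by
    ext x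
    constructor
    · exact fun h => ⟨Or.inr h, fun h' => hX'cc (by rw [← mem_singleton_iff.1 h']; exact h)⟩
    · rintro ⟨h | h, h'⟩
      · exact absurd h h'
      · exact h) (J w) hJw hJwM
  obtain ⟨i3⟩ := fundamentalGroup_of_homotopyEquiv e4.toHomotopyEquiv ⟨w, hw⟩
  let i4 := FundamentalGroup.fundamentalGroupMulEquivOfPathConnected (X := M)
    (((e1.trans e2.toHomotopyEquiv).trans e3).toFun ⟨u, hu⟩) ⟨J w, hJwM⟩
  exact ⟨i1.trans (i4.trans (i2.symm.trans i3.symm))⟩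
end
end
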